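/- arXiv:1209.3981 — 6 statements merged into one kernel-verified Lean document; each statement's English description precedes it below -/
import Mathlib

section
/- Let n ≥ 1, p ≥ 1, and let Ω̃ ⊆ ℂⁿ be an open set. Define W̃ := {(z, v) ∈ Ω̃ × ℂᵖ : for every root ξ ∈ ℂ of the polynomial z_n^p + Σ_{j=1}^p v_j z_n^{p-j}, the point (z₁, …, z_{n-1}, ξ) belongs to Ω̃}. Then W̃ is an open subset of ℂⁿ × ℂᵖ, and the image of W̃ under the projection (z, v) ↦ z equals Ω̃. -/
/-- The set `W̃` of Lemma 3.2: pairs `(z, v) ∈ Ω̃ × ℂᵖ` such that for every root `ξ` of the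
generic polynomial `z_n^p + ∑_{j=1}^p v_j z_n^{p-j}`, the point `(z₁, …, z_{n-1}, ξ)`
(i.e. `z` with its last coordinate replaced by `ξ`) belongs to `Ω̃`.  Here `n = m + 1`. -/
def genericRootSet (m p : ℕ) (Ω : Set (Fin (m + 1) → ℂ)) :
    Set ((Fin (m + 1) → ℂ) × (Fin p → ℂ)) :=
  {zv | zv.1 ∈ Ω ∧ ∀ ξ : ℂ, ξ ^ p + ∑ j : Fin p, zv.2 j * ξ ^ (p - (j.1 + 1)) = 0 →
    Function.update zv.1 (Fin.last m) ξ ∈ Ω}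

/-
The roots of a monic polynomial stay in a ball whose radius depends only on a bound for its
coefficients, so near a given `v` the quantifier over the roots ranges over a fixed compact ball;
a condition that is open in `(x, ξ)` and quantified over `ξ` in a compact set is open in `x`.
For the projection, `(X - z_n) ^ p` has no root other than `z_n`.
-/

open Polynomial Topology

section GenericMonic

variable {R : Type*} [Semiring R] {p : ℕ}

/-- The generic monic polynomial `X ^ p + v₁ X ^ (p - 1) + ⋯ + v_p` of degree `p`, as a function of
its coefficient vector; the `v_j` of the paper is `v (j - 1)`. -/
noncomputable def genericMonic (v : Fin p → R) : R[X] :=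
  X ^ p + ∑ j : Fin p, C (v j) * X ^ (p - (j.1 + 1))

theorem eval_genericMonic (v : Fin p → R) (ξ : R) :
    (genericMonic v).eval ξ = ξ ^ p + ∑ j : Fin p, v j * ξ ^ (p - (j.1 + 1)) := by
  simp only [genericMonic, eval_add, eval_X_pow, eval_finsetSum, eval_C_mul]

theorem genericMonic_eq_X_pow_add_sum_rev (v : Fin p → R) :
    genericMonic v = X ^ p + ∑ i : Fin p, C (v i.rev) * X ^ i.1 := by
  rw [genericMonic, ← Equiv.sum_comp Fin.revPerm]
  simp only [Fin.revPerm_apply, ← Fin.val_rev, Fin.rev_rev]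

theorem coeff_genericMonic (v : Fin p → R) (i : Fin p) :
    (genericMonic v).coeff i = v i.rev := by
  simp [genericMonic_eq_X_pow_add_sum_rev, coeff_X_pow, coeff_C_mul, i.2.ne, Fin.val_inj]

variable [Nontrivial R]

theorem isMonicOfDegree_genericMonic (v : Fin p → R) : IsMonicOfDegree (genericMonic v) p := by
  have hlow : degree (∑ i : Fin p, C (v i.rev) * X ^ i.1) < (p : WithBot ℕ) :=
    degree_sum_fin_lt fun i => v i.rev
  rw [genericMonic_eq_X_pow_add_sum_rev]
  refine ⟨?_, monic_X_pow_add hlow⟩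
  rw [natDegree_add_eq_left_of_degree_lt (by rwa [degree_X_pow]), natDegree_X_pow]

theorem exists_genericMonic_eq {q : R[X]} (hq : IsMonicOfDegree q p) :
    ∃ v : Fin p → R, genericMonic v = q := by
  refine ⟨fun j => q.coeff j.rev, Polynomial.ext fun n => ?_⟩
  rcases lt_or_ge n p with hn | hn
  · simpa only [Fin.rev_rev] using coeff_genericMonic (fun j => q.coeff j.rev) ⟨n, hn⟩
  · exact (isMonicOfDegree_genericMonic _).coeff_eq hq hn

end GenericMonic

theorem norm_lt_of_isRoot_genericMonic {K : Type*} [NormedDivisionRing K] {p : ℕ}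
    {v : Fin p → K} {ξ : K} (hξ : (genericMonic v).IsRoot ξ) : ‖ξ‖ < ‖v‖ + 1 := by
  have hmonic := isMonicOfDegree_genericMonic v
  have hcoeff : (Finset.range p).sup (‖(genericMonic v).coeff ·‖₊) ≤ ‖v‖₊ :=
    Finset.sup_le fun i hi => by
      rw [coeff_genericMonic v ⟨i, Finset.mem_range.mp hi⟩]
      exact nnnorm_le_pi_nnnorm v _
  have hbound : cauchyBound (genericMonic v) ≤ ‖v‖₊ + 1 := by
    simpa only [cauchyBound, hmonic.natDegree_eq, hmonic.leadingCoeff_eq, nnnorm_one, div_one,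
      add_le_add_iff_right] using hcoeff
  exact_mod_cast (hξ.norm_lt_cauchyBound hmonic.ne_zero).trans_le hbound

theorem isClosed_setOf_isRoot_genericMonic {R : Type*} [Semiring R] [TopologicalSpace R]
    [IsTopologicalSemiring R] [T1Space R] (p : ℕ) :
    IsClosed {w : (Fin p → R) × R | (genericMonic w.1).IsRoot w.2} := by
  simp only [IsRoot.def, eval_genericMonic]
  exact isClosed_singleton.preimage (by fun_prop)

theorem isOpen_setOf_forall_isRoot_genericMonic {X K : Type*} [TopologicalSpace X]
    [NormedDivisionRing K] [ProperSpace K] (p : ℕ) {U : Set (X × K)} (hU : IsOpen U) :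
    IsOpen {x : X × (Fin p → K) | ∀ ξ, (genericMonic x.2).IsRoot ξ → (x.1, ξ) ∈ U} := by
  rw [isOpen_iff_eventually]
  rintro ⟨x₀, v₀⟩ h₀
  have hnorm : ∀ᶠ x : X × (Fin p → K) in 𝓝 (x₀, v₀), ‖x.2‖ < ‖v₀‖ + 1 :=
    (continuous_snd.norm.tendsto _).eventually_lt_const (lt_add_one _)
  have hroot : IsClosed {y : (X × (Fin p → K)) × K | (genericMonic y.1.2).IsRoot y.2} :=
    (isClosed_setOf_isRoot_genericMonic p).preimage
      (continuous_snd.comp continuous_fst |>.prodMk continuous_snd)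
  have hfiber : IsOpen {y : (X × (Fin p → K)) × K | (y.1.1, y.2) ∈ U} :=
    hU.preimage (continuous_fst.comp continuous_fst |>.prodMk continuous_snd)
  have hopen : IsOpen {y : (X × (Fin p → K)) × K |
      (genericMonic y.1.2).IsRoot y.2 → (y.1.1, y.2) ∈ U} := by
    simp only [imp_iff_not_or]
    exact hroot.not.union hfiber
  have hball : ∀ᶠ x : X × (Fin p → K) in 𝓝 (x₀, v₀), ∀ ξ ∈ Metric.closedBall 0 (‖v₀‖ + 2),
      (genericMonic x.2).IsRoot ξ → (x.1, ξ) ∈ U :=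
    (isCompact_closedBall _ _).eventually_forall_of_forall_eventually
      fun ξ _ => hopen.mem_nhds (h₀ ξ)
  filter_upwards [hnorm, hball] with x hx hxU ξ hξ
  refine hxU ξ (mem_closedBall_zero_iff.mpr ?_) hξ
  linarith [norm_lt_of_isRoot_genericMonic hξ]

section CoordRootSet

variable {ι K : Type*} [DecidableEq ι] {Ω : Set (ι → K)}

/-- The set `W̃` over an arbitrary semiring `K` and for an arbitrary index type `ι`: it is
the `i`-th coordinate, rather than the last one, that the roots replace. -/
def coordRootSet [Semiring K] (i : ι) (p : ℕ) (Ω : Set (ι → K)) :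
    Set ((ι → K) × (Fin p → K)) :=
  {x | x.1 ∈ Ω ∧ ∀ ξ, (genericMonic x.2).IsRoot ξ → Function.update x.1 i ξ ∈ Ω}

theorem isOpen_coordRootSet [NormedDivisionRing K] [ProperSpace K] (i : ι) (p : ℕ)
    (hΩ : IsOpen Ω) : IsOpen (coordRootSet i p Ω) :=
  have hU : IsOpen {y : (ι → K) × K | Function.update y.1 i y.2 ∈ Ω} :=
    hΩ.preimage (continuous_fst.update i continuous_snd)
  (hΩ.preimage continuous_fst).inter (isOpen_setOf_forall_isRoot_genericMonic p hU)

theorem image_fst_coordRootSet [CommRing K] [IsDomain K] (i : ι) (p : ℕ) (Ω : Set (ι → K)) :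
    Prod.fst '' coordRootSet i p Ω = Ω := by
  refine Set.Subset.antisymm (Set.image_subset_iff.mpr fun _ hx => hx.1) fun z hz => ?_
  obtain ⟨v, hv⟩ : ∃ v : Fin p → K, genericMonic v = (X - C (z i)) ^ p :=
    exists_genericMonic_eq (by simpa only [one_mul] using (isMonicOfDegree_X_sub_one (z i)).pow p)
  refine ⟨(z, v), ⟨hz, fun ξ hξ => ?_⟩, rfl⟩
  have hξz : ξ = z i := by
    rw [hv, IsRoot.def, eval_pow, eval_sub, eval_X, eval_C] at hξ
    exact sub_eq_zero.mp (eq_zero_of_pow_eq_zero hξ)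
  rwa [hξz, Function.update_eq_self]

theorem genericRootSet_isOpen_and_proj_general [NormedField K] [ProperSpace K] (i : ι) (p : ℕ)
    (hΩ : IsOpen Ω) :
    IsOpen (coordRootSet i p Ω) ∧ Prod.fst '' coordRootSet i p Ω = Ω :=
  ⟨isOpen_coordRootSet i p hΩ, image_fst_coordRootSet i p Ω⟩

end CoordRootSet

theorem genericRootSet_eq_coordRootSet (m p : ℕ) (Ω : Set (Fin (m + 1) → ℂ)) :
    genericRootSet m p Ω = coordRootSet (Fin.last m) p Ω := by
  simp only [genericRootSet, coordRootSet, IsRoot.def, eval_genericMonic]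

/-- Lemma 3.2 of the paper, non-definability part.
For `n = m + 1 ≥ 1`, `p ≥ 1` and an open `Ω̃ ⊆ ℂⁿ`, the set `W̃` is open in `ℂⁿ × ℂᵖ`
and its image under the projection `(z, v) ↦ z` is exactly `Ω̃`. -/
theorem genericRootSet_isOpen_and_proj (m p : ℕ) (hp : 1 ≤ p)
    (Ω : Set (Fin (m + 1) → ℂ)) (hΩ : IsOpen Ω) :
    IsOpen (genericRootSet m p Ω) ∧ Prod.fst '' genericRootSet m p Ω = Ω := by
  rw [genericRootSet_eq_coordRootSet]
  exact genericRootSet_isOpen_and_proj_general (Fin.last m) p hΩ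
end

section
/- Let Ω be a nonempty set and let A be an ℝ-subalgebra of the ring of all functions Ω → ℝ (with pointwise operations) satisfying: (i) every f ∈ A with f(x) ≠ 0 for all x ∈ Ω is invertible in A; (ii) there is no infinite strictly decreasing sequence Z(f₁) ⊋ Z(f₂) ⊋ ⋯ of zero sets of elements of A, where Z(f) := {x ∈ Ω : f(x) = 0}. Then for every maximal ideal m of A there exists a point x ∈ Ω such that m = {f ∈ A : f(x) = 0}. -/
/-!
Among the zero sets of the elements of a proper ideal `I`, pick a minimal one, say that of `f`.
For every `g ∈ I` the zero set of `f * f + g * g ∈ I` is the intersection of those of `f` and `g`,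
so by minimality `g` vanishes wherever `f` does. As `f` is not a unit it has a zero, which is
therefore a common zero of `I`.
-/

section ZeroSet

variable {Ω A : Type*} {K : Ω → Type*} [Semiring A] [∀ x, Ring (K x)]

/-- The zero set of `f : A`, where `A` is regarded as a ring of functions on `Ω` through a family
of evaluation homomorphisms `φ x`. -/
def zeroSet (φ : ∀ x, A →+* K x) (f : A) : Set Ω :=
  {x | φ x f = 0}

variable {φ : ∀ x, A →+* K x}

theorem zeroSet_nonempty_of_mem (h_inv : ∀ f, zeroSet φ f = ∅ → IsUnit f) {I : Ideal A}
    (hI : I ≠ ⊤) {f : A} (hf : f ∈ I) : (zeroSet φ f).Nonempty := by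
  rw [Set.nonempty_iff_ne_empty]
  exact fun h_empty ↦ hI (I.eq_top_of_isUnit_mem hf (h_inv f h_empty))

variable [∀ x, LinearOrder (K x)] [∀ x, IsStrictOrderedRing (K x)]

theorem zeroSet_mul_self_add_mul_self (f g : A) :
    zeroSet φ (f * f + g * g) = zeroSet φ f ∩ zeroSet φ g := by
  ext x
  simp [zeroSet, mul_self_add_mul_self_eq_zero]

theorem exists_mem_forall_zeroSet_subset
    (h_wf : WellFounded fun f g : A ↦ zeroSet φ f ⊂ zeroSet φ g) (I : Ideal A) :
    ∃ f ∈ I, ∀ g ∈ I, zeroSet φ f ⊆ zeroSet φ g := by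
  obtain ⟨f, hf, h_min⟩ := h_wf.has_min (I : Set A) ⟨0, I.zero_mem⟩
  refine ⟨f, hf, fun g hg ↦ ?_⟩
  have h_mem : f * f + g * g ∈ I := I.add_mem (I.mul_mem_left f hf) (I.mul_mem_left g hg)
  have h_inter : ¬ zeroSet φ f ∩ zeroSet φ g ⊂ zeroSet φ f := by
    simpa only [zeroSet_mul_self_add_mul_self] using h_min _ h_mem
  rw [← Set.inter_eq_left]
  exact Set.inter_subset_left.eq_of_not_ssubset h_inter

theorem exists_ideal_le_ker_of_ne_top (h_inv : ∀ f, zeroSet φ f = ∅ → IsUnit f)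
    (h_wf : WellFounded fun f g : A ↦ zeroSet φ f ⊂ zeroSet φ g) {I : Ideal A}
    (hI : I ≠ ⊤) : ∃ x, I ≤ RingHom.ker (φ x) := by
  obtain ⟨f, hf, h_sub⟩ := exists_mem_forall_zeroSet_subset h_wf I
  obtain ⟨x, hx⟩ := zeroSet_nonempty_of_mem h_inv hI hf
  exact ⟨x, fun g hg ↦ h_sub g hg hx⟩

theorem maximal_ideal_is_point_ideal_general (h_inv : ∀ f, zeroSet φ f = ∅ → IsUnit f)
    (h_wf : WellFounded fun f g : A ↦ zeroSet φ f ⊂ zeroSet φ g) (m : Ideal A)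
    (hm : m.IsMaximal) : ∃ x, m = RingHom.ker (φ x) := by
  obtain ⟨x, hx⟩ := exists_ideal_le_ker_of_ne_top h_inv h_wf hm.ne_top
  exact ⟨x, hm.eq_of_le (RingHom.ker_ne_top (φ x)) hx⟩

end ZeroSet

/-- abstraction of Proposition 2.6 of the paper.
Let `Ω` be a nonempty set and `A` an `ℝ`-subalgebra of the functions `Ω → ℝ` such that:
(i) every nowhere vanishing element of `A` is invertible in `A`; (ii) there is no infinite
strictly decreasing sequence of zero sets of elements of `A`.  Then every maximal ideal of
`A` is the ideal of functions vanishing at some point `x ∈ Ω`. -/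
theorem maximal_ideal_is_point_ideal (Ω : Type*) [Nonempty Ω]
    (A : Subalgebra ℝ (Ω → ℝ))
    (h_inv : ∀ (f : Ω → ℝ) (hf : f ∈ A), (∀ x : Ω, f x ≠ 0) → IsUnit (⟨f, hf⟩ : A))
    (h_dcc : ¬ ∃ f : ℕ → (Ω → ℝ), (∀ n, f n ∈ A) ∧
      ∀ n, {x : Ω | f (n + 1) x = 0} ⊂ {x : Ω | f n x = 0})
    (m : Ideal A) (hm : m.IsMaximal) :
    ∃ x : Ω, ∀ f : A, f ∈ m ↔ (f : Ω → ℝ) x = 0 := by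
  let φ (x : Ω) : A →+* ℝ := (Pi.evalRingHom (fun _ ↦ ℝ) x).comp A.toSubring.subtype
  have h_unit (f : A) (hf : zeroSet φ f = ∅) : IsUnit f :=
    h_inv f f.2 (Set.eq_empty_iff_forall_notMem.mp hf)
  have h_wf : WellFounded fun f g : A ↦ zeroSet φ f ⊂ zeroSet φ g :=
    wellFounded_iff_isEmpty_descending_chain.mpr
      ⟨fun ⟨f, hf⟩ ↦ h_dcc ⟨fun n ↦ f n, fun n ↦ (f n).2, hf⟩⟩
  obtain ⟨x, rfl⟩ := maximal_ideal_is_point_ideal_general h_unit h_wf m hm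
  exact ⟨x, fun _ ↦ Iff.rfl⟩
end

section
/- Let n, p ≥ 1, let S ⊆ ℝⁿ, let U ⊆ ℝⁿ × ℝᵖ, and let f : ℝⁿ × ℝᵖ → ℝⁿ × ℝᵖ be a map such that the first component of f(x, y) equals x for every (x, y) ∈ U. Suppose that for every a ∈ S there is a radius r_a > 0 such that the open ball B((a, 0), r_a) (for the sup metric on the product ℝⁿ × ℝᵖ) is contained in U and the restriction of f to B((a, 0), r_a) is injective. Then the restriction of f to the union ⋃_{a ∈ S} B((a, 0), r_a) is injective. -/
/-!
Two points with the same image under `f` lie in a common vertical slice. The balls are centred at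
the same height `y`, so their nonempty traces on that slice are all balls around `y`, hence nested
by radius: the larger of the two balls contains both points.
-/

section PseudoMetricSpace

variable {X Y Z : Type*} [PseudoMetricSpace X] [PseudoMetricSpace Y]

theorem mem_ball_prodMk_of_fst_eq {a b : X} {y : Y} {r s : ℝ} {z w : X × Y}
    (hz : z ∈ Metric.ball (a, y) r) (hw : w ∈ Metric.ball (b, y) s) (hzw : z.1 = w.1)
    (hrs : r ≤ s) : z ∈ Metric.ball (b, y) s := by
  rw [← ball_prod_same, Set.mem_prod] at hz hw ⊢
  exact ⟨hzw ▸ hw.1, Metric.ball_subset_ball hrs hz.2⟩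

theorem injOn_union_of_injOn_balls_general {S : Set X} {U : Set (X × Y)} {f : X × Y → Z}
    {y : Y} {r : X → ℝ} (hf_fst : ∀ z ∈ U, ∀ w ∈ U, f z = f w → z.1 = w.1)
    (hr_sub : ∀ a ∈ S, Metric.ball (a, y) (r a) ⊆ U)
    (hr_inj : ∀ a ∈ S, Set.InjOn f (Metric.ball (a, y) (r a))) :
    Set.InjOn f (⋃ a ∈ S, Metric.ball (a, y) (r a)) := by
  intro z hz w hw hfzw
  obtain ⟨a, ha, hza⟩ := Set.mem_iUnion₂.mp hz
  obtain ⟨b, hb, hwb⟩ := Set.mem_iUnion₂.mp hw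
  have hfst : z.1 = w.1 := hf_fst z (hr_sub a ha hza) w (hr_sub b hb hwb) hfzw
  rcases le_total (r a) (r b) with hab | hba
  · exact hr_inj b hb (mem_ball_prodMk_of_fst_eq hza hwb hfst hab) hwb hfzw
  · exact hr_inj a ha hza (mem_ball_prodMk_of_fst_eq hwb hza hfst.symm hba) hfzw

end PseudoMetricSpace

/-- injectivity gluing, second assertion of Lemma 5.3 of the paper.
Let `S ⊆ ℝⁿ`, `U ⊆ ℝⁿ × ℝᵖ`, and let `f : ℝⁿ × ℝᵖ → ℝⁿ × ℝᵖ` fix the first component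
on `U`.  If for every `a ∈ S` there is `r a > 0` such that the ball `B((a,0), r a)` (sup
metric) is contained in `U` and `f` is injective on it, then `f` is injective on
`⋃_{a ∈ S} B((a,0), r a)`. -/
theorem injOn_union_of_injOn_balls (n p : ℕ) (hn : 1 ≤ n) (hp : 1 ≤ p)
    (S : Set (Fin n → ℝ)) (U : Set ((Fin n → ℝ) × (Fin p → ℝ)))
    (f : (Fin n → ℝ) × (Fin p → ℝ) → (Fin n → ℝ) × (Fin p → ℝ))
    (hf_fst : ∀ z ∈ U, (f z).1 = z.1)
    (r : (Fin n → ℝ) → ℝ)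
    (hr_pos : ∀ a ∈ S, 0 < r a)
    (hr_sub : ∀ a ∈ S, Metric.ball ((a, 0) : (Fin n → ℝ) × (Fin p → ℝ)) (r a) ⊆ U)
    (hr_inj : ∀ a ∈ S, Set.InjOn f (Metric.ball ((a, 0) : (Fin n → ℝ) × (Fin p → ℝ)) (r a))) :
    Set.InjOn f (⋃ a ∈ S, Metric.ball ((a, 0) : (Fin n → ℝ) × (Fin p → ℝ)) (r a)) := by
  refine injOn_union_of_injOn_balls_general (fun z hz w hw hfzw ↦ ?_) hr_sub hr_inj
  rw [← hf_fst z hz, ← hf_fst w hw, hfzw]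
end

section
/- Let n ≥ 0 and p ≥ 1. Let σ : ℂᵖ → ℂᵖ be the map σ(v) = (−σ₁(v), σ₂(v), …, (−1)^p σ_p(v)), where σ_l is the l-th elementary symmetric polynomial in v₁, …, v_p, and let ψ : ℂⁿ × ℂᵖ → ℂⁿ × ℂᵖ be defined by ψ(z, v) = (z, σ(v)). Let V ⊆ ℂⁿ × ℂᵖ be open and set U := ψ⁻¹(V). If F : U → ℂ is analytic on U and symmetric, i.e. F(z, v_{α(1)}, …, v_{α(p)}) = F(z, v₁, …, v_p) for every permutation α of {1, …, p} and every (z, v) ∈ U, then there exists a function G : ℂⁿ × ℂᵖ → ℂ, analytic on V, such that F = G ∘ ψ on U. -/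
/-- The `l`-th elementary symmetric function `σ_l(v₁, …, v_p)`. -/
noncomputable def elemSymm (p l : ℕ) (v : Fin p → ℂ) : ℂ :=
  ∑ s ∈ Finset.univ.powersetCard l, ∏ i ∈ s, v i

/-- The map `ψ : ℂⁿ × ℂᵖ → ℂⁿ × ℂᵖ`, `ψ(z, v) = (z, σ(v))` where
`σ(v) = (−σ₁(v), σ₂(v), …, (−1)^p σ_p(v))`; `σ(v)` is the tuple of coefficients of the
monic polynomial `∏_{j=1}^p (X − v_j)`.  Here the `j`-th coordinate (`j : Fin p`)
is `(−1)^{j+1} σ_{j+1}(v)`. -/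
noncomputable def newtonMap (n p : ℕ) :
    ((Fin n → ℂ) × (Fin p → ℂ)) → ((Fin n → ℂ) × (Fin p → ℂ)) :=
  fun zv => (zv.1, fun j => (-1 : ℂ) ^ (j.1 + 1) * elemSymm p (j.1 + 1) zv.2)

/-!
Cauchy's formula on the distinguished boundary of a small polydisc around `(z₀, v₀)`, summed over
the permutations of `v`, has as its kernel a Cauchy kernel in `z` times the permanent of the Cauchy
matrix `(1 / (wᵢ - vⱼ))`. Put over the common denominator `∏ (wᵢ - vⱼ)`, this permanent is a
quotient of two symmetric polynomials in `v`, hence a rational function of `σ(v)`; reading it in the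
Banach algebra of continuous functions of `w` makes the integral an analytic function of
`(z, σ(v))`. If the closed discs around distinct coordinates of `v₀` are disjoint, then for `v`
close to `v₀` the permuted point `v ∘ β` stays in the polydisc exactly when `β` fixes `v₀`, and in
the other cases the integral vanishes; so for symmetric `F` the sum equals `F(z, v)` times the order
of the stabiliser of `v₀`. Since `ψ` is open and its fibres are orbits of permutations, these local
factorisations agree with the unique set-theoretic one.
-/

open Filter Metric Set Topology
open scoped Ring

section CauchyFormula

lemma ringInverse_continuousMap_apply {X 𝕜 : Type*} [TopologicalSpace X] [NormedField 𝕜]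
    {h : C(X, 𝕜)} (hh : IsUnit h) (x : X) : h⁻¹ʳ x = (h x)⁻¹ := by
  refine eq_inv_of_mul_eq_one_left ?_
  rw [← ContinuousMap.mul_apply, Ring.inverse_mul_cancel h hh, ContinuousMap.one_apply]

/-- The distinguished boundary of the polydisc with centre `c` and polyradius `R`: the product of
the circles bounding its factors. -/
def polytorus {d : ℕ} (c : Fin d → ℂ) (R : Fin d → ℝ) : Set (Fin d → ℂ) :=
  univ.pi fun i => sphere (c i) (R i)

namespace polytorus

variable {d : ℕ} {c : Fin d → ℂ} {R : Fin d → ℝ}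

lemma isCompact : IsCompact (polytorus c R) :=
  isCompact_univ_pi fun i => isCompact_sphere (c i) (R i)

instance : CompactSpace (polytorus c R) := isCompact_iff_compactSpace.mp isCompact

lemma torusMap_mem (hR : ∀ i, 0 ≤ R i) (θ : Fin d → ℝ) : torusMap c R θ ∈ polytorus c R :=
  fun i _ => circleMap_mem_sphere (c i) (hR i) (θ i)

/-- The `i`-th coordinate, as an element of the Banach algebra of continuous functions on the
polytorus. -/
def coord (i : Fin d) : C(polytorus c R, ℂ) where
  toFun x := x.1 i
  continuous_toFun := (continuous_apply i).comp continuous_subtype_val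

lemma isUnit_coord_sub_algebraMap {i : Fin d} {a : ℂ} (ha : a ∉ sphere (c i) (R i)) :
    IsUnit (coord i - algebraMap ℂ C(polytorus c R, ℂ) a) :=
  (ContinuousMap.isUnit_iff_forall_ne_zero _).mpr fun x =>
    sub_ne_zero.mpr (ne_of_mem_of_not_mem (x.2 i trivial) ha)

end polytorus

section TorusIntegrable

variable {E : Type*} [NormedAddCommGroup E] {d : ℕ} {c : Fin d → ℂ} {R : Fin d → ℝ}

lemma torusIntegrable_of_continuousOn (hR : ∀ i, 0 ≤ R i) {f : (Fin d → ℂ) → E}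
    (hf : ContinuousOn f (polytorus c R)) : TorusIntegrable f c R := by
  have hmap : Continuous (torusMap c R) := by unfold torusMap; fun_prop
  exact (hf.comp_continuous hmap (polytorus.torusMap_mem hR)).integrableOn_Icc

variable [NormedSpace ℂ E]

lemma torusIntegrable_prod_sub_inv_smul (hR : ∀ i, 0 ≤ R i) {f : (Fin d → ℂ) → E}
    (hf : ContinuousOn f (polytorus c R)) {w : Fin d → ℂ} (hw : ∀ i, w i ∉ sphere (c i) (R i)) :
    TorusIntegrable (fun x => (∏ i, (x i - w i)⁻¹) • f x) c R := by
  refine torusIntegrable_of_continuousOn hR (.smul (continuousOn_finsetProd _ fun i _ => ?_) hf)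
  exact ((continuous_apply i).continuousOn.sub continuousOn_const).inv₀ fun x hx =>
    sub_ne_zero.mpr (ne_of_mem_of_not_mem (hx i trivial) (hw i))

lemma torusIntegral_congr (hR : ∀ i, 0 ≤ R i) {f g : (Fin d → ℂ) → E}
    (h : EqOn f g (polytorus c R)) : (∯ x in T(c, R), f x) = ∯ x in T(c, R), g x := by
  simp only [torusIntegral, fun θ => h (polytorus.torusMap_mem hR θ)]

theorem exists_continuousLinearMap_eq_torusIntegral (hR : ∀ i, 0 ≤ R i) {f : (Fin d → ℂ) → E}
    (hf : ContinuousOn f (polytorus c R)) :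
    ∃ Λ : C(polytorus c R, ℂ) →L[ℂ] E, ∀ (h : C(polytorus c R, ℂ)) (g : (Fin d → ℂ) → ℂ),
      (∀ x, h x = g x) → Λ h = ∯ x in T(c, R), g x • f x := by
  let ext (h : C(polytorus c R, ℂ)) : (Fin d → ℂ) → ℂ := Function.extend Subtype.val h 0
  have hext (h : C(polytorus c R, ℂ)) {x : Fin d → ℂ} (hx : x ∈ polytorus c R) :
      ext h x = h ⟨x, hx⟩ := Subtype.val_injective.extend_apply h 0 ⟨x, hx⟩
  have hint (h : C(polytorus c R, ℂ)) : TorusIntegrable (fun x => ext h x • f x) c R := by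
    refine torusIntegrable_of_continuousOn hR
      (.smul (continuousOn_iff_continuous_domRestrict.mpr ?_) hf)
    exact h.continuous.congr fun x => (hext h x.2).symm
  let I : C(polytorus c R, ℂ) →ₗ[ℂ] E :=
    { toFun h := ∯ x in T(c, R), ext h x • f x
      map_add' h k := by
        rw [← torusIntegral_add (hint h) (hint k)]
        exact torusIntegral_congr hR fun x hx => by
          simp only [hext _ hx, ContinuousMap.add_apply, add_smul]
      map_smul' a h := by
        rw [RingHom.id_apply, ← torusIntegral_smul]
        exact torusIntegral_congr hR fun x hx => by
          simp only [hext _ hx, ContinuousMap.smul_apply, smul_assoc] }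
  obtain ⟨C, hC⟩ := polytorus.isCompact.exists_bound_of_continuousOn hf
  refine ⟨I.mkContinuous ((2 * Real.pi) ^ d * (∏ i, |R i|) * C) fun h => ?_, fun h g hg => ?_⟩
  · have hbound (θ : Fin d → ℝ) :
        ‖ext h (torusMap c R θ) • f (torusMap c R θ)‖ ≤ ‖h‖ * C := by
      have hθ := polytorus.torusMap_mem (c := c) hR θ
      rw [norm_smul, hext h hθ]
      gcongr
      exacts [h.norm_coe_le_norm _, hC _ hθ]
    calc ‖I h‖ ≤ (2 * Real.pi) ^ d * (∏ i, |R i|) * (‖h‖ * C) :=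
          norm_torusIntegral_le_of_norm_le_const (f := fun x => ext h x • f x) hbound
      _ = (2 * Real.pi) ^ d * (∏ i, |R i|) * C * ‖h‖ := by ring
  · exact torusIntegral_congr hR fun x hx => congrArg (· • f x) ((hext h hx).trans (hg ⟨x, hx⟩))

end TorusIntegrable

variable {E : Type*} [NormedAddCommGroup E] [NormedSpace ℂ E] [CompleteSpace E]

lemma circleIntegral_sub_inv_smul_eq_indicator {f : ℂ → E} {c w : ℂ} {R : ℝ} (hR : 0 ≤ R)
    (hf : DifferentiableOn ℂ f (closedBall c R)) (hw : w ∉ sphere c R) :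
    ∮ z in C(c, R), (z - w)⁻¹ • f z = (2 * Real.pi * Complex.I) • (ball c R).indicator f w := by
  by_cases hwR : w ∈ ball c R
  · rw [indicator_of_mem hwR, hf.circleIntegral_sub_inv_smul hwR]
  · have hwc : w ∉ closedBall c R := fun h => (ball_union_sphere (x := c) ▸ h).elim hwR hw
    have hinv : DifferentiableOn ℂ (fun z => (z - w)⁻¹) (closedBall c R) :=
      (differentiableOn_id.sub_const w).inv fun z hz =>
        sub_ne_zero.mpr (ne_of_mem_of_not_mem hz hwc)
    rw [indicator_of_notMem hwR, smul_zero]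
    exact ((hinv.smul hf).diffContOnCl_ball subset_rfl).circleIntegral_eq_zero hR

variable {d : ℕ}

theorem torusIntegral_prod_sub_inv_smul {c w : Fin d → ℂ} {R : Fin d → ℝ}
    (hR : ∀ i, 0 ≤ R i) {f : (Fin d → ℂ) → E}
    (hf : DifferentiableOn ℂ f (univ.pi fun i => closedBall (c i) (R i)))
    (hw : ∀ i, w i ∉ sphere (c i) (R i)) :
    (∯ x in T(c, R), (∏ i, (x i - w i)⁻¹) • f x) =
      (2 * Real.pi * Complex.I) ^ d • (univ.pi fun i => ball (c i) (R i)).indicator f w := by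
  classical
  induction d with
  | zero => simp [Subsingleton.elim w c]
  | succ d ih =>
    have hmaps {x : ℂ} (hx : x ∈ closedBall (c 0) (R 0)) : MapsTo (Fin.cons x)
        (univ.pi fun i : Fin d => closedBall (c i.succ) (R i.succ))
        (univ.pi fun i => closedBall (c i) (R i)) :=
      fun y hy i _ => Fin.cases hx (fun i => hy i trivial) i
    let slice (x : ℂ) : E := (univ.pi fun i : Fin d => ball (c i.succ) (R i.succ)).indicator
      (fun y => f (Fin.cons x y)) (Fin.tail w)
    have hslice : DifferentiableOn ℂ slice (closedBall (c 0) (R 0)) := by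
      by_cases hwt : Fin.tail w ∈ univ.pi fun i : Fin d => ball (c i.succ) (R i.succ)
      · simp only [slice, indicator_of_mem hwt]
        exact hf.comp (by fun_prop) fun x hx =>
          hmaps hx (pi_mono (fun i _ => ball_subset_closedBall) hwt)
      · simp only [slice, indicator_of_notMem hwt]
        exact differentiableOn_const 0
    have hinner : ∀ x ∈ sphere (c 0) (R 0),
        (∯ y in T(c ∘ Fin.succ, R ∘ Fin.succ),
          (∏ i, ((Fin.cons x y : Fin (d + 1) → ℂ) i - w i)⁻¹) • f (Fin.cons x y)) =
        (2 * Real.pi * Complex.I) ^ d • (x - w 0)⁻¹ • slice x := by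
      intro x hx
      have hfx : DifferentiableOn ℂ (fun y : Fin d → ℂ => f (Fin.cons x y))
          (univ.pi fun i : Fin d => closedBall (c i.succ) (R i.succ)) :=
        hf.comp (by fun_prop) (hmaps (sphere_subset_closedBall hx))
      simp only [Fin.prod_univ_succ, Fin.cons_zero, Fin.cons_succ, mul_smul]
      rw [torusIntegral_smul, smul_comm]
      exact congrArg _ (ih (fun i => hR i.succ) hfx fun i => hw i.succ)
    have hf' : ContinuousOn f (polytorus c R) :=
      hf.continuousOn.mono (pi_mono fun i _ => sphere_subset_closedBall)
    rw [torusIntegral_succ (torusIntegrable_prod_sub_inv_smul hR hf' hw),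
      circleIntegral.integral_congr (hR 0) hinner, circleIntegral.integral_smul,
      circleIntegral_sub_inv_smul_eq_indicator (hR 0) hslice (hw 0), smul_smul, ← pow_succ]
    simp [slice, indicator_apply, Fin.forall_fin_succ, Fin.tail, ite_and]

theorem exists_continuousLinearMap_cauchyKernel_eq_indicator {c : Fin d → ℂ} {R : Fin d → ℝ}
    (hR : ∀ i, 0 ≤ R i) {f : (Fin d → ℂ) → E}
    (hf : DifferentiableOn ℂ f (univ.pi fun i => closedBall (c i) (R i))) :
    ∃ Λ : C(polytorus c R, ℂ) →L[ℂ] E, ∀ w : Fin d → ℂ, (∀ i, w i ∉ sphere (c i) (R i)) →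
      Λ (∏ i, (polytorus.coord i - algebraMap ℂ _ (w i))⁻¹ʳ) =
        (univ.pi fun i => ball (c i) (R i)).indicator f w := by
  obtain ⟨Λ, hΛ⟩ := exists_continuousLinearMap_eq_torusIntegral hR
    (hf.continuousOn.mono (pi_mono fun i _ => sphere_subset_closedBall))
  refine ⟨((2 * Real.pi * Complex.I) ^ d)⁻¹ • Λ, fun w hw => ?_⟩
  rw [smul_apply, hΛ _ (fun x => ∏ i, (x i - w i)⁻¹),
    torusIntegral_prod_sub_inv_smul hR hf hw,
    inv_smul_smul₀ (pow_ne_zero _ Complex.two_pi_I_ne_zero)]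
  intro x
  rw [ContinuousMap.prod_apply]
  exact Finset.prod_congr rfl fun i _ =>
    ringInverse_continuousMap_apply (polytorus.isUnit_coord_sub_algebraMap (hw i)) x

end CauchyFormula

section NewtonMap

open Polynomial

/-- The second component `σ` of `newtonMap`: the non-leading coefficients of `∏ i, (X - v i)`, in
order of decreasing degree. -/
noncomputable def signedElemSymm (p : ℕ) (v : Fin p → ℂ) : Fin p → ℂ :=
  fun j => (-1) ^ (j.1 + 1) * elemSymm p (j.1 + 1) v

lemma newtonMap_eq_prodMap (n p : ℕ) : newtonMap n p = Prod.map id (signedElemSymm p) := rfl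

variable {p : ℕ}

lemma continuous_signedElemSymm : Continuous (signedElemSymm p) := by
  unfold signedElemSymm elemSymm
  fun_prop

lemma isMonicOfDegree_prod_X_sub_C {R : Type*} [CommRing R] [Nontrivial R] (v : Fin p → R) :
    IsMonicOfDegree (∏ i, (X - C (v i))) p :=
  ⟨by simp, monic_prod_X_sub_C v Finset.univ⟩

lemma roots_univ_prod_X_sub_C {ι R : Type*} [Fintype ι] [CommRing R] [IsDomain R] (v : ι → R) :
    (∏ i, (X - C (v i))).roots = Finset.univ.val.map v := by
  rw [← roots_multiset_prod_X_sub_C (Finset.univ.val.map v), Multiset.map_map]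
  rfl

lemma coeff_prod_X_sub_C (v : Fin p → ℂ) (j : Fin p) :
    (∏ i, (X - C (v i))).coeff j.rev = signedElemSymm p v j := by
  have hj : p - j.rev = j + 1 := by rw [Fin.val_rev]; omega
  have h := Multiset.prod_X_sub_C_coeff (Finset.univ.val.map v) (k := j.rev) (by simp)
  rw [Multiset.card_map, Finset.card_val, Finset.card_fin, hj, Finset.esymm_map_val] at h
  simpa [Multiset.map_map, -Fin.univ_val_map, signedElemSymm, elemSymm] using h

lemma signedElemSymm_eq_iff_prod_X_sub_C_eq {v w : Fin p → ℂ} :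
    signedElemSymm p v = signedElemSymm p w ↔ ∏ i, (X - C (v i)) = ∏ i, (X - C (w i)) := by
  refine ⟨fun h => ?_, fun h => funext fun j => ?_⟩
  · refine Polynomial.ext fun m => ?_
    obtain hm | hm := lt_or_ge m p
    · have := congrFun h (Fin.rev ⟨m, hm⟩)
      rwa [← coeff_prod_X_sub_C, ← coeff_prod_X_sub_C, Fin.rev_rev] at this
    · exact (isMonicOfDegree_prod_X_sub_C v).coeff_eq (isMonicOfDegree_prod_X_sub_C w) hm
  · rw [← coeff_prod_X_sub_C, h, coeff_prod_X_sub_C]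

lemma exists_perm_comp_eq_of_map_univ_val_eq {ι κ : Type*} [Fintype ι] {v w : ι → κ}
    (h : Finset.univ.val.map v = Finset.univ.val.map w) : ∃ α : Equiv.Perm ι, w ∘ α = v := by
  classical
  have hcard (c : κ) : Fintype.card {i // v i = c} = Fintype.card {i // w i = c} := by
    have hcount := congrArg (Multiset.count c) h
    rw [Multiset.count_map, Multiset.count_map] at hcount
    simpa [Fintype.card_subtype, Finset.card, eq_comm] using hcount
  let e (c : κ) : {i // v i = c} ≃ {i // w i = c} := Fintype.equivOfCardEq (hcard c)
  exact ⟨Equiv.ofFiberEquiv e, funext (Equiv.ofFiberEquiv_map e)⟩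

theorem signedElemSymm_eq_iff_exists_perm {v w : Fin p → ℂ} :
    signedElemSymm p v = signedElemSymm p w ↔ ∃ α : Equiv.Perm (Fin p), w ∘ α = v := by
  rw [signedElemSymm_eq_iff_prod_X_sub_C_eq]
  refine ⟨fun h => exists_perm_comp_eq_of_map_univ_val_eq ?_, ?_⟩
  · rw [← roots_univ_prod_X_sub_C, h, roots_univ_prod_X_sub_C]
  · rintro ⟨α, rfl⟩
    exact Equiv.prod_comp α fun i => X - C (w i)

lemma exists_eq_prod_X_sub_C_of_isMonicOfDegree {K : Type*} [Field K] [IsAlgClosed K] {q : K[X]}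
    (hq : IsMonicOfDegree q p) : ∃ v : Fin p → K, q = ∏ i, (X - C (v i)) := by
  have hsplits : q.Splits := IsAlgClosed.splits q
  have hcard : q.roots.toList.length = p := by
    rw [Multiset.length_toList, ← hsplits.natDegree_eq_card_roots, hq.natDegree_eq]
  subst hcard
  have hget : Finset.univ.val.map q.roots.toList.get = q.roots := by
    rw [Fin.univ_val_map, List.ofFn_get, Multiset.coe_toList]
  have hprod := congrArg (fun s : Multiset K => (s.map fun a => X - C a).prod) hget
  rw [Multiset.map_map] at hprod
  exact ⟨q.roots.toList.get, (hsplits.eq_prod_roots_of_monic hq.monic).trans hprod.symm⟩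

theorem signedElemSymm_surjective : Function.Surjective (signedElemSymm p) := by
  intro c
  have hdeg := ofFn_degree_lt (c ∘ Fin.rev)
  have hq : IsMonicOfDegree (X ^ p + ofFn p (c ∘ Fin.rev)) p :=
    (isMonicOfDegree_iff _ _).mpr
      ⟨natDegree_le_of_degree_le (degree_add_le_of_degree_le (degree_X_pow_le p) hdeg.le),
        by simp [ofFn_coeff_eq_zero_of_ge]⟩
  obtain ⟨v, hv⟩ := exists_eq_prod_X_sub_C_of_isMonicOfDegree hq
  refine ⟨v, funext fun j => ?_⟩
  rw [← coeff_prod_X_sub_C, ← hv, coeff_add, coeff_X_pow, if_neg j.rev.isLt.ne,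
    ofFn_coeff_eq_val_of_lt _ j.rev.isLt, zero_add]
  exact congrArg c j.rev_rev

lemma norm_le_norm_signedElemSymm_add_one (v : Fin p → ℂ) : ‖v‖ ≤ ‖signedElemSymm p v‖ + 1 := by
  refine (pi_norm_le_iff_of_nonneg (by positivity)).mpr fun i => ?_
  have hq := isMonicOfDegree_prod_X_sub_C v
  have hroot : (∏ i, (X - C (v i))).IsRoot (v i) := by
    rw [IsRoot.def, eval_prod]
    exact Finset.prod_eq_zero (Finset.mem_univ i) (by simp)
  have hcoeff (m : ℕ) (hm : m ∈ Finset.range p) :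
      ‖(∏ i, (X - C (v i))).coeff m‖₊ ≤ ‖signedElemSymm p v‖₊ := by
    have h := coeff_prod_X_sub_C v (Fin.rev ⟨m, Finset.mem_range.mp hm⟩)
    rw [Fin.rev_rev] at h
    exact h ▸ nnnorm_le_pi_nnnorm _ _
  have hlt := hroot.norm_lt_cauchyBound hq.ne_zero
  rw [cauchyBound, hq.leadingCoeff_eq, hq.natDegree_eq, nnnorm_one, div_one] at hlt
  exact hlt.le.trans (add_le_add_left (Finset.sup_le hcoeff) 1)

theorem isProperMap_signedElemSymm : IsProperMap (signedElemSymm p) := by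
  refine isProperMap_iff_isCompact_preimage.mpr ⟨continuous_signedElemSymm, fun {K} hK => ?_⟩
  obtain ⟨M, hM⟩ := hK.isBounded.exists_norm_le
  refine isCompact_of_isClosed_isBounded (hK.isClosed.preimage continuous_signedElemSymm) ?_
  refine isBounded_iff_forall_norm_le.mpr ⟨M + 1, fun v hv => ?_⟩
  exact (norm_le_norm_signedElemSymm_add_one v).trans (add_le_add_left (hM _ hv) 1)

theorem isOpenMap_signedElemSymm : IsOpenMap (signedElemSymm p) := by
  intro U hU
  have hquot : IsQuotientMap (signedElemSymm p) :=
    isProperMap_signedElemSymm.isClosedMap.isQuotientMap continuous_signedElemSymm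
      signedElemSymm_surjective
  have hsat : signedElemSymm p ⁻¹' (signedElemSymm p '' U) =
      ⋃ α : Equiv.Perm (Fin p), (fun v => v ∘ α) ⁻¹' U := by
    ext v
    simp only [mem_preimage, mem_image, mem_iUnion, signedElemSymm_eq_iff_exists_perm]
    exact ⟨fun ⟨w, hw, α, hα⟩ => ⟨α, by rwa [hα]⟩, fun ⟨α, hα⟩ => ⟨_, hα, α, rfl⟩⟩
  rw [← hquot.isOpen_preimage, hsat]
  exact isOpen_iUnion fun α => hU.preimage (by fun_prop)

lemma newtonMap_eq_iff_exists_perm {n : ℕ} {u u' : (Fin n → ℂ) × (Fin p → ℂ)} :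
    newtonMap n p u = newtonMap n p u' ↔ ∃ α : Equiv.Perm (Fin p), (u'.1, u'.2 ∘ α) = u := by
  simp only [newtonMap_eq_prodMap, Prod.ext_iff, Prod.map_fst, Prod.map_snd, id,
    signedElemSymm_eq_iff_exists_perm, exists_and_left, eq_comm]

variable (n p : ℕ)

lemma continuous_newtonMap : Continuous (newtonMap n p) :=
  continuous_id.prodMap continuous_signedElemSymm

lemma newtonMap_surjective : Function.Surjective (newtonMap n p) :=
  Function.surjective_id.prodMap signedElemSymm_surjective

lemma isOpenMap_newtonMap : IsOpenMap (newtonMap n p) :=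
  IsOpenMap.id.prodMap isOpenMap_signedElemSymm

end NewtonMap

section Analytic

variable {𝕜 A : Type*} [NontriviallyNormedField 𝕜] [NormedCommRing A] [NormedAlgebra 𝕜 A]

lemma analyticAt_algebraMap_apply {ι : Type*} [Fintype ι] (i : ι) (z₀ : ι → 𝕜) :
    AnalyticAt 𝕜 (fun z : ι → 𝕜 => algebraMap 𝕜 A (z i)) z₀ :=
  (algebraMapCLM 𝕜 A ∘L .proj (φ := fun _ : ι => 𝕜) i).analyticAt z₀

variable [CompleteSpace A]

lemma analyticAt_ringInverse_comp {X : Type*} [NormedAddCommGroup X] [NormedSpace 𝕜 X] {f : X → A}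
    {x : X} (hf : AnalyticAt 𝕜 f x) (hx : IsUnit (f x)) : AnalyticAt 𝕜 (fun y => (f y)⁻¹ʳ) x :=
  (analyticOnNhd_inverse (f x) hx).fun_comp hf

lemma analyticAt_prod_ringInverse_sub_algebraMap {ι : Type*} [Fintype ι] (w : ι → A) {z₀ : ι → 𝕜}
    (hz₀ : ∀ i, IsUnit (w i - algebraMap 𝕜 A (z₀ i))) :
    AnalyticAt 𝕜 (fun z : ι → 𝕜 => ∏ i, (w i - algebraMap 𝕜 A (z i))⁻¹ʳ) z₀ :=
  Finset.analyticAt_fun_prod _ fun i _ =>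
    analyticAt_ringInverse_comp (analyticAt_const.sub (analyticAt_algebraMap_apply i z₀)) (hz₀ i)

end Analytic

section CauchyPermanent

open MvPolynomial

lemma permanent_of_ringInverse {ι A : Type*} [Fintype ι] [DecidableEq ι] [CommSemiring A]
    {x : ι → ι → A} (hx : ∀ j i, IsUnit (x j i)) :
    (Matrix.of fun j i => (x j i)⁻¹ʳ).permanent =
      (Matrix.of fun j i => ∏ k ∈ Finset.univ.erase j, x k i).permanent *
        (∏ i, ∏ k, x k i)⁻¹ʳ := by
  have hunit : IsUnit (∏ i, ∏ k, x k i) :=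
    IsUnit.prod_univ_iff.mpr fun i => IsUnit.prod_univ_iff.mpr fun k => hx k i
  rw [Ring.eq_mul_inverse_iff_mul_eq _ _ _ hunit]
  simp only [Matrix.permanent, Matrix.of_apply, Finset.sum_mul, ← Finset.prod_mul_distrib]
  refine Finset.sum_congr rfl fun β _ => Finset.prod_congr rfl fun i _ => ?_
  rw [← Finset.mul_prod_erase Finset.univ (x · i) (Finset.mem_univ (β i)),
    Ring.inverse_mul_cancel_left _ _ (hx (β i) i)]

variable {A : Type*} [CommRing A]

section IsSymmetric

variable {ι : Type*} [Fintype ι]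

lemma isSymmetric_prod_prod_C_sub_X (w : ι → A) :
    (∏ i, ∏ j, (C (w i) - X j) : MvPolynomial ι A).IsSymmetric := by
  intro γ
  simp only [map_prod, map_sub, rename_C, rename_X]
  exact Finset.prod_congr rfl fun i _ => Equiv.prod_comp γ fun j => C (w i) - X j

lemma isSymmetric_permanent_prod_erase_C_sub_X [DecidableEq ι] (w : ι → A) :
    (Matrix.of fun j i => ∏ k ∈ Finset.univ.erase j, (C (w i) - X k) :
      Matrix ι ι (MvPolynomial ι A)).permanent.IsSymmetric := by
  intro γ
  simp only [Matrix.permanent, Matrix.of_apply, map_sum, map_prod, map_sub, rename_C, rename_X]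
  refine Fintype.sum_equiv (Equiv.mulLeft γ) _ _ fun β => Finset.prod_congr rfl fun i _ => ?_
  exact Finset.prod_equiv γ (by simp) fun k _ => rfl

end IsSymmetric

variable {p : ℕ}

lemma exists_aeval_signedElemSymm_eq_of_isSymmetric [Algebra ℂ A] {N : MvPolynomial (Fin p) A}
    (hN : N.IsSymmetric) : ∃ Q : MvPolynomial (Fin p) A, ∀ v : Fin p → ℂ,
      aeval (fun j => algebraMap ℂ A (signedElemSymm p v j)) Q =
        aeval (fun j => algebraMap ℂ A (v j)) N := by
  obtain ⟨Q, hQ⟩ := esymmAlgHom_surjective (σ := Fin p) A (n := p) (by simp) ⟨N, hN⟩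
  have hQN : aeval (fun j : Fin p => esymm (Fin p) A (j + 1)) Q = N := by
    rw [← esymmAlgHom_apply, hQ]
  refine ⟨aeval (fun j : Fin p => (-1) ^ (j.1 + 1) * X j) Q, fun v => ?_⟩
  rw [← hQN, ← AlgHom.comp_apply, ← AlgHom.comp_apply]
  congr 1
  refine algHom_ext fun j => ?_
  have hsign : ((-1) ^ (j.1 + 1) * (-1) ^ (j.1 + 1) : A) = 1 := by rw [← mul_pow]; simp
  simp only [AlgHom.comp_apply, aeval_X, map_mul, map_pow, map_neg, map_one]
  rw [aeval_esymm_eq_multiset_esymm, Finset.esymm_map_val, signedElemSymm, elemSymm]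
  simp only [map_mul, map_pow, map_neg, map_one, map_sum, map_prod]
  rw [← mul_assoc, hsign, one_mul]

theorem exists_analyticAt_signedElemSymm_eq_permanent {A : Type*} [NormedCommRing A]
    [NormedAlgebra ℂ A] [CompleteSpace A] (w : Fin p → A) {v₀ : Fin p → ℂ}
    (hv₀ : ∀ j i, IsUnit (w i - algebraMap ℂ A (v₀ j))) :
    ∃ S : (Fin p → ℂ) → A, AnalyticAt ℂ S (signedElemSymm p v₀) ∧
      ∀ v, (∀ j i, IsUnit (w i - algebraMap ℂ A (v j))) → S (signedElemSymm p v) =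
        (Matrix.of fun j i => (w i - algebraMap ℂ A (v j))⁻¹ʳ).permanent := by
  obtain ⟨N, hN⟩ := exists_aeval_signedElemSymm_eq_of_isSymmetric
    (isSymmetric_permanent_prod_erase_C_sub_X w)
  obtain ⟨D, hD⟩ := exists_aeval_signedElemSymm_eq_of_isSymmetric (isSymmetric_prod_prod_C_sub_X w)
  have hunit : IsUnit (aeval (fun j => algebraMap ℂ A (signedElemSymm p v₀ j)) D) := by
    simp only [hD, map_prod, map_sub, aeval_C, aeval_X, Algebra.algebraMap_self_apply]
    exact IsUnit.prod_univ_iff.mpr fun i => IsUnit.prod_univ_iff.mpr fun j => hv₀ j i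
  have hanalytic (Q : MvPolynomial (Fin p) A) : AnalyticAt ℂ
      (fun c : Fin p → ℂ => aeval (fun j => algebraMap ℂ A (c j)) Q) (signedElemSymm p v₀) :=
    .aeval_mvPolynomial (analyticAt_algebraMap_apply · _) Q
  refine ⟨fun c => aeval (fun j => algebraMap ℂ A (c j)) N *
      (aeval (fun j => algebraMap ℂ A (c j)) D)⁻¹ʳ,
    (hanalytic N).mul (analyticAt_ringInverse_comp (hanalytic D) hunit), fun v hv => ?_⟩
  beta_reduce
  rw [permanent_of_ringInverse hv, hN, hD]
  simp [Matrix.permanent]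

end CauchyPermanent

section SymmetrizedCauchyFormula

variable {E : Type*} [NormedAddCommGroup E] [NormedSpace ℂ E] [CompleteSpace E] {n p : ℕ}
  {F : (Fin n → ℂ) × (Fin p → ℂ) → E} {u₀ : (Fin n → ℂ) × (Fin p → ℂ)} {r : ℝ}

open polytorus

lemma differentiable_appendIsometry_symm :
    Differentiable ℂ (Fin.appendIsometry (α := ℂ) n p).symm := by
  change Differentiable ℂ fun w : Fin (n + p) → ℂ =>
    (fun i => w (Fin.castAdd p i), fun j => w (Fin.natAdd n j))
  fun_prop

lemma exists_continuousLinearMap_cauchyKernel_eq_indicator_append (hr : 0 < r)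
    (hF : DifferentiableOn ℂ F (closedBall u₀ r)) :
    ∃ Λ : C(polytorus (Fin.append u₀.1 u₀.2) (fun _ => r), ℂ) →L[ℂ] E,
      ∀ z v, (∀ i, z i ∉ sphere (u₀.1 i) r) → (∀ i, v i ∉ sphere (u₀.2 i) r) →
        Λ ((∏ i, (coord (i.castAdd p) - algebraMap ℂ _ (z i))⁻¹ʳ) *
            ∏ i, (coord (i.natAdd n) - algebraMap ℂ _ (v i))⁻¹ʳ) =
          (ball u₀ r).indicator F (z, v) := by
  let e := Fin.appendIsometry (α := ℂ) n p
  have he (u) : e u = Fin.append u.1 u.2 := rfl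
  have hclosedBall : e.symm ⁻¹' closedBall u₀ r =
      univ.pi fun i => closedBall (Fin.append u₀.1 u₀.2 i) r := by
    rw [e.symm.preimage_closedBall, e.symm_symm, he, closedBall_pi _ hr.le]
  have hball : e.symm ⁻¹' ball u₀ r = univ.pi fun i => ball (Fin.append u₀.1 u₀.2 i) r := by
    rw [e.symm.preimage_ball, e.symm_symm, he, ball_pi _ hr]
  obtain ⟨Λ, hΛ⟩ := exists_continuousLinearMap_cauchyKernel_eq_indicator (fun _ => hr.le)
    (hclosedBall ▸
      hF.comp differentiable_appendIsometry_symm.differentiableOn (mapsTo_preimage _ _))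
  refine ⟨Λ, fun z v hz hv => ?_⟩
  have hw (i : Fin (n + p)) : Fin.append z v i ∉ sphere (Fin.append u₀.1 u₀.2 i) r := by
    refine Fin.addCases (fun i => ?_) (fun i => ?_) i
    · simpa only [Fin.append_left] using hz i
    · simpa only [Fin.append_right] using hv i
  have h := hΛ _ hw
  simp only [Fin.prod_univ_add, Fin.append_left, Fin.append_right] at h
  rw [h, ← hball, indicator_comp_right e.symm]
  exact congrArg _ (e.symm_apply_apply (z, v))

theorem exists_analyticAt_newtonMap_eq_sum_perm (hr : 0 < r)
    (hF : DifferentiableOn ℂ F (closedBall u₀ r)) (hu₀ : ∀ j i, u₀.2 j ∉ sphere (u₀.2 i) r) :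
    ∃ G : (Fin n → ℂ) × (Fin p → ℂ) → E, AnalyticAt ℂ G (newtonMap n p u₀) ∧
      ∀ z ∈ ball u₀.1 r, ∀ v, (∀ j i, v j ∉ sphere (u₀.2 i) r) →
        G (newtonMap n p (z, v)) =
          ∑ β : Equiv.Perm (Fin p), (ball u₀ r).indicator F (z, v ∘ β) := by
  obtain ⟨Λ, hΛ⟩ := exists_continuousLinearMap_cauchyKernel_eq_indicator_append hr hF
  have hball {z : Fin n → ℂ} (hz : z ∈ ball u₀.1 r) (i : Fin n) : z i ∉ sphere (u₀.1 i) r :=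
    fun h => ((dist_le_pi_dist z u₀.1 i).trans_lt hz).ne h
  let coord₁ (i : Fin n) : C(polytorus (Fin.append u₀.1 u₀.2) fun _ => r, ℂ) :=
    coord (i.castAdd p)
  let coord₂ (i : Fin p) : C(polytorus (Fin.append u₀.1 u₀.2) fun _ => r, ℂ) :=
    coord (i.natAdd n)
  have hunit₁ (i : Fin n) : IsUnit (coord₁ i - algebraMap ℂ _ (u₀.1 i)) :=
    isUnit_coord_sub_algebraMap (by simpa using hball (mem_ball_self hr) i)
  have hunit₂ {v : Fin p → ℂ} (hv : ∀ j i, v j ∉ sphere (u₀.2 i) r) (j i : Fin p) :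
      IsUnit (coord₂ i - algebraMap ℂ _ (v j)) :=
    isUnit_coord_sub_algebraMap (by simpa using hv j i)
  obtain ⟨S, hS : AnalyticAt ℂ S (newtonMap n p u₀).2, hSv⟩ :=
    exists_analyticAt_signedElemSymm_eq_permanent coord₂ (hunit₂ hu₀)
  let P (z : Fin n → ℂ) := ∏ i, (coord₁ i - algebraMap ℂ _ (z i))⁻¹ʳ
  have hP : AnalyticAt ℂ P (newtonMap n p u₀).1 :=
    analyticAt_prod_ringInverse_sub_algebraMap coord₁ hunit₁
  refine ⟨fun x => Λ (P x.1 * S x.2), (Λ.analyticAt _).fun_comp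
    ((hP.fun_comp analyticAt_fst).fun_mul (hS.fun_comp analyticAt_snd)), fun z hz v hv => ?_⟩
  calc Λ (P z * S (signedElemSymm p v))
      = ∑ β : Equiv.Perm (Fin p), Λ (P z * ∏ i, (coord₂ i - algebraMap ℂ _ (v (β i)))⁻¹ʳ) := by
        simp only [hSv v (hunit₂ hv), Matrix.permanent, Matrix.of_apply, Finset.mul_sum, map_sum]
    _ = ∑ β : Equiv.Perm (Fin p), (ball u₀ r).indicator F (z, v ∘ β) :=
        Finset.sum_congr rfl fun β _ => hΛ z (v ∘ β) (hball hz) fun i => hv (β i) i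

end SymmetrizedCauchyFormula

section Separation

lemma eventually_two_mul_lt_dist {ι X : Type*} [Finite ι] [MetricSpace X] (v₀ : ι → X) :
    ∀ᶠ r in 𝓝[>] (0 : ℝ), ∀ i j, v₀ i ≠ v₀ j → 2 * r < dist (v₀ i) (v₀ j) := by
  simp only [eventually_all]
  intro i j hij
  refine nhdsWithin_le_nhds ?_
  have h : Tendsto (fun r : ℝ => 2 * r) (𝓝 0) (𝓝 0) := by
    simpa using (continuous_const_mul (2 : ℝ)).tendsto 0
  exact h.eventually_lt_const (dist_pos.mpr hij)

variable {ι X : Type*} [Fintype ι] [PseudoMetricSpace X] {v₀ v : ι → X} {r : ℝ}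

lemma comp_mem_ball_iff_comp_eq
    (hsep : ∀ i j, v₀ i ≠ v₀ j → 2 * r < dist (v₀ i) (v₀ j)) (hv : v ∈ ball v₀ r)
    (β : ι → ι) : v ∘ β ∈ ball v₀ r ↔ v₀ ∘ β = v₀ := by
  have hr : 0 < r := pos_of_mem_ball hv
  refine ⟨fun hβ => ?_, fun hβ => ?_⟩
  · refine funext fun i => by_contra fun hi => (hsep _ _ hi).not_ge ?_
    calc dist (v₀ (β i)) (v₀ i) ≤ dist (v₀ (β i)) (v (β i)) + dist (v (β i)) (v₀ i) :=
          dist_triangle _ _ _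
      _ ≤ r + r := add_le_add (by rw [dist_comm]; exact ((dist_pi_lt_iff hr).mp hv (β i)).le)
          ((dist_pi_lt_iff hr).mp hβ i).le
      _ = 2 * r := (two_mul r).symm
  · refine (dist_pi_lt_iff hr).mpr fun i => ?_
    calc dist (v (β i)) (v₀ i) = dist (v (β i)) (v₀ (β i)) := by rw [← congrFun hβ i]; rfl
      _ < r := (dist_pi_lt_iff hr).mp hv (β i)

lemma notMem_sphere_of_mem_ball
    (hsep : ∀ i j, v₀ i ≠ v₀ j → 2 * r < dist (v₀ i) (v₀ j)) (hv : v ∈ ball v₀ r)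
    (j i : ι) : v j ∉ sphere (v₀ i) r := by
  intro h
  have hj : dist (v j) (v₀ j) < r := (dist_le_pi_dist v v₀ j).trans_lt hv
  rw [mem_sphere] at h
  by_cases hji : v₀ j = v₀ i
  · exact (hji ▸ hj).ne h
  · linarith [hsep j i hji, dist_triangle_left (v₀ j) (v₀ i) (v j)]

end Separation

section Factorization

variable {E : Type*} [NormedAddCommGroup E] [NormedSpace ℂ E] [CompleteSpace E] {n p : ℕ}
  {F : (Fin n → ℂ) × (Fin p → ℂ) → E} {u₀ : (Fin n → ℂ) × (Fin p → ℂ)} {r : ℝ}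

theorem exists_analyticAt_newtonMap_eqOn_ball (hr : 0 < r)
    (hF : DifferentiableOn ℂ F (closedBall u₀ r))
    (hsymm : ∀ α : Equiv.Perm (Fin p), ∀ u ∈ ball u₀ r, F (u.1, u.2 ∘ α) = F u)
    (hsep : ∀ i j, u₀.2 i ≠ u₀.2 j → 2 * r < dist (u₀.2 i) (u₀.2 j)) :
    ∃ G : (Fin n → ℂ) × (Fin p → ℂ) → E, AnalyticAt ℂ G (newtonMap n p u₀) ∧
      EqOn (G ∘ newtonMap n p) F (ball u₀ r) := by
  classical
  obtain ⟨G, hG, hGF⟩ := exists_analyticAt_newtonMap_eq_sum_perm hr hF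
    (notMem_sphere_of_mem_ball hsep (mem_ball_self hr))
  let m := Finset.card {β : Equiv.Perm (Fin p) | u₀.2 ∘ β = u₀.2}
  have hm : (m : ℂ) ≠ 0 :=
    Nat.cast_ne_zero.mpr (Finset.card_ne_zero_of_mem (Finset.mem_filter_univ 1 |>.mpr rfl))
  refine ⟨fun x => (m : ℂ)⁻¹ • G x, hG.const_smul, fun u hu => ?_⟩
  obtain ⟨hz, hv⟩ : u.1 ∈ ball u₀.1 r ∧ u.2 ∈ ball u₀.2 r := by
    rwa [← mem_prod, ball_prod_same]
  have hterm (β : Equiv.Perm (Fin p)) :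
      (ball u₀ r).indicator F (u.1, u.2 ∘ β) = if u₀.2 ∘ β = u₀.2 then F u else 0 := by
    have hmem : (u.1, u.2 ∘ β) ∈ ball u₀ r ↔ u₀.2 ∘ β = u₀.2 := by
      rw [← comp_mem_ball_iff_comp_eq hsep hv, ← ball_prod_same, mem_prod, and_iff_right hz]
    rw [indicator_apply, hsymm β u hu]
    exact if_congr hmem rfl rfl
  have hsum : G (newtonMap n p u) = (m : ℂ) • F u := by
    rw [hGF u.1 hz u.2 (notMem_sphere_of_mem_ball hsep hv)]
    simp only [hterm, Finset.sum_ite, Finset.sum_const, smul_zero, add_zero,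
      Nat.cast_smul_eq_nsmul, m]
  simp only [Function.comp_apply, hsum, inv_smul_smul₀ hm]

lemma exists_analyticAt_newtonMap_eventuallyEq
    (hF : ∀ᶠ u in 𝓝 u₀, DifferentiableAt ℂ F u)
    (hsymm : ∀ᶠ u in 𝓝 u₀, ∀ α : Equiv.Perm (Fin p), F (u.1, u.2 ∘ α) = F u) :
    ∃ G : (Fin n → ℂ) × (Fin p → ℂ) → E, AnalyticAt ℂ G (newtonMap n p u₀) ∧
      G ∘ newtonMap n p =ᶠ[𝓝 u₀] F := by
  have hsmall : ∀ᶠ r in 𝓝[>] (0 : ℝ), ∀ u ∈ closedBall u₀ r,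
      DifferentiableAt ℂ F u ∧ ∀ α : Equiv.Perm (Fin p), F (u.1, u.2 ∘ α) = F u :=
    nhdsWithin_le_nhds (eventually_closedBall_subset (hF.and hsymm))
  obtain ⟨r, ⟨hFr, hsep⟩, hr⟩ :=
    ((hsmall.and (eventually_two_mul_lt_dist u₀.2)).and self_mem_nhdsWithin).exists
  obtain ⟨G, hG, hGF⟩ := exists_analyticAt_newtonMap_eqOn_ball hr
    (fun u hu => (hFr u hu).1.differentiableWithinAt)
    (fun α u hu => (hFr u (ball_subset_closedBall hu)).2 α) hsep
  exact ⟨G, hG, hGF.eventuallyEq_of_mem (ball_mem_nhds u₀ hr)⟩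

end Factorization

theorem symmetric_analytic_factors_through_newtonMap_general {E : Type*} [NormedAddCommGroup E]
    [NormedSpace ℂ E] [CompleteSpace E] (n p : ℕ)
    {V : Set ((Fin n → ℂ) × (Fin p → ℂ))} (hV : IsOpen V) {F : (Fin n → ℂ) × (Fin p → ℂ) → E}
    (hF : DifferentiableOn ℂ F (newtonMap n p ⁻¹' V))
    (hF_sym : ∀ α : Equiv.Perm (Fin p), ∀ u ∈ newtonMap n p ⁻¹' V, F (u.1, u.2 ∘ α) = F u) :
    ∃ G : (Fin n → ℂ) × (Fin p → ℂ) → E, AnalyticOnNhd ℂ G V ∧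
      ∀ u ∈ newtonMap n p ⁻¹' V, F u = G (newtonMap n p u) := by
  have hsurj := newtonMap_surjective n p
  let G := F ∘ Function.surjInv hsurj
  have hFG : ∀ u ∈ newtonMap n p ⁻¹' V, F u = G (newtonMap n p u) := by
    intro u hu
    obtain ⟨α, hα⟩ := newtonMap_eq_iff_exists_perm.mp (Function.surjInv_eq hsurj (newtonMap n p u))
    exact (hF_sym α u hu).symm.trans (congrArg F hα)
  refine ⟨G, fun x hx => ?_, hFG⟩
  obtain ⟨u, rfl⟩ := hsurj x
  have hU : ∀ᶠ u' in 𝓝 u, u' ∈ newtonMap n p ⁻¹' V :=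
    (hV.preimage (continuous_newtonMap n p)).mem_nhds hx
  obtain ⟨G', hG', hG'F⟩ := exists_analyticAt_newtonMap_eventuallyEq
    (hF.eventually_differentiableAt hU) (hU.mono fun u' hu' α => hF_sym α u' hu')
  have hGG' : ∀ᶠ x in 𝓝 (newtonMap n p u), G' x = G x := by
    rw [← (isOpenMap_newtonMap n p).map_nhds_eq (continuous_newtonMap n p).continuousAt,
      eventually_map]
    filter_upwards [hU, hG'F] with u' hu' h using h.trans (hFG u' hu')
  exact hG'.congr hGG'

/-- holomorphic Newton theorem, Tougeron IX.6.5, used in Theorem 4.1.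
Let `V ⊆ ℂⁿ × ℂᵖ` be open (`p ≥ 1`) and `U = ψ⁻¹(V)`.  If `F` is holomorphic on `U` and
symmetric in the variables `v₁, …, v_p`, then `F = G ∘ ψ` on `U` for some `G`
holomorphic on `V`. -/
theorem symmetric_analytic_factors_through_newtonMap (n p : ℕ) (hp : 1 ≤ p)
    (V : Set ((Fin n → ℂ) × (Fin p → ℂ))) (hV : IsOpen V)
    (F : ((Fin n → ℂ) × (Fin p → ℂ)) → ℂ)
    (hF : AnalyticOnNhd ℂ F (newtonMap n p ⁻¹' V))
    (hF_sym : ∀ α : Equiv.Perm (Fin p), ∀ u ∈ newtonMap n p ⁻¹' V,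
      F (u.1, u.2 ∘ α) = F u) :
    ∃ G : ((Fin n → ℂ) × (Fin p → ℂ)) → ℂ, AnalyticOnNhd ℂ G V ∧
      ∀ u ∈ newtonMap n p ⁻¹' V, F u = G (newtonMap n p u) :=
  symmetric_analytic_factors_through_newtonMap_general n p hV hF.differentiableOn hF_sym
end

section
/- Let n ≥ 1, p ≥ 1, let Ω ⊆ ℝⁿ be an open set, and let g : Ω → ℝ be real-analytic on Ω. Let Δ := {(x, t) ∈ Ω × ℝᵖ : t_j = (−1)^j · C(p, j) · x_n^j for j = 1, …, p}, where C(p, j) is the binomial coefficient, so that t is the tuple of coefficients of the polynomial (X − x_n)^p. Then there exist an open set W ⊆ Ω × ℝᵖ with Δ ⊆ W, a real-analytic function q on W, and real-analytic functions h₁, …, h_p on the image Π(W) of W under the map (x, t) ↦ ((x₁, …, x_{n−1}), t) ∈ ℝ^{n−1} × ℝᵖ, such that for every (x, t) ∈ W: g(x) = q(x, t) · (x_n^p + Σ_{j=1}^p t_j x_n^{p−j}) + Σ_{j=1}^p h_j((x₁, …, x_{n−1}), t) · x_n^{p−j}. -/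
/-- The projection `ℝⁿ × ℝᵖ → ℝ^{n-1} × ℝᵖ`, `(x, t) ↦ ((x₁, …, x_{n−1}), t)`,
for `n = m + 1`. -/
def dropLastProjR (m p : ℕ) :
    ((Fin (m + 1) → ℝ) × (Fin p → ℝ)) → ((Fin m → ℝ) × (Fin p → ℝ)) :=
  fun xt => (xt.1 ∘ Fin.castSucc, xt.2)

/-!
If `P` is close to `(X - b) ^ p`, the mean `c` of its roots is a polynomial function of its
coefficients, and translating by `c` turns `P` into a polynomial `Q` close to `X ^ p`. Expand `g` in
a Taylor series at `c` in the last variable and divide each monomial `X ^ k` by `Q`. On a Banach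
space of power series, division by `Q` is the inverse of the operator `X ^ p * d + r ↦ Q * d + r`
(with `deg r < p`), which is close to the identity; as inversion of operators is analytic, so are
the quotient and the remainder. They are given by one formula in `g` and `P`, so no gluing
is needed.
-/

namespace AnalyticDivision

open Filter Polynomial
open scoped BoundedContinuousFunction ENNReal NNReal Topology

section SeriesOfAnalyticFunctions

variable {𝕜 E F ι : Type*} [NontriviallyNormedField 𝕜] [NormedAddCommGroup E] [NormedSpace 𝕜 E]
  [NormedAddCommGroup F] [NormedSpace 𝕜 F] [CompleteSpace F]
  {f : ι → E → F} {P : ι → FormalMultilinearSeries 𝕜 E F} {x y : E} {R : ℝ≥0}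

theorem summable_apply_of_summable_norm_mul_pow
    (hs : Summable fun kn : ι × ℕ => ‖P kn.1 kn.2‖ * (R : ℝ) ^ kn.2)
    (hy : y ∈ Metric.eball (0 : E) R) : Summable fun kn : ι × ℕ => P kn.1 kn.2 fun _ => y := by
  have hyR : ‖y‖ < R := by simpa using hy
  refine Summable.of_norm_bounded hs fun kn => ((P kn.1 kn.2).le_opNorm _).trans ?_
  simp only [Finset.prod_const, Finset.card_univ, Fintype.card_fin]
  gcongr

theorem hasSum_apply_of_summable_norm_mul_pow
    (hf : ∀ k, HasFPowerSeriesOnBall (f k) (P k) x R)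
    (hs : Summable fun kn : ι × ℕ => ‖P kn.1 kn.2‖ * (R : ℝ) ^ kn.2)
    (hy : y ∈ Metric.eball (0 : E) R) :
    HasSum (fun k => f k (x + y)) (∑' kn : ι × ℕ, P kn.1 kn.2 fun _ => y) :=
  (summable_apply_of_summable_norm_mul_pow hs hy).hasSum.prod_fiberwise fun k => (hf k).hasSum hy

theorem hasFPowerSeriesOnBall_tsum (hR : 0 < R)
    (hf : ∀ k, HasFPowerSeriesOnBall (f k) (P k) x R)
    (hs : Summable fun kn : ι × ℕ => ‖P kn.1 kn.2‖ * (R : ℝ) ^ kn.2) :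
    HasFPowerSeriesOnBall (fun y => ∑' k, f k y) (fun n => ∑' k, P k n) x R := by
  have hs' : Summable fun nk : ℕ × ι => ‖P nk.2 nk.1‖ * (R : ℝ) ^ nk.1 :=
    (Equiv.prodComm ℕ ι).summable_iff.mpr hs
  have hP : ∀ n, Summable fun k => ‖P k n‖ := fun n =>
    (summable_mul_right_iff (by positivity : (R : ℝ) ^ n ≠ 0)).mp (hs'.prod_factor n)
  refine ⟨FormalMultilinearSeries.le_radius_of_summable _ ?_, mod_cast hR, fun {y} hy => ?_⟩
  · refine Summable.of_nonneg_of_le (fun n => by positivity) (fun n => ?_) hs'.prod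
    exact (mul_le_mul_of_nonneg_right (norm_tsum_le_tsum_norm (hP n)) (by positivity)).trans_eq
      tsum_mul_right.symm
  · have hsum : HasSum (fun nk : ℕ × ι => P nk.2 nk.1 fun _ => y)
        (∑' kn : ι × ℕ, P kn.1 kn.2 fun _ => y) :=
      (Equiv.prodComm ℕ ι).hasSum_iff.mpr (summable_apply_of_summable_norm_mul_pow hs hy).hasSum
    rw [(hasSum_apply_of_summable_norm_mul_pow hf hs hy).tsum_eq]
    exact hsum.prod_fiberwise fun n => ContinuousMultilinearMap.hasSum_eval (hP n).of_norm.hasSum _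

theorem summable_of_summable_norm_mul_pow
    (hf : ∀ k, HasFPowerSeriesOnBall (f k) (P k) x R)
    (hs : Summable fun kn : ι × ℕ => ‖P kn.1 kn.2‖ * (R : ℝ) ^ kn.2)
    (hy : y ∈ Metric.eball x R) : Summable fun k => f k y := by
  have hyx : y - x ∈ Metric.eball (0 : E) R := by
    rwa [Metric.mem_eball, edist_zero_right, ← edist_eq_enorm_sub]
  simpa using (hasSum_apply_of_summable_norm_mul_pow hf hs hyx).summable

end SeriesOfAnalyticFunctions

section TaylorCoefficients

variable {𝕜 E F : Type*} [NontriviallyNormedField 𝕜] [NormedAddCommGroup E] [NormedSpace 𝕜 E]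
  [NormedAddCommGroup F] [NormedSpace 𝕜 F]

theorem summable_norm_changeOriginSeries_mul_pow (p : FormalMultilinearSeries 𝕜 E F) {r s : ℝ≥0}
    (h : (r + s : ℝ≥0∞) < p.radius) :
    Summable fun kl : ℕ × ℕ => ‖p.changeOriginSeries kl.1 kl.2‖ * (r : ℝ) ^ kl.2 * s ^ kl.1 := by
  have hsigma := (NNReal.summable_sigma.1 ((Equiv.sigmaAssoc fun k l : ℕ =>
    { s : Finset (Fin (k + l)) // s.card = l }).summable_iff.mpr
      (p.changeOriginSeries_summable_aux₁ h))).2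
  have hprod := (Equiv.sigmaEquivProd ℕ ℕ).symm.summable_iff.mpr hsigma
  suffices Summable fun kl : ℕ × ℕ => ‖p.changeOriginSeries kl.1 kl.2‖₊ * r ^ kl.2 * s ^ kl.1 from
    by simpa using NNReal.summable_coe.mpr this
  refine NNReal.summable_of_le (fun kl => ?_) hprod
  calc ‖p.changeOriginSeries kl.1 kl.2‖₊ * r ^ kl.2 * s ^ kl.1
      ≤ (∑' _ : { s : Finset (Fin (kl.1 + kl.2)) // s.card = kl.2 }, ‖p (kl.1 + kl.2)‖₊) *
          r ^ kl.2 * s ^ kl.1 := by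
        gcongr
        exact p.nnnorm_changeOriginSeries_le_tsum kl.1 kl.2
    _ = _ := by
        rw [← NNReal.tsum_mul_right, ← NNReal.tsum_mul_right]
        rfl

variable (𝕜) in
/-- The `k`-th Taylor coefficient of `g` in the direction `e`, so that
`g (y + z • e) = ∑ k, taylorCoeff 𝕜 g e y k * z ^ k` for small `z` when `g` is analytic. -/
noncomputable def taylorCoeff (g : E → 𝕜) (e y : E) (k : ℕ) : 𝕜 :=
  (k.factorial : 𝕜)⁻¹ * iteratedFDeriv 𝕜 k g y fun _ => e

/-- The continuous linear map `M ↦ M(e, …, e) • w` on `k`-linear forms. -/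
noncomputable def applyDiagSMulRight (e : E) (w : F) (k : ℕ) : (E [×k]→L[𝕜] 𝕜) →L[𝕜] F :=
  (ContinuousMultilinearMap.apply 𝕜 (fun _ : Fin k => E) 𝕜 fun _ => e).smulRight w

theorem norm_applyDiagSMulRight_le (e : E) (w : F) (k : ℕ) :
    ‖(applyDiagSMulRight e w k : (E [×k]→L[𝕜] 𝕜) →L[𝕜] F)‖ ≤ ‖e‖ ^ k * ‖w‖ := by
  refine ContinuousLinearMap.opNorm_le_bound _ (by positivity) fun M => ?_
  have hM : ‖M fun _ => e‖ ≤ ‖M‖ * ‖e‖ ^ k := by simpa using M.le_opNorm fun _ => e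
  calc ‖(M fun _ => e) • w‖ = ‖M fun _ => e‖ * ‖w‖ := norm_smul _ _
    _ ≤ ‖M‖ * ‖e‖ ^ k * ‖w‖ := by gcongr
    _ = ‖e‖ ^ k * ‖w‖ * ‖M‖ := by ring

variable [CompleteSpace 𝕜] [CharZero 𝕜] {g : E → 𝕜} {x y e : E} {p : FormalMultilinearSeries 𝕜 E 𝕜}

theorem taylorCoeff_eq {r : ℝ≥0∞} (hg : HasFPowerSeriesOnBall g p y r) (e : E) (k : ℕ) :
    taylorCoeff 𝕜 g e y k = p k fun _ => e := by
  rw [taylorCoeff, ← hg.factorial_smul e k, nsmul_eq_mul,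
    inv_mul_cancel_left₀ (mod_cast k.factorial_ne_zero)]

theorem hasSum_taylorCoeff_mul_pow {r : ℝ≥0∞} (hg : HasFPowerSeriesOnBall g p y r) {z : 𝕜}
    (hz : z • e ∈ Metric.eball (0 : E) r) :
    HasSum (fun k => taylorCoeff 𝕜 g e y k * z ^ k) (g (y + z • e)) := by
  simpa only [ContinuousMultilinearMap.map_smul_univ, Finset.prod_const, Finset.card_univ,
    Fintype.card_fin, smul_eq_mul, taylorCoeff_eq hg, mul_comm] using hg.hasSum hz

theorem eventually_hasSum_taylorCoeff_mul_pow (hg : AnalyticAt 𝕜 g x) (e : E) :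
    ∀ᶠ yz : E × 𝕜 in 𝓝 (x, 0),
      HasSum (fun k => taylorCoeff 𝕜 g e yz.1 k * yz.2 ^ k) (g (yz.1 + yz.2 • e)) := by
  obtain ⟨p, r, hp⟩ := hg
  have hnear : ∀ᶠ yz : E × 𝕜 in 𝓝 (x, 0), ‖yz.1 - x‖ₑ + ‖yz.2 • e‖ₑ < r := by
    have hcont : ContinuousAt (fun yz : E × 𝕜 => ‖yz.1 - x‖ₑ + ‖yz.2 • e‖ₑ) (x, 0) := by
      fun_prop
    exact hcont.eventually (gt_mem_nhds (by simpa using hp.r_pos))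
  filter_upwards [hnear] with ⟨y, z⟩ hyz
  have hy : (‖y - x‖₊ : ℝ≥0∞) < r := lt_of_le_of_lt le_self_add hyz
  have hball := hp.changeOrigin hy
  rw [add_sub_cancel] at hball
  refine hasSum_taylorCoeff_mul_pow hball ?_
  rw [Metric.mem_eball, edist_zero_right, lt_tsub_iff_left]
  exact hyz

theorem exists_analyticAt_hasSum_taylorCoeff_smul_of_norm_le [CompleteSpace F] {r : ℝ≥0∞} {ρ : ℝ≥0}
    (hg : HasFPowerSeriesOnBall g p x r)
    (hρ : 0 < ρ) (hρr : (ρ + ρ : ℝ≥0∞) < r) {w : ℕ → F} (hw : ∀ k, ‖e‖ ^ k * ‖w k‖ ≤ ρ ^ k) :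
    ∃ A : E → F, AnalyticAt 𝕜 A x ∧
      ∀ᶠ y in 𝓝 x, HasSum (fun k => taylorCoeff 𝕜 g e y k • w k) (A y) := by
  have hρp : (ρ + ρ : ℝ≥0∞) < p.radius := hρr.trans_le hg.r_le
  let Λ (k : ℕ) : (E [×k]→L[𝕜] 𝕜) →L[𝕜] F := applyDiagSMulRight e (w k) k
  let P (k : ℕ) := (Λ k).compFormalMultilinearSeries (p.changeOriginSeries k)
  have hP : ∀ k, HasFPowerSeriesOnBall (fun y => Λ k (p.changeOrigin (y - x) k)) (P k) x ρ := by
    intro k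
    have hk := (p.hasFPowerSeriesOnBall_changeOrigin k (pos_of_gt hρp)).mono
      (mod_cast hρ) (le_self_add.trans hρp.le)
    simpa [Function.comp_def] using ((Λ k).comp_hasFPowerSeriesOnBall hk).comp_sub x
  have hPs : Summable fun kn : ℕ × ℕ => ‖P kn.1 kn.2‖ * (ρ : ℝ) ^ kn.2 := by
    refine Summable.of_nonneg_of_le (fun _ => by positivity) (fun kn => ?_)
      (summable_norm_changeOriginSeries_mul_pow p hρp)
    have hΛ : ‖Λ kn.1‖ ≤ ρ ^ kn.1 := (norm_applyDiagSMulRight_le e (w kn.1) kn.1).trans (hw kn.1)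
    calc ‖P kn.1 kn.2‖ * (ρ : ℝ) ^ kn.2
        ≤ ‖Λ kn.1‖ * ‖p.changeOriginSeries kn.1 kn.2‖ * ρ ^ kn.2 := by
          gcongr
          exact (Λ kn.1).norm_compContinuousMultilinearMap_le _
      _ ≤ ρ ^ kn.1 * ‖p.changeOriginSeries kn.1 kn.2‖ * ρ ^ kn.2 := by gcongr
      _ = _ := by ring
  refine ⟨_, (hasFPowerSeriesOnBall_tsum hρ hP hPs).analyticAt, ?_⟩
  filter_upwards [Metric.eball_mem_nhds x (by exact_mod_cast hρ : (0 : ℝ≥0∞) < ρ)] with y hy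
  convert (summable_of_summable_norm_mul_pow hP hPs hy).hasSum using 3 with k
  have hyx : (‖y - x‖₊ : ℝ≥0∞) < r := by
    rw [Metric.mem_eball, edist_eq_enorm_sub] at hy
    exact hy.trans (le_self_add.trans_lt hρr)
  have hy := hg.changeOrigin hyx
  rw [add_sub_cancel] at hy
  rw [taylorCoeff_eq hy]
  rfl

theorem exists_analyticAt_hasSum_taylorCoeff_smul [CompleteSpace F] (hg : AnalyticAt 𝕜 g x)
    (e : E) :
    ∃ ρ : ℝ, 0 < ρ ∧ ∀ w : ℕ → F, (∀ k, ‖w k‖ ≤ ρ ^ k) → ∃ A : E → F, AnalyticAt 𝕜 A x ∧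
      ∀ᶠ y in 𝓝 x, HasSum (fun k => taylorCoeff 𝕜 g e y k • w k) (A y) := by
  obtain ⟨p, r, hp⟩ := hg
  obtain ⟨a, ha, har⟩ := ENNReal.lt_iff_exists_nnreal_btwn.mp hp.r_pos
  have ha0 : 0 < a / 2 := half_pos (mod_cast ha)
  have har' : ((a / 2 : ℝ≥0) + (a / 2 : ℝ≥0) : ℝ≥0∞) < r := by
    rwa [← ENNReal.coe_add, add_halves]
  set R := a / 2
  refine ⟨R / (‖e‖ + 1), by positivity, fun w hw =>
    exists_analyticAt_hasSum_taylorCoeff_smul_of_norm_le hp ha0 har' fun k => ?_⟩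
  calc ‖e‖ ^ k * ‖w k‖ ≤ (‖e‖ + 1) ^ k * (R / (‖e‖ + 1)) ^ k := by
        gcongr
        · exact le_add_of_nonneg_right zero_le_one
        · exact hw k
    _ = R ^ k := by rw [← mul_pow, mul_div_cancel₀ _ (by positivity)]

end TaylorCoefficients

section ShiftModels

/-- A normed-space model of power series in one variable: `shift` is multiplication by the
variable, `one` is the constant series `1`, and `unshift` drops the constant coefficient and divides
by the variable. -/
structure ShiftModel (𝕜 F : Type*) [NontriviallyNormedField 𝕜] [NormedAddCommGroup F]
    [NormedSpace 𝕜 F] where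
  shift : F →L[𝕜] F
  unshift : F →L[𝕜] F
  one : F
  constCoeff : F →L[𝕜] 𝕜
  unshift_shift (v : F) : unshift (shift v) = v
  unshift_one : unshift one = 0
  constCoeff_shift (v : F) : constCoeff (shift v) = 0
  constCoeff_one : constCoeff one = 1

variable {𝕜 F : Type*} [NontriviallyNormedField 𝕜] [NormedAddCommGroup F] [NormedSpace 𝕜 F]

theorem coeff_iterate_divX {R : Type*} [Semiring R] (f : R[X]) (n k : ℕ) :
    (divX^[n] f).coeff k = f.coeff (k + n) := by
  induction n generalizing k with
  | zero => rfl
  | succ n ih => rw [Function.iterate_succ_apply', coeff_divX, ih, add_right_comm, add_assoc]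

theorem iterate_divX_X_pow_mul_add {R : Type*} [Semiring R] {n : ℕ} (d : R[X]) {r : R[X]}
    (hr : r.degree < n) : divX^[n] (X ^ n * d + r) = d := by
  ext k
  have hrk : r.coeff (k + n) = 0 :=
    coeff_eq_zero_of_degree_lt (hr.trans_le (mod_cast Nat.le_add_left n k))
  rw [coeff_iterate_divX, coeff_add, coeff_X_pow_mul, hrk, add_zero]

theorem degree_modByMonic_lt_natDegree {R : Type*} [CommRing R] [Nontrivial R] (f : R[X])
    {Q : R[X]} (hQ : Q.Monic) : (f %ₘ Q).degree < Q.natDegree :=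
  (degree_modByMonic_lt f hQ).trans_le degree_le_natDegree

namespace ShiftModel

section Polynomials

variable (M : ShiftModel 𝕜 F)

/-- The polynomial `∑ aᵢ Xⁱ` as the vector `∑ aᵢ • shiftⁱ one` of the model. -/
noncomputable def ofPoly : 𝕜[X] →ₗ[𝕜] F where
  toFun f := aeval M.shift f M.one
  map_add' f g := by simp
  map_smul' c f := by simp

theorem ofPoly_apply (f : 𝕜[X]) : M.ofPoly f = aeval M.shift f M.one := rfl

theorem ofPoly_mul (f g : 𝕜[X]) : M.ofPoly (f * g) = aeval M.shift f (M.ofPoly g) := by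
  simp [ofPoly_apply]

theorem ofPoly_X_mul (f : 𝕜[X]) : M.ofPoly (X * f) = M.shift (M.ofPoly f) := by
  rw [ofPoly_mul, aeval_X]

theorem ofPoly_C (a : 𝕜) : M.ofPoly (C a) = a • M.one := by
  rw [ofPoly_apply, aeval_C]
  rfl

theorem ofPoly_eq_shift_add (f : 𝕜[X]) :
    M.ofPoly f = M.shift (M.ofPoly f.divX) + f.coeff 0 • M.one := by
  rw [← ofPoly_X_mul, ← ofPoly_C, ← map_add, X_mul, divX_mul_X_add]

theorem unshift_ofPoly (f : 𝕜[X]) : M.unshift (M.ofPoly f) = M.ofPoly f.divX := by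
  rw [ofPoly_eq_shift_add M f, map_add, map_smul, M.unshift_shift, M.unshift_one, smul_zero,
    add_zero]

theorem unshift_pow_ofPoly (f : 𝕜[X]) (n : ℕ) :
    (M.unshift ^ n) (M.ofPoly f) = M.ofPoly (divX^[n] f) := by
  induction n with
  | zero => rfl
  | succ n ih =>
    rw [pow_succ', mul_apply_eq_comp, ih, unshift_ofPoly, Function.iterate_succ_apply']

theorem constCoeff_ofPoly (f : 𝕜[X]) : M.constCoeff (M.ofPoly f) = f.coeff 0 := by
  rw [ofPoly_eq_shift_add, map_add, map_smul, M.constCoeff_shift, M.constCoeff_one, zero_add,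
    smul_eq_mul, mul_one]

theorem constCoeff_unshift_pow_ofPoly (f : 𝕜[X]) (n : ℕ) :
    M.constCoeff ((M.unshift ^ n) (M.ofPoly f)) = f.coeff n := by
  rw [unshift_pow_ofPoly, constCoeff_ofPoly, coeff_iterate_divX, zero_add]

/-- The operator `(1 - z • unshift)⁻¹`, whose constant coefficient is evaluation at `z`; it is `0`
when `1 - z • unshift` is not invertible. -/
noncomputable def resolvent (z : 𝕜) : F →L[𝕜] F := Ring.inverse (1 - z • M.unshift)

theorem resolvent_apply {z : 𝕜} (hz : IsUnit (1 - z • M.unshift)) (v : F) :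
    M.resolvent z v = v + z • M.resolvent z (M.unshift v) := by
  have h : M.resolvent z (v - z • M.unshift v) = v :=
    DFunLike.congr_fun (Ring.inverse_mul_cancel _ hz) v
  rw [map_sub, map_smul, sub_eq_iff_eq_add] at h
  exact h

theorem constCoeff_resolvent_ofPoly {z : 𝕜} (hz : IsUnit (1 - z • M.unshift)) (f : 𝕜[X]) :
    M.constCoeff (M.resolvent z (M.ofPoly f)) = f.eval z := by
  induction f using Polynomial.induction_on with
  | C a =>
    rw [resolvent_apply M hz, unshift_ofPoly, divX_C, map_zero, map_zero, smul_zero, add_zero,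
      constCoeff_ofPoly, coeff_C_zero, eval_C]
  | add f g hf hg => rw [map_add, map_add, map_add, hf, hg, eval_add]
  | monomial n a ih =>
    rw [pow_succ', mul_left_comm, ofPoly_X_mul, resolvent_apply M hz, M.unshift_shift, map_add,
      M.constCoeff_shift, zero_add, map_smul, ih, eval_mul (p := X), eval_X, smul_eq_mul]

/-- The operator `X ^ p * d + r ↦ Q * d + r`, where `p = deg Q` and `deg r < p`, on the model. -/
noncomputable def divisionOperator (Q : 𝕜[X]) : F →L[𝕜] F :=
  1 + (aeval M.shift Q - M.shift ^ Q.natDegree) * M.unshift ^ Q.natDegree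

theorem divisionOperator_X_pow (p : ℕ) : M.divisionOperator (X ^ p) = 1 := by
  rw [divisionOperator, natDegree_X_pow, map_pow, aeval_X, sub_self, zero_mul, add_zero]

theorem divisionOperator_ofPoly (Q d : 𝕜[X]) {r : 𝕜[X]} (hr : r.degree < Q.natDegree) :
    M.divisionOperator Q (M.ofPoly (X ^ Q.natDegree * d + r)) = M.ofPoly (Q * d + r) := by
  have hlow : (M.unshift ^ Q.natDegree) (M.ofPoly (X ^ Q.natDegree * d + r)) = M.ofPoly d := by
    rw [unshift_pow_ofPoly, iterate_divX_X_pow_mul_add d hr]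
  calc M.divisionOperator Q (M.ofPoly (X ^ Q.natDegree * d + r))
      = M.ofPoly (X ^ Q.natDegree * d + r) +
          (aeval M.shift Q (M.ofPoly d) - (M.shift ^ Q.natDegree) (M.ofPoly d)) := by
        simp only [divisionOperator, add_apply, one_apply_eq_self,
          mul_apply_eq_comp, sub_apply, hlow]
    _ = M.ofPoly (X ^ Q.natDegree * d + r) +
          (M.ofPoly (Q * d) - M.ofPoly (X ^ Q.natDegree * d)) := by
        simp only [ofPoly_mul, map_pow, aeval_X]
    _ = M.ofPoly (Q * d + r) := by
        rw [← map_sub, ← map_add]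
        congr 1
        ring

theorem inverse_divisionOperator_ofPoly {Q : 𝕜[X]} (hQ : Q.Monic)
    (hU : IsUnit (M.divisionOperator Q)) (f : 𝕜[X]) :
    Ring.inverse (M.divisionOperator Q) (M.ofPoly f) =
      M.ofPoly (X ^ Q.natDegree * (f /ₘ Q) + f %ₘ Q) := by
  have h := M.divisionOperator_ofPoly Q (f /ₘ Q) (degree_modByMonic_lt_natDegree f hQ)
  rw [add_comm (Q * _), modByMonic_add_div] at h
  rw [← h]
  exact DFunLike.congr_fun (Ring.inverse_mul_cancel _ hU) _

theorem constCoeff_unshift_pow_inverse_divisionOperator {Q : 𝕜[X]} (hQ : Q.Monic)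
    (hU : IsUnit (M.divisionOperator Q)) (f : 𝕜[X]) {i : ℕ} (hi : i < Q.natDegree) :
    M.constCoeff ((M.unshift ^ i) (Ring.inverse (M.divisionOperator Q) (M.ofPoly f))) =
      (f %ₘ Q).coeff i := by
  rw [inverse_divisionOperator_ofPoly M hQ hU, constCoeff_unshift_pow_ofPoly, coeff_add,
    coeff_X_pow_mul', if_neg hi.not_ge, zero_add]

theorem constCoeff_resolvent_inverse_divisionOperator {Q : 𝕜[X]} (hQ : Q.Monic)
    (hU : IsUnit (M.divisionOperator Q)) {z : 𝕜} (hz : IsUnit (1 - z • M.unshift)) (f : 𝕜[X]) :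
    M.constCoeff (M.resolvent z ((M.unshift ^ Q.natDegree)
      (Ring.inverse (M.divisionOperator Q) (M.ofPoly f)))) = (f /ₘ Q).eval z := by
  rw [inverse_divisionOperator_ofPoly M hQ hU, unshift_pow_ofPoly,
    iterate_divX_X_pow_mul_add _ (degree_modByMonic_lt_natDegree f hQ),
    constCoeff_resolvent_ofPoly M hz]

end Polynomials

section BoundedSequences

/-- Prepending the entry `0` to a bounded sequence. -/
noncomputable def consZero : (ℕ →ᵇ 𝕜) →L[𝕜] ℕ →ᵇ 𝕜 :=
  LinearMap.mkContinuous
    { toFun := fun f => BoundedContinuousFunction.ofNormedAddCommGroupDiscrete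
        (fun n => n.casesOn 0 f) ‖f‖ (by rintro (_ | n) <;> simp [f.norm_coe_le_norm])
      map_add' := fun f g => by ext (_ | n) <;> simp
      map_smul' := fun c f => by ext (_ | n) <;> simp } 1 fun f => by
    rw [one_mul]
    refine (BoundedContinuousFunction.norm_le (norm_nonneg f)).mpr ?_
    rintro (_ | n) <;> simp [f.norm_coe_le_norm]

@[simp]
theorem consZero_apply_zero (f : ℕ →ᵇ 𝕜) : consZero f 0 = 0 := rfl

@[simp]
theorem consZero_apply_succ (f : ℕ →ᵇ 𝕜) (n : ℕ) : consZero f (n + 1) = f n := rfl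

theorem norm_consZero_le (f : ℕ →ᵇ 𝕜) : ‖consZero f‖ ≤ ‖f‖ := by
  refine (BoundedContinuousFunction.norm_le (norm_nonneg f)).mpr ?_
  rintro (_ | n) <;> simp [f.norm_coe_le_norm]

/-- Bounded sequences as a model in which the sequence `b` stands for the power series
`∑ bₙ c⁻ⁿ Xⁿ`, so that `Xᵏ` has norm at most `‖c‖ᵏ`. -/
noncomputable def boundedSeq {c : 𝕜} (hc : c ≠ 0) : ShiftModel 𝕜 (ℕ →ᵇ 𝕜) where
  shift := c • consZero
  unshift := c⁻¹ • BoundedContinuousFunction.compContinuousCLM 𝕜 𝕜 ⟨Nat.succ, by fun_prop⟩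
  one := BoundedContinuousFunction.ofNormedAddCommGroupDiscrete (Pi.single 0 1) 1
    (by rintro (_ | n) <;> simp)
  constCoeff := BoundedContinuousFunction.evalCLM 𝕜 0
  unshift_shift v := by ext n; simp [hc]
  unshift_one := by ext n; simp
  constCoeff_shift v := by simp
  constCoeff_one := by simp

theorem norm_boundedSeq_ofPoly_X_pow_le {c : 𝕜} (hc : c ≠ 0) (k : ℕ) :
    ‖(boundedSeq hc).ofPoly (X ^ k)‖ ≤ ‖c‖ ^ k := by
  induction k with
  | zero =>
    rw [pow_zero, pow_zero, ← C_1, ofPoly_C, one_smul]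
    refine (BoundedContinuousFunction.norm_le zero_le_one).mpr ?_
    rintro (_ | n) <;> simp [boundedSeq]
  | succ k ih =>
    rw [pow_succ', ofPoly_X_mul]
    calc ‖c • consZero ((boundedSeq hc).ofPoly (X ^ k))‖
        = ‖c‖ * ‖consZero ((boundedSeq hc).ofPoly (X ^ k))‖ := norm_smul _ _
      _ ≤ ‖c‖ * ‖c‖ ^ k := by
        gcongr
        exact (norm_consZero_le _).trans ih
      _ = ‖c‖ ^ (k + 1) := (pow_succ' _ _).symm

end BoundedSequences

end ShiftModel

end ShiftModels

section DivisionOfSeries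

variable {𝕜 F : Type*} [NontriviallyNormedField 𝕜] [NormedAddCommGroup F] [NormedSpace 𝕜 F]

theorem eval_eq_sum_range_of_degree_lt {R : Type*} [Semiring R] {f : R[X]} {n : ℕ}
    (hf : f.degree < n) (z : R) : f.eval z = ∑ i ∈ Finset.range n, f.coeff i * z ^ i := by
  rcases eq_or_ne f 0 with rfl | hf0
  · simp
  · exact eval_eq_sum_range' ((natDegree_lt_iff_degree_lt hf0).mpr hf) z

/-- The quotient of the power series `∑ aₖ Xᵏ` by the polynomial `Q`, evaluated at `z`. The
monomials are divided one by one, so this is meaningful when the resulting series converges. -/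
noncomputable def seriesDiv (a : ℕ → 𝕜) (Q : 𝕜[X]) (z : 𝕜) : 𝕜 :=
  ∑' k, a k * (X ^ k /ₘ Q).eval z

/-- The remainder of the power series `∑ aₖ Xᵏ` modulo the polynomial `Q`. The monomials are
divided one by one, so this is meaningful when the resulting series of coefficients converge. -/
noncomputable def seriesMod (a : ℕ → 𝕜) (Q : 𝕜[X]) : 𝕜[X] :=
  ∑ i ∈ Finset.range Q.natDegree, monomial i (∑' k, a k * (X ^ k %ₘ Q).coeff i)

variable {a : ℕ → 𝕜} {Q : 𝕜[X]}

theorem coeff_seriesMod (i : ℕ) :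
    (seriesMod a Q).coeff i =
      if i < Q.natDegree then ∑' k, a k * (X ^ k %ₘ Q).coeff i else 0 := by
  simp [seriesMod, coeff_monomial]

theorem degree_seriesMod_lt : (seriesMod a Q).degree < Q.natDegree :=
  (degree_lt_iff_coeff_zero _ _).mpr fun i hi => by rw [coeff_seriesMod, if_neg hi.not_gt]

variable {M : ShiftModel 𝕜 F} {A : F}

theorem hasSum_coeff_modByMonic (hA : HasSum (fun k => a k • M.ofPoly (X ^ k)) A) (hQ : Q.Monic)
    (hU : IsUnit (M.divisionOperator Q)) {i : ℕ} (hi : i < Q.natDegree) :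
    HasSum (fun k => a k * (X ^ k %ₘ Q).coeff i)
      (M.constCoeff ((M.unshift ^ i) (Ring.inverse (M.divisionOperator Q) A))) := by
  have h := (M.constCoeff ∘L (M.unshift ^ i) ∘L Ring.inverse (M.divisionOperator Q)).hasSum hA
  simpa only [map_smul, ContinuousLinearMap.comp_apply, smul_eq_mul,
    M.constCoeff_unshift_pow_inverse_divisionOperator hQ hU _ hi] using h

theorem hasSum_eval_divByMonic (hA : HasSum (fun k => a k • M.ofPoly (X ^ k)) A) (hQ : Q.Monic)
    (hU : IsUnit (M.divisionOperator Q)) {z : 𝕜} (hz : IsUnit (1 - z • M.unshift)) :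
    HasSum (fun k => a k * (X ^ k /ₘ Q).eval z)
      (M.constCoeff (M.resolvent z ((M.unshift ^ Q.natDegree)
        (Ring.inverse (M.divisionOperator Q) A)))) := by
  have h := (M.constCoeff ∘L M.resolvent z ∘L (M.unshift ^ Q.natDegree) ∘L
    Ring.inverse (M.divisionOperator Q)).hasSum hA
  simpa only [map_smul, ContinuousLinearMap.comp_apply, smul_eq_mul,
    M.constCoeff_resolvent_inverse_divisionOperator hQ hU hz] using h

theorem coeff_seriesMod_eq (hA : HasSum (fun k => a k • M.ofPoly (X ^ k)) A) (hQ : Q.Monic)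
    (hU : IsUnit (M.divisionOperator Q)) {i : ℕ} (hi : i < Q.natDegree) :
    (seriesMod a Q).coeff i =
      M.constCoeff ((M.unshift ^ i) (Ring.inverse (M.divisionOperator Q) A)) := by
  rw [coeff_seriesMod, if_pos hi, (hasSum_coeff_modByMonic hA hQ hU hi).tsum_eq]

theorem hasSum_eval_modByMonic (hA : HasSum (fun k => a k • M.ofPoly (X ^ k)) A) (hQ : Q.Monic)
    (hU : IsUnit (M.divisionOperator Q)) (z : 𝕜) :
    HasSum (fun k => a k * (X ^ k %ₘ Q).eval z) ((seriesMod a Q).eval z) := by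
  simp only [eval_eq_sum_range_of_degree_lt (degree_modByMonic_lt_natDegree _ hQ),
    eval_eq_sum_range_of_degree_lt degree_seriesMod_lt, Finset.mul_sum, ← mul_assoc]
  refine hasSum_sum fun i hi => HasSum.mul_right _ ?_
  have hi := Finset.mem_range.mp hi
  rw [coeff_seriesMod_eq hA hQ hU hi]
  exact hasSum_coeff_modByMonic hA hQ hU hi

theorem eq_seriesDiv_mul_add_seriesMod (hA : HasSum (fun k => a k • M.ofPoly (X ^ k)) A)
    (hQ : Q.Monic) (hU : IsUnit (M.divisionOperator Q)) {s z : 𝕜}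
    (hz : IsUnit (1 - z • M.unshift)) (hs : HasSum (fun k => a k * z ^ k) s) :
    s = seriesDiv a Q z * Q.eval z + (seriesMod a Q).eval z := by
  have hk (k : ℕ) :
      a k * (X ^ k /ₘ Q).eval z * Q.eval z + a k * (X ^ k %ₘ Q).eval z = a k * z ^ k := by
    have h := congrArg (eval z) (modByMonic_add_div (X ^ k) Q)
    rw [eval_add, eval_mul, eval_pow, eval_X] at h
    rw [← h]
    ring
  refine hs.unique ?_
  simpa only [hk, seriesDiv] using
    ((hasSum_eval_divByMonic hA hQ hU hz).summable.hasSum.mul_right (Q.eval z)).add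
      (hasSum_eval_modByMonic hA hQ hU z)

end DivisionOfSeries

section AnalyticFamilies

variable {𝕜 F V : Type*} [NontriviallyNormedField 𝕜] [NormedAddCommGroup F] [NormedSpace 𝕜 F]
  [NormedAddCommGroup V] [NormedSpace 𝕜 V] {v₀ : V}

theorem analyticAt_inverse_apply [CompleteSpace F] {T : V → F →L[𝕜] F} {w : V → F}
    (hT : AnalyticAt 𝕜 T v₀) (hT₀ : IsUnit (T v₀)) (hw : AnalyticAt 𝕜 w v₀) :
    AnalyticAt 𝕜 (fun v => Ring.inverse (T v) (w v)) v₀ := by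
  obtain ⟨u, hu⟩ := hT₀
  have hinv : AnalyticAt 𝕜 Ring.inverse (T v₀) := hu ▸ analyticAt_inverse u
  exact ((ContinuousLinearMap.id 𝕜 (F →L[𝕜] F)).analyticAt_bilinear _).comp₂ (hinv.comp hT) hw

variable {a : V → ℕ → 𝕜} {Q : V → 𝕜[X]} {p : ℕ} {A : V → F} (M : ShiftModel 𝕜 F)

theorem analyticAt_divisionOperator (hp : ∀ v, (Q v).natDegree = p)
    (hQ : ∀ i, AnalyticAt 𝕜 (fun v => (Q v).coeff i) v₀) :
    AnalyticAt 𝕜 (fun v => M.divisionOperator (Q v)) v₀ := by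
  have haeval (v : V) : aeval M.shift (Q v) =
      ∑ i ∈ Finset.range (p + 1), (Q v).coeff i • M.shift ^ i :=
    aeval_eq_sum_range' (Nat.lt_succ_of_le (hp v).le) _
  simp only [ShiftModel.divisionOperator, haeval, hp]
  have := Finset.analyticAt_fun_sum (Finset.range (p + 1)) fun i _ =>
    (hQ i).smul (analyticAt_const (v := M.shift ^ i))
  fun_prop

variable [CompleteSpace F]

theorem eventually_isUnit_divisionOperator (hp : ∀ v, (Q v).natDegree = p)
    (hQ : ∀ i, AnalyticAt 𝕜 (fun v => (Q v).coeff i) v₀) (hQ₀ : Q v₀ = X ^ p) :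
    ∀ᶠ v in 𝓝 v₀, IsUnit (M.divisionOperator (Q v)) := by
  have h₁ : IsUnit (M.divisionOperator (Q v₀)) := by
    rw [hQ₀, M.divisionOperator_X_pow]
    exact isUnit_one
  exact (analyticAt_divisionOperator M hp hQ).continuousAt.eventually (Units.isOpen.mem_nhds h₁)

theorem eventually_isUnit_one_sub_smul (T : F →L[𝕜] F) : ∀ᶠ z : 𝕜 in 𝓝 0, IsUnit (1 - z • T) := by
  have hcont : ContinuousAt (fun z : 𝕜 => 1 - z • T) 0 := by fun_prop
  refine hcont.eventually (Units.isOpen.mem_nhds ?_)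
  simp

theorem analyticAt_inverse_divisionOperator (hp : ∀ v, (Q v).natDegree = p)
    (hQ : ∀ i, AnalyticAt 𝕜 (fun v => (Q v).coeff i) v₀) (hQ₀ : Q v₀ = X ^ p)
    (hA : AnalyticAt 𝕜 A v₀) :
    AnalyticAt 𝕜 (fun v => Ring.inverse (M.divisionOperator (Q v)) (A v)) v₀ :=
  analyticAt_inverse_apply (analyticAt_divisionOperator M hp hQ)
    (eventually_isUnit_divisionOperator M hp hQ hQ₀).self_of_nhds hA

variable {M} {z : V → 𝕜} (hQm : ∀ v, (Q v).Monic) (hp : ∀ v, (Q v).natDegree = p)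
  (hQ : ∀ i, AnalyticAt 𝕜 (fun v => (Q v).coeff i) v₀) (hQ₀ : Q v₀ = X ^ p)
  (hAs : ∀ᶠ v in 𝓝 v₀, HasSum (fun k => a v k • M.ofPoly (X ^ k)) (A v))
include hQm hp hQ hQ₀ hAs

theorem eventually_eq_seriesDiv_mul_add_seriesMod (hz : Tendsto z (𝓝 v₀) (𝓝 0)) :
    ∀ᶠ v in 𝓝 v₀, ∀ s, HasSum (fun k => a v k * z v ^ k) s →
      s = seriesDiv (a v) (Q v) (z v) * (Q v).eval (z v) + (seriesMod (a v) (Q v)).eval (z v) := by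
  filter_upwards [hAs, eventually_isUnit_divisionOperator M hp hQ hQ₀,
    hz.eventually (eventually_isUnit_one_sub_smul M.unshift)] with v hA hU hz s hs
  exact eq_seriesDiv_mul_add_seriesMod hA (hQm v) hU hz hs

theorem analyticAt_coeff_seriesMod (hA : AnalyticAt 𝕜 A v₀) (i : ℕ) :
    AnalyticAt 𝕜 (fun v => (seriesMod (a v) (Q v)).coeff i) v₀ := by
  rcases le_or_gt p i with hi | hi
  · simpa only [coeff_seriesMod, hp, if_neg hi.not_gt] using analyticAt_const
  · refine ((M.constCoeff ∘L M.unshift ^ i).analyticAt _).comp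
      (analyticAt_inverse_divisionOperator M hp hQ hQ₀ hA) |>.congr ?_
    filter_upwards [hAs, eventually_isUnit_divisionOperator M hp hQ hQ₀] with v hA hU
    exact (coeff_seriesMod_eq hA (hQm v) hU (by rwa [hp])).symm

theorem analyticAt_seriesDiv (hA : AnalyticAt 𝕜 A v₀) (hz : AnalyticAt 𝕜 z v₀) (hz₀ : z v₀ = 0) :
    AnalyticAt 𝕜 (fun v => seriesDiv (a v) (Q v) (z v)) v₀ := by
  have hunit : ∀ᶠ v in 𝓝 v₀, IsUnit (1 - z v • M.unshift) :=
    (hz₀ ▸ hz.continuousAt.tendsto).eventually (eventually_isUnit_one_sub_smul M.unshift)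
  have hres := analyticAt_inverse_apply (analyticAt_const.sub (hz.smul analyticAt_const))
    hunit.self_of_nhds (((M.unshift ^ p).analyticAt _).comp
      (analyticAt_inverse_divisionOperator M hp hQ hQ₀ hA))
  refine ((M.constCoeff.analyticAt _).comp hres).congr ?_
  filter_upwards [hAs, eventually_isUnit_divisionOperator M hp hQ hQ₀, hunit] with v hA hU hz
  rw [seriesDiv, (hasSum_eval_divByMonic hA (hQm v) hU hz).tsum_eq, hp]
  rfl

end AnalyticFamilies

section RootMean

variable {𝕜 : Type*} [NontriviallyNormedField 𝕜]

/-- The mean of the roots of a monic polynomial of positive degree, counted with multiplicity, read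
off its second highest coefficient. -/
noncomputable def rootMean (P : 𝕜[X]) : 𝕜 := -P.nextCoeff / P.natDegree

theorem rootMean_X_sub_C_pow [CharZero 𝕜] {p : ℕ} (hp : p ≠ 0) (b : 𝕜) :
    rootMean ((X - C b) ^ p) = b := by
  rw [rootMean, (monic_X_sub_C b).nextCoeff_pow, nextCoeff_X_sub_C, natDegree_pow,
    natDegree_X_sub_C, mul_one, nsmul_eq_mul, mul_neg, neg_neg]
  exact mul_div_cancel_left₀ b (mod_cast hp)

/-- The monic polynomial `P` translated so that the mean of its roots becomes `0`. -/
noncomputable def depressed (P : 𝕜[X]) : 𝕜[X] := taylor (rootMean P) P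

theorem natDegree_depressed (P : 𝕜[X]) : (depressed P).natDegree = P.natDegree :=
  natDegree_taylor P _

theorem monic_depressed {P : 𝕜[X]} (hP : P.Monic) : (depressed P).Monic :=
  (leadingCoeff_taylor _ _).trans hP

theorem depressed_X_sub_C_pow [CharZero 𝕜] {p : ℕ} (hp : p ≠ 0) (b : 𝕜) :
    depressed ((X - C b) ^ p) = X ^ p := by
  simp [depressed, rootMean_X_sub_C_pow hp]

variable {V : Type*} [NormedAddCommGroup V] [NormedSpace 𝕜 V] {v₀ : V} {P : V → 𝕜[X]} {c : V → 𝕜}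

theorem analyticAt_rootMean {p : ℕ} (hp : ∀ v, (P v).natDegree = p)
    (hP : ∀ i, AnalyticAt 𝕜 (fun v => (P v).coeff i) v₀) :
    AnalyticAt 𝕜 (fun v => rootMean (P v)) v₀ := by
  simp only [rootMean, nextCoeff, hp]
  split_ifs
  · exact analyticAt_const.neg.div_const
  · exact (hP _).neg.div_const

theorem analyticAt_coeff_taylor {n : ℕ} (hn : ∀ v, (P v).natDegree ≤ n)
    (hP : ∀ i, AnalyticAt 𝕜 (fun v => (P v).coeff i) v₀) (hc : AnalyticAt 𝕜 c v₀) (i : ℕ) :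
    AnalyticAt 𝕜 (fun v => (taylor (c v) (P v)).coeff i) v₀ := by
  have hdeg (v : V) : (hasseDeriv i (P v)).natDegree < n + 1 :=
    Nat.lt_succ_of_le ((natDegree_hasseDeriv_le _ _).trans ((Nat.sub_le _ _).trans (hn v)))
  simp only [taylor_coeff, eval_eq_sum_range' (hdeg _), hasseDeriv_coeff]
  exact Finset.analyticAt_fun_sum _ fun j _ => (analyticAt_const.mul (hP _)).mul (hc.pow j)

theorem analyticAt_coeff_depressed {p : ℕ} (hp : ∀ v, (P v).natDegree = p)
    (hP : ∀ i, AnalyticAt 𝕜 (fun v => (P v).coeff i) v₀) (i : ℕ) :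
    AnalyticAt 𝕜 (fun v => (depressed (P v)).coeff i) v₀ :=
  analyticAt_coeff_taylor (fun v => (hp v).le) hP (analyticAt_rootMean hp hP) i

end RootMean

section WeierstrassDivision

variable {𝕜 E V : Type*} [NontriviallyNormedField 𝕜] [NormedAddCommGroup E] [NormedSpace 𝕜 E]
  [NormedAddCommGroup V] [NormedSpace 𝕜 V]

/-- The Taylor coefficients of `g (x, ·)` at the mean of the roots of `P`. -/
noncomputable def rootMeanTaylorCoeff (g : E × 𝕜 → 𝕜) (P : 𝕜[X]) (x : E) : ℕ → 𝕜 :=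
  taylorCoeff 𝕜 g (0, 1) (x, rootMean P)

/-- The quotient of `g` by the polynomial `P` in the last variable, obtained by dividing the Taylor
series of `g` at the mean of the roots of `P`. -/
noncomputable def weierstrassQuot (g : E × 𝕜 → 𝕜) (P : 𝕜[X]) (w : E × 𝕜) : 𝕜 :=
  seriesDiv (rootMeanTaylorCoeff g P w.1) (depressed P) (w.2 - rootMean P)

/-- The remainder of `g` modulo the polynomial `P` in the last variable, obtained by dividing the
Taylor series of `g` at the mean of the roots of `P`. -/
noncomputable def weierstrassRem (g : E × 𝕜 → 𝕜) (P : 𝕜[X]) (x : E) : 𝕜[X] :=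
  taylor (-rootMean P) (seriesMod (rootMeanTaylorCoeff g P x) (depressed P))

theorem degree_weierstrassRem_lt (g : E × 𝕜 → 𝕜) (P : 𝕜[X]) (x : E) :
    (weierstrassRem g P x).degree < P.natDegree := by
  rw [weierstrassRem, degree_taylor, ← natDegree_depressed P]
  exact degree_seriesMod_lt

variable [CompleteSpace 𝕜] [CharZero 𝕜]

theorem exists_shiftModel_hasSum_taylorCoeff_smul {g : E → 𝕜} {x : E} (hg : AnalyticAt 𝕜 g x)
    (e : E) : ∃ (M : ShiftModel 𝕜 (ℕ →ᵇ 𝕜)) (A : E → ℕ →ᵇ 𝕜), AnalyticAt 𝕜 A x ∧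
      ∀ᶠ y in 𝓝 x, HasSum (fun k => taylorCoeff 𝕜 g e y k • M.ofPoly (X ^ k)) (A y) := by
  obtain ⟨ρ, hρ, hgρ⟩ := exists_analyticAt_hasSum_taylorCoeff_smul (F := ℕ →ᵇ 𝕜) hg e
  obtain ⟨c, hc, hcρ⟩ := NormedField.exists_norm_lt 𝕜 hρ
  have hc0 : c ≠ 0 := norm_pos_iff.mp hc
  refine ⟨ShiftModel.boundedSeq hc0, hgρ _ fun k => ?_⟩
  exact (ShiftModel.norm_boundedSeq_ofPoly_X_pow_le hc0 k).trans (by gcongr)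

variable {g : E × 𝕜 → 𝕜} {P : V → 𝕜[X]} {p : ℕ} {x : V → E} {v₀ : V} {b : 𝕜}
  (hp : ∀ v, (P v).natDegree = p) (hp₀ : p ≠ 0)
  (hP : ∀ i, AnalyticAt 𝕜 (fun v => (P v).coeff i) v₀) (hP₀ : P v₀ = (X - C b) ^ p)
  (hx : AnalyticAt 𝕜 x v₀) (hg : AnalyticAt 𝕜 g (x v₀, b))
include hp hp₀ hP hP₀ hx hg

theorem exists_shiftModel_hasSum_rootMeanTaylorCoeff_smul :
    ∃ (M : ShiftModel 𝕜 (ℕ →ᵇ 𝕜)) (A : V → ℕ →ᵇ 𝕜), AnalyticAt 𝕜 A v₀ ∧ ∀ᶠ v in 𝓝 v₀,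
      HasSum (fun k => rootMeanTaylorCoeff g (P v) (x v) k • M.ofPoly (X ^ k)) (A v) := by
  obtain ⟨M, A, hA, hAs⟩ := exists_shiftModel_hasSum_taylorCoeff_smul hg (0, 1)
  have hc : AnalyticAt 𝕜 (fun v => (x v, rootMean (P v))) v₀ := hx.prod (analyticAt_rootMean hp hP)
  have hc₀ : (x v₀, rootMean (P v₀)) = (x v₀, b) := by rw [hP₀, rootMean_X_sub_C_pow hp₀]
  exact ⟨M, _, hA.comp_of_eq hc hc₀, (hc₀ ▸ hc.continuousAt.tendsto).eventually hAs⟩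

variable (hPm : ∀ v, (P v).Monic)
include hPm

theorem analyticAt_coeff_weierstrassRem (i : ℕ) :
    AnalyticAt 𝕜 (fun v => (weierstrassRem g (P v) (x v)).coeff i) v₀ := by
  obtain ⟨M, A, hA, hAs⟩ := exists_shiftModel_hasSum_rootMeanTaylorCoeff_smul hp hp₀ hP hP₀ hx hg
  have hdeg (v : V) : (depressed (P v)).natDegree = p := (natDegree_depressed _).trans (hp v)
  have hmod := analyticAt_coeff_seriesMod (fun v => monic_depressed (hPm v)) hdeg
    (analyticAt_coeff_depressed hp hP) (by rw [hP₀, depressed_X_sub_C_pow hp₀]) hAs hA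
  exact analyticAt_coeff_taylor
    (fun v => (natDegree_le_of_degree_le degree_seriesMod_lt.le).trans_eq (hdeg v)) hmod
    (analyticAt_rootMean hp hP).neg i

variable {y : V → 𝕜} (hy : AnalyticAt 𝕜 y v₀) (hy₀ : y v₀ = b)
include hy hy₀

theorem analyticAt_weierstrassQuot :
    AnalyticAt 𝕜 (fun v => weierstrassQuot g (P v) (x v, y v)) v₀ := by
  obtain ⟨M, A, hA, hAs⟩ := exists_shiftModel_hasSum_rootMeanTaylorCoeff_smul hp hp₀ hP hP₀ hx hg
  refine analyticAt_seriesDiv (fun v => monic_depressed (hPm v))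
    (fun v => (natDegree_depressed _).trans (hp v)) (analyticAt_coeff_depressed hp hP)
    (by rw [hP₀, depressed_X_sub_C_pow hp₀]) hAs hA (hy.sub (analyticAt_rootMean hp hP)) ?_
  rw [hP₀, rootMean_X_sub_C_pow hp₀, hy₀, sub_self]

theorem eventually_eq_weierstrassQuot_mul_add_weierstrassRem :
    ∀ᶠ v in 𝓝 v₀, g (x v, y v) =
      weierstrassQuot g (P v) (x v, y v) * (P v).eval (y v) +
        (weierstrassRem g (P v) (x v)).eval (y v) := by
  obtain ⟨M, A, -, hAs⟩ := exists_shiftModel_hasSum_rootMeanTaylorCoeff_smul hp hp₀ hP hP₀ hx hg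
  have hmean₀ : rootMean (P v₀) = b := by rw [hP₀, rootMean_X_sub_C_pow hp₀]
  have hmean := analyticAt_rootMean hp hP
  have hz : Tendsto (fun v => y v - rootMean (P v)) (𝓝 v₀) (𝓝 0) := by
    simpa only [hmean₀, hy₀, sub_self] using (hy.fun_sub hmean).continuousAt.tendsto
  have hc : Tendsto (fun v => (x v, rootMean (P v))) (𝓝 v₀) (𝓝 (x v₀, b)) := by
    simpa only [hmean₀] using (hx.prod hmean).continuousAt.tendsto
  filter_upwards [eventually_eq_seriesDiv_mul_add_seriesMod (fun v => monic_depressed (hPm v))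
      (fun v => (natDegree_depressed _).trans (hp v)) (analyticAt_coeff_depressed hp hP)
      (by rw [hP₀, depressed_X_sub_C_pow hp₀]) hAs hz,
    (hc.prodMk_nhds hz).eventually (eventually_hasSum_taylorCoeff_mul_pow hg (0, 1))] with v hdiv hs
  simpa [weierstrassQuot, weierstrassRem, depressed, taylor_eval, ← sub_eq_add_neg] using hdiv _ hs

end WeierstrassDivision

section GenericPolynomial

variable {R : Type*} [CommRing R] {p : ℕ}

/-- The generic polynomial `Xᵖ + t₁ Xᵖ⁻¹ + ⋯ + tₚ` of degree `p`; the coefficient `tⱼ₊₁` of the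
paper is `t j`. -/
noncomputable def genericPoly (t : Fin p → R) : R[X] :=
  X ^ p + ∑ j : Fin p, C (t j) * X ^ (p - (j.1 + 1))

theorem eval_genericPoly (t : Fin p → R) (z : R) :
    (genericPoly t).eval z = z ^ p + ∑ j : Fin p, t j * z ^ (p - (j.1 + 1)) := by
  simp [genericPoly, eval_finsetSum]

theorem degree_sum_C_mul_X_pow_lt (t : Fin p → R) :
    (∑ j : Fin p, C (t j) * X ^ (p - (j.1 + 1))).degree < (p : WithBot ℕ) := by
  refine (degree_sum_le _ _).trans_lt ((Finset.sup_lt_iff (WithBot.bot_lt_coe p)).mpr fun j _ => ?_)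
  exact (degree_C_mul_X_pow_le _ _).trans_lt (Nat.cast_lt.mpr (Nat.sub_lt j.pos j.1.succ_pos))

theorem monic_genericPoly (t : Fin p → R) : (genericPoly t).Monic :=
  monic_X_pow_add (degree_sum_C_mul_X_pow_lt t)

theorem natDegree_genericPoly [Nontrivial R] (t : Fin p → R) : (genericPoly t).natDegree = p := by
  rw [genericPoly, natDegree_add_eq_left_of_degree_lt, natDegree_X_pow]
  rw [degree_X_pow]
  exact degree_sum_C_mul_X_pow_lt t

theorem genericPoly_eq_X_sub_C_pow {t : Fin p → R} {b : R}
    (ht : ∀ j : Fin p, t j = (-1) ^ (j.1 + 1) * p.choose (j.1 + 1) * b ^ (j.1 + 1)) :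
    genericPoly t = (X - C b) ^ p := by
  rw [sub_eq_neg_add, add_pow, Finset.sum_range_succ', Finset.sum_range, add_comm, genericPoly]
  congr 1
  · simp
  · refine Finset.sum_congr rfl fun j _ => ?_
    rw [ht, neg_pow]
    simp only [map_mul, map_pow, map_neg, map_one, map_natCast]
    ring

theorem eval_eq_sum_fin_of_degree_lt {f : R[X]} (hf : f.degree < p) (z : R) :
    f.eval z = ∑ j : Fin p, f.coeff (p - (j.1 + 1)) * z ^ (p - (j.1 + 1)) := by
  rw [eval_eq_sum_range_of_degree_lt hf, Finset.sum_range, ← Equiv.sum_comp Fin.revPerm]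
  simp only [Fin.revPerm_apply, Fin.val_rev]

end GenericPolynomial

section GenericDivision

variable {𝕜 V : Type*} [NontriviallyNormedField 𝕜] [NormedAddCommGroup V] [NormedSpace 𝕜 V]
  {m p : ℕ}

theorem analyticAt_coeff_genericPoly {t : V → Fin p → 𝕜} {v₀ : V} (ht : AnalyticAt 𝕜 t v₀) (i : ℕ) :
    AnalyticAt 𝕜 (fun v => (genericPoly (t v)).coeff i) v₀ := by
  simp only [genericPoly, coeff_add, finsetSum_coeff, coeff_C_mul]
  exact analyticAt_const.add (Finset.analyticAt_fun_sum _ fun j _ =>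
    (analyticAt_pi_iff.mp ht j).mul analyticAt_const)

/-- The projection `(x, t) ↦ ((x₁, …, xₙ₋₁), t)`, where `n = m + 1`. -/
def dropLast {R S : Type*} (xt : (Fin (m + 1) → R) × S) : (Fin m → R) × S :=
  (xt.1 ∘ Fin.castSucc, xt.2)

theorem analyticAt_fst_last (xt : (Fin (m + 1) → 𝕜) × V) :
    AnalyticAt 𝕜 (fun xt : (Fin (m + 1) → 𝕜) × V => xt.1 (Fin.last m)) xt :=
  analyticAt_pi_iff.mp analyticAt_fst _

theorem analyticAt_fst_comp_castSucc (xt : (Fin (m + 1) → 𝕜) × V) :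
    AnalyticAt 𝕜 (fun xt : (Fin (m + 1) → 𝕜) × V => xt.1 ∘ Fin.castSucc) xt :=
  AnalyticAt.pi fun i => analyticAt_pi_iff.mp analyticAt_fst i.castSucc

theorem continuous_dropLast {R S : Type*} [TopologicalSpace R] [TopologicalSpace S] :
    Continuous (dropLast : (Fin (m + 1) → R) × S → (Fin m → R) × S) := by
  unfold dropLast
  fun_prop

/-- A function of `m + 1` variables as a function of its first `m` variables and its last one. -/
def splitLast {R S : Type*} (g : (Fin (m + 1) → R) → S) (w : (Fin m → R) × R) : S :=
  g (Fin.snoc w.1 w.2)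

theorem splitLast_castSucc_last {R S : Type*} (g : (Fin (m + 1) → R) → S) (x : Fin (m + 1) → R) :
    splitLast g (x ∘ Fin.castSucc, x (Fin.last m)) = g x :=
  congrArg g (Fin.snoc_init_self x)

theorem analyticAt_splitLast {g : (Fin (m + 1) → 𝕜) → 𝕜} {x : Fin (m + 1) → 𝕜}
    (hg : AnalyticAt 𝕜 g x) :
    AnalyticAt 𝕜 (splitLast g) (x ∘ Fin.castSucc, x (Fin.last m)) := by
  refine hg.comp_of_eq (AnalyticAt.pi (Fin.lastCases ?_ fun i => ?_)) (Fin.snoc_init_self x)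
  · simpa only [Fin.snoc_last] using analyticAt_snd
  · simpa only [Fin.snoc_castSucc] using
      analyticAt_pi_iff.mp analyticAt_fst i

/-- The quotient of `g` by the generic polynomial in the last variable. -/
noncomputable def genericQuot (g : (Fin (m + 1) → 𝕜) → 𝕜)
    (xt : (Fin (m + 1) → 𝕜) × (Fin p → 𝕜)) : 𝕜 :=
  weierstrassQuot (splitLast g) (genericPoly xt.2) (xt.1 ∘ Fin.castSucc, xt.1 (Fin.last m))

/-- The coefficients of the remainder of `g` modulo the generic polynomial in the last variable,
from the highest to the lowest. -/
noncomputable def genericRem (g : (Fin (m + 1) → 𝕜) → 𝕜) (j : Fin p)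
    (v : (Fin m → 𝕜) × (Fin p → 𝕜)) : 𝕜 :=
  (weierstrassRem (splitLast g) (genericPoly v.2) v.1).coeff (p - (j.1 + 1))

/-- At the point `xt`, the function `g` is divided by the generic polynomial in the last variable,
with quotient `q` and remainder coefficients `h`, and both are analytic there. -/
structure IsGenericDivisionAt (g : (Fin (m + 1) → 𝕜) → 𝕜)
    (q : (Fin (m + 1) → 𝕜) × (Fin p → 𝕜) → 𝕜) (h : Fin p → (Fin m → 𝕜) × (Fin p → 𝕜) → 𝕜)
    (xt : (Fin (m + 1) → 𝕜) × (Fin p → 𝕜)) : Prop where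
  analyticAt_quot : AnalyticAt 𝕜 q xt
  analyticAt_rem (j : Fin p) : AnalyticAt 𝕜 (h j) (dropLast xt)
  eq_quot_mul_add_rem : g xt.1 =
    q xt * (xt.1 (Fin.last m) ^ p + ∑ j : Fin p, xt.2 j * xt.1 (Fin.last m) ^ (p - (j.1 + 1))) +
      ∑ j : Fin p, h j (dropLast xt) * xt.1 (Fin.last m) ^ (p - (j.1 + 1))

variable [CompleteSpace 𝕜] [CharZero 𝕜] {g : (Fin (m + 1) → 𝕜) → 𝕜}
  {xt : (Fin (m + 1) → 𝕜) × (Fin p → 𝕜)} (hp : p ≠ 0) (hg : AnalyticAt 𝕜 g xt.1)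
  (hxt : genericPoly xt.2 = (X - C (xt.1 (Fin.last m))) ^ p)
include hp hg hxt

theorem analyticAt_genericRem (j : Fin p) : AnalyticAt 𝕜 (genericRem g j) (dropLast xt) :=
  analyticAt_coeff_weierstrassRem (v₀ := dropLast xt) (fun _ => natDegree_genericPoly _) hp
    (analyticAt_coeff_genericPoly analyticAt_snd) hxt
    analyticAt_fst (analyticAt_splitLast hg) (fun _ => monic_genericPoly _) _

theorem analyticAt_genericQuot : AnalyticAt 𝕜 (genericQuot g) xt :=
  analyticAt_weierstrassQuot (fun _ => natDegree_genericPoly _) hp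
    (analyticAt_coeff_genericPoly analyticAt_snd) hxt
    (analyticAt_fst_comp_castSucc xt) (analyticAt_splitLast hg)
    (fun _ => monic_genericPoly _)
    (analyticAt_fst_last xt) rfl

theorem eventually_eq_genericQuot_mul_add_genericRem :
    ∀ᶠ ys in 𝓝 xt, g ys.1 =
      genericQuot g ys * (ys.1 (Fin.last m) ^ p +
        ∑ j : Fin p, ys.2 j * ys.1 (Fin.last m) ^ (p - (j.1 + 1))) +
      ∑ j : Fin p, genericRem g j (dropLast ys) * ys.1 (Fin.last m) ^ (p - (j.1 + 1)) := by
  filter_upwards [eventually_eq_weierstrassQuot_mul_add_weierstrassRem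
    (fun _ => natDegree_genericPoly _) hp
    (analyticAt_coeff_genericPoly analyticAt_snd) hxt
    (analyticAt_fst_comp_castSucc xt) (analyticAt_splitLast hg)
    (fun _ => monic_genericPoly _)
    (analyticAt_fst_last xt) rfl] with ys h
  have hrem : (weierstrassRem (splitLast g) (genericPoly ys.2) (dropLast ys).1).degree < p := by
    simpa only [natDegree_genericPoly] using degree_weierstrassRem_lt _ (genericPoly ys.2) _
  rw [splitLast_castSucc_last, eval_genericPoly] at h
  rw [h, genericQuot]
  congr 1
  exact eval_eq_sum_fin_of_degree_lt hrem _

theorem eventually_isGenericDivisionAt :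
    ∀ᶠ ys in 𝓝 xt, IsGenericDivisionAt g (genericQuot g) (genericRem g) ys := by
  have hrem : ∀ᶠ ys in 𝓝 xt, ∀ j, AnalyticAt 𝕜 (genericRem g j) (dropLast ys) :=
    eventually_all.mpr fun j => continuous_dropLast.continuousAt.eventually
      (analyticAt_genericRem hp hg hxt j).eventually_analyticAt
  filter_upwards [(analyticAt_genericQuot hp hg hxt).eventually_analyticAt, hrem,
    eventually_eq_genericQuot_mul_add_genericRem hp hg hxt] with ys hq hh heq
  exact ⟨hq, hh, heq⟩

end GenericDivision

end AnalyticDivision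

open AnalyticDivision Filter in
open scoped Topology in
theorem generic_division_real_general {𝕜 : Type*} [NontriviallyNormedField 𝕜] [CompleteSpace 𝕜]
    [CharZero 𝕜] (m p : ℕ) (hp : 1 ≤ p)
    (Ω : Set (Fin (m + 1) → 𝕜)) (hΩ : IsOpen Ω)
    (g : (Fin (m + 1) → 𝕜) → 𝕜) (hg : AnalyticOnNhd 𝕜 g Ω) :
    ∃ W : Set ((Fin (m + 1) → 𝕜) × (Fin p → 𝕜)),
      IsOpen W ∧
      {xt : (Fin (m + 1) → 𝕜) × (Fin p → 𝕜) | xt.1 ∈ Ω ∧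
        ∀ j : Fin p, xt.2 j =
          (-1 : 𝕜) ^ (j.1 + 1) * (p.choose (j.1 + 1)) * xt.1 (Fin.last m) ^ (j.1 + 1)} ⊆ W ∧
      W ⊆ Ω ×ˢ (Set.univ : Set (Fin p → 𝕜)) ∧
      ∃ (q : ((Fin (m + 1) → 𝕜) × (Fin p → 𝕜)) → 𝕜)
        (h : Fin p → ((Fin m → 𝕜) × (Fin p → 𝕜)) → 𝕜),
        AnalyticOnNhd 𝕜 q W ∧
        (∀ j : Fin p, AnalyticOnNhd 𝕜 (h j) (dropLast '' W)) ∧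
        ∀ xt ∈ W,
          g xt.1 = q xt *
              (xt.1 (Fin.last m) ^ p +
                ∑ j : Fin p, xt.2 j * xt.1 (Fin.last m) ^ (p - (j.1 + 1))) +
            ∑ j : Fin p, h j (dropLast xt) * xt.1 (Fin.last m) ^ (p - (j.1 + 1)) := by
  let good (ys : (Fin (m + 1) → 𝕜) × (Fin p → 𝕜)) : Prop :=
    ys.1 ∈ Ω ∧ IsGenericDivisionAt g (genericQuot g) (genericRem g) ys
  have hgood {xt} (hW : ∀ᶠ ys in 𝓝 xt, good ys) : good xt := hW.self_of_nhds
  refine ⟨{xt | ∀ᶠ ys in 𝓝 xt, good ys}, isOpen_setOfPred_eventually_nhds, ?_,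
    fun xt hW => ⟨(hgood hW).1, trivial⟩, genericQuot g, genericRem g,
    fun xt hW => (hgood hW).2.analyticAt_quot, ?_,
    fun xt hW => (hgood hW).2.eq_quot_mul_add_rem⟩
  · rintro xt ⟨hx, ht⟩
    exact (continuous_fst.continuousAt.eventually (hΩ.mem_nhds hx)).and
      (eventually_isGenericDivisionAt (Nat.one_le_iff_ne_zero.mp hp) (hg _ hx)
        (genericPoly_eq_X_sub_C_pow ht))
  · rintro j _ ⟨xt, hW, rfl⟩
    exact (hgood hW).2.analyticAt_rem j

/-- real form of the generic division theorem, Theorem 4.1 of the paper.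
Let `Ω ⊆ ℝⁿ` (`n = m + 1 ≥ 1`, `p ≥ 1`) be open and `g` real-analytic on `Ω`.  Let
`Δ := {(x, t) ∈ Ω × ℝᵖ : t_j = (−1)^j C(p,j) x_n^j, j = 1, …, p}` (so `t` is the tuple of
coefficients of `(X − x_n)^p`).  Then there are an open set `W ⊆ Ω × ℝᵖ` containing `Δ`,
a real-analytic `q` on `W` and real-analytic `h₁, …, h_p` on the projection `Π(W)` of `W`
to `ℝ^{n−1} × ℝᵖ`, with `g(x) = q(x,t)·(x_n^p + ∑ t_j x_n^{p−j}) + ∑ h_j(x',t)·x_n^{p−j}`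
on `W`.  Here `t j` (for `j : Fin p`) plays the role of `t_{j+1}`. -/
theorem generic_division_real (m p : ℕ) (hp : 1 ≤ p)
    (Ω : Set (Fin (m + 1) → ℝ)) (hΩ : IsOpen Ω)
    (g : (Fin (m + 1) → ℝ) → ℝ) (hg : AnalyticOnNhd ℝ g Ω) :
    ∃ W : Set ((Fin (m + 1) → ℝ) × (Fin p → ℝ)),
      IsOpen W ∧
      {xt : (Fin (m + 1) → ℝ) × (Fin p → ℝ) | xt.1 ∈ Ω ∧
        ∀ j : Fin p, xt.2 j =
          (-1 : ℝ) ^ (j.1 + 1) * (p.choose (j.1 + 1)) * xt.1 (Fin.last m) ^ (j.1 + 1)} ⊆ W ∧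
      W ⊆ Ω ×ˢ (Set.univ : Set (Fin p → ℝ)) ∧
      ∃ (q : ((Fin (m + 1) → ℝ) × (Fin p → ℝ)) → ℝ)
        (h : Fin p → ((Fin m → ℝ) × (Fin p → ℝ)) → ℝ),
        AnalyticOnNhd ℝ q W ∧
        (∀ j : Fin p, AnalyticOnNhd ℝ (h j) (dropLastProjR m p '' W)) ∧
        ∀ xt ∈ W,
          g xt.1 = q xt *
              (xt.1 (Fin.last m) ^ p +
                ∑ j : Fin p, xt.2 j * xt.1 (Fin.last m) ^ (p - (j.1 + 1))) +
            ∑ j : Fin p, h j (dropLastProjR m p xt) * xt.1 (Fin.last m) ^ (p - (j.1 + 1)) :=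
  generic_division_real_general m p hp Ω hΩ g hg
end

section
/- Let X be a nonempty topological space and let E be a ring of continuous real-valued functions on X (a subring of C(X, ℝ)). Call a subset A ⊆ X an E-set if A is a finite union of sets of the form {x ∈ X : φ₀(x) = 0, φ₁(x) > 0, …, φ_s(x) > 0} with φ₀, φ₁, …, φ_s ∈ E. For φ ∈ E[T] and (x, t) ∈ X × ℝ let φ(x, t) ∈ ℝ denote the result of evaluating the coefficients of φ at x and then the resulting real polynomial at t. Let φ₁(T), …, φ_M(T) ∈ E[T]. Then the list φ₁, …, φ_M can be augmented to a list φ₁, …, φ_N ∈ E[T] (with M ≤ N), and X can be partitioned into finitely many E-sets X₁, …, X_k, such that for each connected component C of each X_i there are finitely many continuous real-valued functions ξ_{C,1} < ⋯ < ξ_{C,μ(C)} on C with the following two properties: (1) each function φ_n, 1 ≤ n ≤ N, has constant sign (−1, 0, or 1) on each of the graphs Γ(ξ_{C,j}) := {(x, ξ_{C,j}(x)) : x ∈ C}, 1 ≤ j ≤ μ(C), and on each of the bands (ξ_{C,j}, ξ_{C,j+1}) := {(x, t) ∈ C × ℝ : ξ_{C,j}(x) < t < ξ_{C,j+1}(x)},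 0 ≤ j ≤ μ(C), where ξ_{C,0} := −∞ and ξ_{C,μ(C)+1} := +∞ by convention; and (2) each of the graphs and bands from (1) equals {(x, t) ∈ C × ℝ : sign(φ_n(x, t)) = ε(n) for n = 1, …, N} for a suitable sign condition ε : {1, …, N} → {−1, 0, 1}. -/
variable {X : Type*} [TopologicalSpace X]

/-- A basic `E`-set: `{x ∈ X : φ₀(x) = 0, φ₁(x) > 0, …, φ_s(x) > 0}` with all `φᵢ ∈ E`. -/
def IsBasicESet (E : Subring (X → ℝ)) (A : Set X) : Prop :=
  ∃ (φ₀ : X → ℝ) (_ : φ₀ ∈ E) (s : ℕ) (φ : Fin s → X → ℝ) (_ : ∀ i, φ i ∈ E),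
    A = {x : X | φ₀ x = 0 ∧ ∀ i : Fin s, 0 < φ i x}

/-- An `E`-set: a finite union of basic `E`-sets. -/
def IsESet (E : Subring (X → ℝ)) (A : Set X) : Prop :=
  ∃ (k : ℕ) (B : Fin k → Set X), (∀ i, IsBasicESet E (B i)) ∧ A = ⋃ i, B i

/-- Evaluation of `φ ∈ E[T]` at `(x, t) ∈ X × ℝ`: evaluate the coefficients of `φ` at `x`
and the resulting real polynomial at `t`. -/
noncomputable def polyEval (E : Subring (X → ℝ)) (φ : Polynomial E) (x : X) (t : ℝ) : ℝ :=
  Polynomial.eval t (φ.map ((Pi.evalRingHom (fun _ : X => ℝ) x).comp E.subtype))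

/-- The graph `Γ(ξ_j)` of the `j`-th of the functions `ξ : Fin μ → X → ℝ` over `C`. -/
def cellGraph (C : Set X) {μ : ℕ} (ξ : Fin μ → X → ℝ) (j : Fin μ) : Set (X × ℝ) :=
  {q : X × ℝ | q.1 ∈ C ∧ q.2 = ξ j q.1}

/-- The band `(ξ_j, ξ_{j+1})` over `C`, for `j : Fin (μ+1)`, with the conventions
`ξ₀ = −∞` (no lower constraint when `j = 0`) and `ξ_{μ+1} = +∞` (no upper constraint
when `j = μ`). -/
def cellBand (C : Set X) {μ : ℕ} (ξ : Fin μ → X → ℝ) (j : Fin (μ + 1)) : Set (X × ℝ) :=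
  {q : X × ℝ | q.1 ∈ C ∧
    (∀ h : 0 < j.1, ξ ⟨j.1 - 1, by have := j.isLt; omega⟩ q.1 < q.2) ∧
    (∀ h : j.1 < μ, q.2 < ξ ⟨j.1, h⟩ q.1)}

/-!
A point of the fibre over `x` is described by its sign vector, the list of signs of the members of
the family. If the family is closed under derivatives, Thom's lemma says that the points with a
given sign vector form an interval, and that two points with different sign vectors are ordered
according to these vectors alone, whatever the base point. Hence, once the same sign vectors are
realised over all points of a set `Y ⊆ X`, following a zero of the family by its sign vector gives
a section over `Y`; such sections are disjoint, and they are continuous because sign vectors away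
from the zeros are locally constant.

To arrange this, close the family under derivatives, deletion of leading terms and pseudo-remainders
as well, and let `Y` be a set on which all leading coefficients have constant sign. By induction on
the degree, adding a polynomial `a` to the polynomials of at most its degree keeps the realised sign
vectors constant: at a zero of some `q` the sign of `a` is that of a pseudo-remainder, up to the
sign of the leading coefficient of `q`; between consecutive zeros, and near `±∞`, `a` is strictly
monotone, so its signs there follow from those at the ends.
-/

namespace CylindricalDecomposition

open Polynomial Set Filter Topology

section Thom

variable {A : Type*} [Semiring A] {S : Set A[X]} {f g : A →+* ℝ} {q : A[X]}

/-- The sign vector of the point `t` on the fibre over `f`: a ring homomorphism `f : A →+* ℝ` plays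
the role of a point of the base, whose fibre is the line on which `A[X]` is evaluated through `f`.
Restricting `signsAt f t` to a family `S` with `Set.EqOn` gives the sign condition on `S` satisfied
at `t`. -/
noncomputable def signsAt (f : A →+* ℝ) (t : ℝ) (q : A[X]) : SignType :=
  SignType.sign (q.eval₂ f t)

lemma hasDerivAt_eval₂ (f : A →+* ℝ) (q : A[X]) (t : ℝ) :
    HasDerivAt (fun x => q.eval₂ f x) ((derivative q).eval₂ f t) t := by
  simpa only [eval_map, derivative_map] using (q.map f).hasDerivAt t

lemma monotoneOn_signsAt {D : Set ℝ} (hD : D.OrdConnected)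
    (h : ∀ t ∈ D, 0 ≤ signsAt f t (derivative q)) : MonotoneOn (fun t => signsAt f t q) D := by
  refine SignType.sign.monotone.comp_monotoneOn <| monotoneOn_of_deriv_nonneg hD.convex
    (Polynomial.continuous_eval₂ q f).continuousOn
    (fun t _ => (hasDerivAt_eval₂ f q t).differentiableAt.differentiableWithinAt) fun t ht => ?_
  rw [(hasDerivAt_eval₂ f q t).deriv]
  exact sign_nonneg_iff.1 (h t (interior_subset ht))

lemma antitoneOn_signsAt {D : Set ℝ} (hD : D.OrdConnected)
    (h : ∀ t ∈ D, signsAt f t (derivative q) ≤ 0) : AntitoneOn (fun t => signsAt f t q) D := by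
  refine SignType.sign.monotone.comp_antitoneOn <| antitoneOn_of_deriv_nonpos hD.convex
    (Polynomial.continuous_eval₂ q f).continuousOn
    (fun t _ => (hasDerivAt_eval₂ f q t).differentiableAt.differentiableWithinAt) fun t ht => ?_
  rw [(hasDerivAt_eval₂ f q t).deriv]
  exact sign_nonpos_iff.1 (h t (interior_subset ht))

lemma signsAt_eq_of_natDegree_eq_zero (hq : q.natDegree = 0) (s t : ℝ) :
    signsAt f s q = signsAt f t q := by
  rw [eq_C_of_natDegree_eq_zero hq, signsAt, signsAt, eval₂_C, eval₂_C]

lemma ordConnected_setOf_eqOn_signsAt (hS : ∀ q ∈ S, derivative q ∈ S) (f : A →+* ℝ)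
    (σ : A[X] → SignType) : OrdConnected {t | EqOn (signsAt f t) σ S} := by
  suffices h : ∀ n, OrdConnected {t | ∀ q ∈ S, q.natDegree < n → signsAt f t q = σ q} by
    refine ⟨fun x hx y hy z hz q hq => ?_⟩
    exact (h (q.natDegree + 1)).out (fun p hp _ => hx hp) (fun p hp _ => hy hp) hz q hq
      (Nat.lt_succ_self _)
  intro n
  induction n with
  | zero => exact ⟨fun x _ y _ z _ q _ hq => absurd hq (Nat.not_lt_zero _)⟩
  | succ n ih =>
    refine ⟨fun x hx y hy z hz q hq hqn => ?_⟩
    have hxy : signsAt f x q = signsAt f y q := (hx q hq hqn).trans (hy q hq hqn).symm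
    by_cases hq0 : q.natDegree = 0
    · exact (signsAt_eq_of_natDegree_eq_zero hq0 z x).trans (hx q hq hqn)
    have hder : ∀ t ∈ Icc x y, signsAt f t (derivative q) = σ (derivative q) := fun t ht =>
      ih.out (fun p hp hpn => hx p hp (hpn.trans (Nat.lt_succ_self n)))
        (fun p hp hpn => hy p hp (hpn.trans (Nat.lt_succ_self n))) ht _ (hS q hq)
        ((natDegree_derivative_lt hq0).trans_le (Nat.lt_succ_iff.1 hqn))
    have hx' : x ∈ Icc x y := left_mem_Icc.2 (hz.1.trans hz.2)
    have hy' : y ∈ Icc x y := right_mem_Icc.2 (hz.1.trans hz.2)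
    rw [← hx q hq hqn]
    rcases le_total 0 (σ (derivative q)) with hσ | hσ
    · have hmono := monotoneOn_signsAt ordConnected_Icc fun t ht => hσ.trans_eq (hder t ht).symm
      exact ((hmono hz hy' hz.2).trans_eq hxy.symm).antisymm (hmono hx' hz hz.1)
    · have hanti := antitoneOn_signsAt ordConnected_Icc fun t ht => (hder t ht).trans_le hσ
      exact (hanti hx' hz hz.1).antisymm (hxy.trans_le (hanti hz hy' hz.2))

lemma signsAt_le_of_eqOn (hS : ∀ q ∈ S, derivative q ∈ S) (hq : derivative q ∈ S)
    {σ : A[X] → SignType} {s t : ℝ} (hst : s ≤ t) (hs : EqOn (signsAt f s) σ S)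
    (ht : EqOn (signsAt f t) σ S) :
    (0 ≤ σ (derivative q) → signsAt f s q ≤ signsAt f t q) ∧
      (σ (derivative q) ≤ 0 → signsAt f t q ≤ signsAt f s q) := by
  have hder : ∀ x ∈ Icc s t, signsAt f x (derivative q) = σ (derivative q) := fun x hx =>
    (ordConnected_setOf_eqOn_signsAt hS f σ).out hs ht hx hq
  refine ⟨fun hσ => ?_, fun hσ => ?_⟩
  · exact monotoneOn_signsAt ordConnected_Icc (fun x hx => hσ.trans_eq (hder x hx).symm)
      (left_mem_Icc.2 hst) (right_mem_Icc.2 hst) hst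
  · exact antitoneOn_signsAt ordConnected_Icc (fun x hx => (hder x hx).trans_le hσ)
      (left_mem_Icc.2 hst) (right_mem_Icc.2 hst) hst

lemma lt_of_eqOn_signsAt (hS : ∀ q ∈ S, derivative q ∈ S) {s t s' t' : ℝ}
    (hs : EqOn (signsAt f s) (signsAt g s') S) (ht : EqOn (signsAt f t) (signsAt g t') S)
    (hst : s < t) (hne : ¬EqOn (signsAt f s) (signsAt f t) S) : s' < t' := by
  by_contra! hts
  have hexists : ∃ q, q ∈ S ∧ signsAt f s q ≠ signsAt f t q := by
    simpa only [EqOn, not_forall, exists_prop] using hne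
  obtain ⟨q, ⟨hqS, hq⟩, hmin⟩ := exists_minimalFor_of_wellFoundedLT _ natDegree hexists
  -- All four points satisfy the same sign condition on the polynomials of smaller degree, so `q`
  -- is monotone in the same direction on `[s, t]` over `f` and on `[t', s']` over `g`.
  let S' : Set A[X] := {p ∈ S | p.natDegree < q.natDegree}
  have hq0 : q.natDegree ≠ 0 := fun h => hq (signsAt_eq_of_natDegree_eq_zero h s t)
  have hS' : ∀ p ∈ S', derivative p ∈ S' := fun p hp =>
    ⟨hS p hp.1, (natDegree_derivative_le p).trans_lt ((Nat.sub_le _ _).trans_lt hp.2)⟩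
  have hdq : derivative q ∈ S' := ⟨hS q hqS, natDegree_derivative_lt hq0⟩
  have hst' : EqOn (signsAt f t) (signsAt f s) S' := fun p hp => by
    by_contra h
    exact (hmin ⟨hp.1, fun h' => h h'.symm⟩ hp.2.le).not_gt hp.2
  have hf := signsAt_le_of_eqOn hS' hdq hst.le (fun _ _ => rfl) hst'
  have hg := signsAt_le_of_eqOn hS' hdq hts (fun p hp => (ht hp.1).symm.trans (hst' hp))
    fun p hp => (hs hp.1).symm
  rw [← hs hqS, ← ht hqS] at hg
  rcases le_total 0 (signsAt f s (derivative q)) with hσ | hσ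
  · exact hq ((hf.1 hσ).antisymm (hg.1 hσ))
  · exact hq ((hg.2 hσ).antisymm (hf.2 hσ))

end Thom

section SignEquiv

variable {A : Type*} [Semiring A] {S : Set A[X]} {f g : A →+* ℝ} {q : A[X]} {r r' s t t' : ℝ}

lemma map_eq_zero_iff_signsAt : q.map f = 0 ↔ ∀ t, signsAt f t q = 0 := by
  simp only [signsAt, sign_eq_zero_iff, ← eval_map]
  exact ⟨fun h t => by rw [h, eval_zero], fun h => Polynomial.funext fun t => by rw [h, eval_zero]⟩

/-- The points of the fibre over `f` at which some member of `S` vanishes, disregarding those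
members that vanish identically on that fibre. -/
def zeros (S : Set A[X]) (f : A →+* ℝ) : Set ℝ :=
  {t | ∃ q ∈ S, q.map f ≠ 0 ∧ signsAt f t q = 0}

lemma zeros_finite (hS : S.Finite) (f : A →+* ℝ) : (zeros S f).Finite := by
  refine (hS.biUnion fun q _ => (q.map f).roots.toFinset.finite_toSet).subset ?_
  rintro t ⟨q, hq, hq0, ht⟩
  rw [signsAt, sign_eq_zero_iff, ← eval_map] at ht
  exact mem_biUnion hq (by simpa [hq0] using ht)

lemma eq_of_mem_zeros (hS : ∀ q ∈ S, derivative q ∈ S) (hr : r ∈ zeros S f)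
    (h : EqOn (signsAt f t) (signsAt f r) S) : t = r := by
  by_contra hne
  obtain ⟨q, hq, hq0, hqr⟩ := hr
  have hroot : ∀ x ∈ uIcc t r, (q.map f).IsRoot x := fun x hx => by
    rw [IsRoot, eval_map, ← sign_eq_zero_iff, ← signsAt, ← hqr]
    exact (ordConnected_setOf_eqOn_signsAt hS f (signsAt f r)).uIcc_subset h (fun _ _ => rfl) hx hq
  exact hq0 (eq_zero_of_infinite_isRoot _ ((Icc_infinite (min_lt_max.2 hne)).mono hroot))

lemma eqOn_signsAt_of_disjoint_zeros {D : Set ℝ} (hD : D.OrdConnected)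
    (hDS : Disjoint D (zeros S f)) (hs : s ∈ D) (ht : t ∈ D) :
    EqOn (signsAt f s) (signsAt f t) S := by
  intro q hq
  by_cases hq0 : q.map f = 0
  · rw [map_eq_zero_iff_signsAt.1 hq0 s, map_eq_zero_iff_signsAt.1 hq0 t]
  have hne : ∀ x ∈ D, q.eval₂ f x ≠ 0 := fun x hx h =>
    disjoint_left.1 hDS hx ⟨q, hq, hq0, sign_eq_zero_iff.2 h⟩
  have hcont : ContinuousOn (fun x => signsAt f x q) D := fun x hx =>
    (ContinuousAt.comp (f := fun y => q.eval₂ f y) (continuousAt_sign_of_ne_zero (hne x hx))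
      (Polynomial.continuous_eval₂ q f).continuousAt).continuousWithinAt
  exact hD.isPreconnected.constant hcont hs ht

lemma lt_of_eqOn_signsAt_of_mem_zeros (hS : ∀ q ∈ S, derivative q ∈ S)
    (hr : r ∈ zeros S f) (hrr' : EqOn (signsAt f r) (signsAt g r') S)
    (htt' : EqOn (signsAt f t) (signsAt g t') S) :
    (t < r → t' < r') ∧ (r < t → r' < t') :=
  ⟨fun h => lt_of_eqOn_signsAt hS htt' hrr' h fun e => h.ne (eq_of_mem_zeros hS hr e),
    fun h => lt_of_eqOn_signsAt hS hrr' htt' h fun e => h.ne' (eq_of_mem_zeros hS hr e.symm)⟩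

/-- The same sign conditions on the family `S` are realised on the fibre over `f` and on the fibre
over `g`. -/
structure SignEquiv (S : Set A[X]) (f g : A →+* ℝ) : Prop where
  forth : ∀ s, ∃ t, EqOn (signsAt f s) (signsAt g t) S
  back : ∀ t, ∃ s, EqOn (signsAt f s) (signsAt g t) S

namespace SignEquiv

lemma symm (h : SignEquiv S f g) : SignEquiv S g f :=
  ⟨fun t => (h.back t).imp fun _ => EqOn.symm, fun s => (h.forth s).imp fun _ => EqOn.symm⟩

lemma map_eq_zero (h : SignEquiv S f g) (hq : q ∈ S) (hf : q.map f = 0) : q.map g = 0 := by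
  refine map_eq_zero_iff_signsAt.2 fun t => ?_
  obtain ⟨s, hs⟩ := h.back t
  rw [← hs hq, map_eq_zero_iff_signsAt.1 hf s]

lemma mem_zeros (h : SignEquiv S f g) (hr : EqOn (signsAt f r) (signsAt g r') S)
    (hmem : r ∈ zeros S f) : r' ∈ zeros S g := by
  obtain ⟨q, hq, hq0, hqr⟩ := hmem
  exact ⟨q, hq, fun hg => hq0 (h.symm.map_eq_zero hq hg), (hr hq).symm.trans hqr⟩

end SignEquiv

end SignEquiv

section Extension

variable {A : Type*} [Semiring A] {S : Set A[X]} {f g : A →+* ℝ} {a : A[X]} {t t' : ℝ}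

lemma eventually_atTop_sign_eval (p : ℝ[X]) :
    ∀ᶠ t in atTop, SignType.sign (p.eval t) = SignType.sign p.leadingCoeff := by
  rcases le_or_gt p.degree 0 with hp | hp
  · rw [eq_C_of_degree_le_zero hp]
    simp only [eval_C, leadingCoeff_C, eventually_const]
  rcases lt_trichotomy p.leadingCoeff 0 with h | h | h
  · filter_upwards [(p.tendsto_atBot_of_leadingCoeff_nonpos hp h.le).eventually_lt_atBot 0]
      with t ht
    rw [sign_neg ht, sign_neg h]
  · exact absurd (leadingCoeff_eq_zero.1 h) (ne_zero_of_degree_gt hp)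
  · filter_upwards [(p.tendsto_atTop_of_leadingCoeff_nonneg hp h.le).eventually_gt_atTop 0]
      with t ht
    rw [sign_pos ht, sign_pos h]

lemma eventually_atBot_sign_eval (p : ℝ[X]) :
    ∀ᶠ t in atBot,
      SignType.sign (p.eval t) = SignType.sign ((-1 : ℝ) ^ p.natDegree * p.leadingCoeff) := by
  filter_upwards [tendsto_neg_atBot_atTop.eventually
    (eventually_atTop_sign_eval (p.comp (-Polynomial.X)))] with t ht
  simpa [comp_neg_X_leadingCoeff_eq] using ht

lemma eventually_atTop_signsAt (ha : f a.leadingCoeff ≠ 0) :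
    ∀ᶠ t in atTop, signsAt f t a = SignType.sign (f a.leadingCoeff) := by
  simpa only [signsAt, eval_map, leadingCoeff_map_of_leadingCoeff_ne_zero f ha]
    using eventually_atTop_sign_eval (a.map f)

lemma eventually_atBot_signsAt (ha : f a.leadingCoeff ≠ 0) :
    ∀ᶠ t in atBot, signsAt f t a =
      SignType.sign ((-1 : ℝ) ^ a.natDegree) * SignType.sign (f a.leadingCoeff) := by
  simpa only [signsAt, eval_map, leadingCoeff_map_of_leadingCoeff_ne_zero f ha,
    natDegree_map_of_leadingCoeff_ne_zero f ha, sign_mul]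
    using eventually_atBot_sign_eval (a.map f)

lemma strictMonoOn_eval₂ {l u : ℝ} (h : ∀ t ∈ Ioo l u, signsAt f t (derivative a) = 1) :
    StrictMonoOn (fun t => a.eval₂ f t) (Icc l u) := by
  refine strictMonoOn_of_deriv_pos (convex_Icc l u) (Polynomial.continuous_eval₂ a f).continuousOn
    fun t ht => ?_
  rw [(hasDerivAt_eval₂ f a t).deriv]
  exact sign_eq_one_iff.1 (h t (interior_Icc (a := l) ▸ ht))

lemma strictAntiOn_eval₂ {l u : ℝ} (h : ∀ t ∈ Ioo l u, signsAt f t (derivative a) = -1) :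
    StrictAntiOn (fun t => a.eval₂ f t) (Icc l u) := by
  refine strictAntiOn_of_deriv_neg (convex_Icc l u) (Polynomial.continuous_eval₂ a f).continuousOn
    fun t ht => ?_
  rw [(hasDerivAt_eval₂ f a t).deriv]
  exact sign_eq_neg_one_iff.1 (h t (interior_Icc (a := l) ▸ ht))

lemma exists_mem_Ioo_sign_eq {b c d b' d' : ℝ} (hbc : b < c) (hcd : c < d) (hbd' : b' < d')
    (hb : SignType.sign b = SignType.sign b') (hd : SignType.sign d = SignType.sign d') :
    ∃ c' ∈ Ioo b' d', SignType.sign c' = SignType.sign c := by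
  rcases lt_trichotomy c 0 with hc | rfl | hc
  · rw [sign_neg (hbc.trans hc), eq_comm, sign_eq_neg_one_iff] at hb
    obtain ⟨c', hbc', hcd'⟩ := exists_between (lt_min hbd' hb)
    exact ⟨c', ⟨hbc', hcd'.trans_le (min_le_left _ _)⟩,
      by rw [sign_neg hc, sign_neg (hcd'.trans_le (min_le_right _ _))]⟩
  · rw [sign_neg hbc, eq_comm, sign_eq_neg_one_iff] at hb
    rw [sign_pos hcd, eq_comm, sign_eq_one_iff] at hd
    exact ⟨0, ⟨hb, hd⟩, rfl⟩
  · rw [sign_pos (hc.trans hcd), eq_comm, sign_eq_one_iff] at hd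
    obtain ⟨c', hbc', hcd'⟩ := exists_between (max_lt hbd' hd)
    exact ⟨c', ⟨(le_max_left _ _).trans_lt hbc', hcd'⟩,
      by rw [sign_pos hc, sign_pos ((le_max_right _ _).trans_lt hbc')]⟩

lemma exists_mem_Ioo_signsAt_eq {l u l' u' : ℝ} {ε : SignType} (hε : ε ≠ 0)
    (hf : ∀ x ∈ Ioo l u, signsAt f x (derivative a) = ε)
    (hg : ∀ x ∈ Ioo l' u', signsAt g x (derivative a) = ε) (ht : t ∈ Ioo l u) (hlu' : l' < u')
    (hl : signsAt f l a = signsAt g l' a) (hu : signsAt f u a = signsAt g u' a) :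
    ∃ x ∈ Ioo l' u', signsAt g x a = signsAt f t a := by
  have hcont := (Polynomial.continuous_eval₂ a g).continuousOn (s := Icc l' u')
  have hlI : l ∈ Icc l u := left_mem_Icc.2 (ht.1.trans ht.2).le
  have huI : u ∈ Icc l u := right_mem_Icc.2 (ht.1.trans ht.2).le
  have htI : t ∈ Icc l u := Ioo_subset_Icc_self ht
  have hlI' : l' ∈ Icc l' u' := left_mem_Icc.2 hlu'.le
  have huI' : u' ∈ Icc l' u' := right_mem_Icc.2 hlu'.le
  cases ε with
  | zero => exact absurd rfl hε
  | neg =>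
    have hmf := strictAntiOn_eval₂ hf
    obtain ⟨y, hy, hsign⟩ := exists_mem_Ioo_sign_eq (hmf htI huI ht.2) (hmf hlI htI ht.1)
      (strictAntiOn_eval₂ hg hlI' huI' hlu') hu hl
    obtain ⟨x, hx, rfl⟩ := intermediate_value_Ioo' hlu'.le hcont hy
    exact ⟨x, hx, hsign⟩
  | pos =>
    have hmf := strictMonoOn_eval₂ hf
    obtain ⟨y, hy, hsign⟩ := exists_mem_Ioo_sign_eq (hmf hlI htI ht.1) (hmf htI huI ht.2)
      (strictMonoOn_eval₂ hg hlI' huI' hlu') hl hu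
    obtain ⟨x, hx, rfl⟩ := intermediate_value_Ioo hlu'.le hcont hy
    exact ⟨x, hx, hsign⟩

lemma SignEquiv.disjoint_zeros (h : SignEquiv S f g) {D D' : Set ℝ}
    (hDD' : ∀ z' ∈ zeros S g, ∀ z, EqOn (signsAt g z') (signsAt f z) S → z' ∈ D' → z ∈ D)
    (hD : Disjoint D (zeros S f)) : Disjoint D' (zeros S g) := by
  refine disjoint_left.2 fun z' hz'D hz' => ?_
  obtain ⟨z, hz⟩ := h.back z'
  exact disjoint_left.1 hD (hDD' z' hz' z hz.symm hz'D) (h.symm.mem_zeros hz.symm hz')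

lemma disjoint_Ioo_zeros {l u : ℝ} (ht : t ∉ zeros S f) (hl : Disjoint (Ioo l t) (zeros S f))
    (hu : Disjoint (Ioo t u) (zeros S f)) : Disjoint (Ioo l u) (zeros S f) := by
  refine disjoint_left.2 fun z hz hzS => ?_
  rcases lt_trichotomy z t with h | rfl | h
  · exact disjoint_left.1 hl ⟨hz.1, h⟩ hzS
  · exact ht hzS
  · exact disjoint_left.1 hu ⟨h, hz.2⟩ hzS

/-- The polynomial `a` has the same leading sign over `f` and over `g`, and the same sign at zeros
of `S` that correspond to each other. -/
structure SignCompatible (S : Set A[X]) (f g : A →+* ℝ) (a : A[X]) : Prop where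
  leadingCoeff_ne_zero : f a.leadingCoeff ≠ 0
  sign_leadingCoeff : SignType.sign (f a.leadingCoeff) = SignType.sign (g a.leadingCoeff)
  signsAt_eq : ∀ ⦃t t'⦄, t ∈ zeros S f → EqOn (signsAt f t) (signsAt g t') S →
    signsAt f t a = signsAt g t' a

lemma SignCompatible.leadingCoeff_ne_zero' (ha : SignCompatible S f g a) :
    g a.leadingCoeff ≠ 0 := by
  rw [← sign_ne_zero, ← ha.sign_leadingCoeff, sign_ne_zero]
  exact ha.leadingCoeff_ne_zero

lemma exists_gt_signsAt_eq (hS : ∀ q ∈ S, derivative q ∈ S) (hfin : S.Finite)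
    (h : SignEquiv S f g) (ha : SignCompatible S f g a)
    (htt' : EqOn (signsAt f t) (signsAt g t') S) :
    ∃ u > t, ∃ u' > t', signsAt f u a = signsAt g u' a ∧
      Disjoint (Ioo t u) (zeros S f) ∧ Disjoint (Ioo t' u') (zeros S g) := by
  rcases (zeros S f ∩ Ioi t).eq_empty_or_nonempty with hemp | hne
  · obtain ⟨u, hu, htu⟩ := ((eventually_atTop_signsAt ha.leadingCoeff_ne_zero).and
      (eventually_gt_atTop t)).exists
    obtain ⟨u', hu', htu'⟩ := ((eventually_atTop_signsAt ha.leadingCoeff_ne_zero').and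
      (eventually_gt_atTop t')).exists
    have hdisj : Disjoint (Ioi t) (zeros S f) := (disjoint_iff_inter_eq_empty.2 hemp).symm
    have hdisj' : Disjoint (Ioi t') (zeros S g) := h.disjoint_zeros (fun z' hz' z hz =>
      (lt_of_eqOn_signsAt_of_mem_zeros hS hz' hz htt'.symm).1) hdisj
    exact ⟨u, htu, u', htu', by rw [hu, hu', ha.sign_leadingCoeff],
      hdisj.mono_left Ioo_subset_Ioi_self, hdisj'.mono_left Ioo_subset_Ioi_self⟩
  · obtain ⟨r, ⟨hr, htr⟩, hmin⟩ :=
      exists_min_image _ id ((zeros_finite hfin f).inter_of_left _) hne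
    obtain ⟨r', hrr'⟩ := h.forth r
    have hdisj : Disjoint (Ioo t r) (zeros S f) :=
      disjoint_left.2 fun z hz hzS => (hmin z ⟨hzS, hz.1⟩).not_gt hz.2
    refine ⟨r, htr, r', (lt_of_eqOn_signsAt_of_mem_zeros hS hr hrr' htt').1 htr,
      ha.signsAt_eq hr hrr', hdisj, h.disjoint_zeros (fun z' hz' z hz hz'I => ?_) hdisj⟩
    exact ⟨(lt_of_eqOn_signsAt_of_mem_zeros hS hz' hz htt'.symm).1 hz'I.1,
      (lt_of_eqOn_signsAt_of_mem_zeros hS hz' hz hrr'.symm).2 hz'I.2⟩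

lemma exists_lt_signsAt_eq (hS : ∀ q ∈ S, derivative q ∈ S) (hfin : S.Finite)
    (h : SignEquiv S f g) (ha : SignCompatible S f g a)
    (htt' : EqOn (signsAt f t) (signsAt g t') S) :
    ∃ l < t, ∃ l' < t', signsAt f l a = signsAt g l' a ∧
      Disjoint (Ioo l t) (zeros S f) ∧ Disjoint (Ioo l' t') (zeros S g) := by
  rcases (zeros S f ∩ Iio t).eq_empty_or_nonempty with hemp | hne
  · obtain ⟨l, hl, hlt⟩ := ((eventually_atBot_signsAt ha.leadingCoeff_ne_zero).and
      (eventually_lt_atBot t)).exists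
    obtain ⟨l', hl', hlt'⟩ := ((eventually_atBot_signsAt ha.leadingCoeff_ne_zero').and
      (eventually_lt_atBot t')).exists
    have hdisj : Disjoint (Iio t) (zeros S f) := (disjoint_iff_inter_eq_empty.2 hemp).symm
    have hdisj' : Disjoint (Iio t') (zeros S g) := h.disjoint_zeros (fun z' hz' z hz =>
      (lt_of_eqOn_signsAt_of_mem_zeros hS hz' hz htt'.symm).2) hdisj
    exact ⟨l, hlt, l', hlt', by rw [hl, hl', ha.sign_leadingCoeff],
      hdisj.mono_left Ioo_subset_Iio_self, hdisj'.mono_left Ioo_subset_Iio_self⟩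
  · obtain ⟨r, ⟨hr, hrt⟩, hmax⟩ :=
      exists_max_image _ id ((zeros_finite hfin f).inter_of_left _) hne
    obtain ⟨r', hrr'⟩ := h.forth r
    have hdisj : Disjoint (Ioo r t) (zeros S f) :=
      disjoint_left.2 fun z hz hzS => (hmax z ⟨hzS, hz.2⟩).not_gt hz.1
    refine ⟨r, hrt, r', (lt_of_eqOn_signsAt_of_mem_zeros hS hr hrr' htt').2 hrt,
      ha.signsAt_eq hr hrr', hdisj, h.disjoint_zeros (fun z' hz' z hz hz'I => ?_) hdisj⟩
    exact ⟨(lt_of_eqOn_signsAt_of_mem_zeros hS hz' hz hrr'.symm).1 hz'I.1,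
      (lt_of_eqOn_signsAt_of_mem_zeros hS hz' hz htt'.symm).2 hz'I.2⟩

lemma eqOn_insert_signsAt :
    EqOn (signsAt f t) (signsAt g t') (insert a S) ↔
      signsAt f t a = signsAt g t' a ∧ EqOn (signsAt f t) (signsAt g t') S := by
  simp only [EqOn, forall_mem_insert]

lemma derivative_map_ne_zero (ha : a.natDegree ≠ 0) (hlc : f a.leadingCoeff ≠ 0) :
    (derivative a).map f ≠ 0 := by
  rw [← derivative_map]
  refine mt derivative_eq_zero.1 ?_
  rwa [natDegree_map_of_leadingCoeff_ne_zero f hlc]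

lemma SignCompatible.exists_eqOn_signsAt_insert (ha : SignCompatible S f g a)
    (hS : ∀ q ∈ S, derivative q ∈ S) (hfin : S.Finite) (h : SignEquiv S f g)
    (haS : derivative a ∈ S) (ha0 : a.natDegree ≠ 0) (t : ℝ) :
    ∃ t', EqOn (signsAt f t) (signsAt g t') (insert a S) := by
  obtain ⟨t', htt'⟩ := h.forth t
  by_cases ht : t ∈ zeros S f
  · exact ⟨t', eqOn_insert_signsAt.2 ⟨ha.signsAt_eq ht htt', htt'⟩⟩
  have ht' : t' ∉ zeros S g := fun h' => ht (h.symm.mem_zeros htt'.symm h')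
  obtain ⟨u, htu, u', htu', hu, hdu, hdu'⟩ := exists_gt_signsAt_eq hS hfin h ha htt'
  obtain ⟨l, hlt, l', hlt', hl, hdl, hdl'⟩ := exists_lt_signsAt_eq hS hfin h ha htt'
  have hf : ∀ x ∈ Ioo l u, EqOn (signsAt f x) (signsAt f t) S := fun x hx =>
    eqOn_signsAt_of_disjoint_zeros ordConnected_Ioo (disjoint_Ioo_zeros ht hdl hdu) hx ⟨hlt, htu⟩
  have hg : ∀ x ∈ Ioo l' u', EqOn (signsAt f t) (signsAt g x) S := fun x hx =>
    htt'.trans (eqOn_signsAt_of_disjoint_zeros ordConnected_Ioo (disjoint_Ioo_zeros ht' hdl' hdu')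
      ⟨hlt', htu'⟩ hx)
  have hder : signsAt f t (derivative a) ≠ 0 := fun h0 =>
    ht ⟨_, haS, derivative_map_ne_zero ha0 ha.leadingCoeff_ne_zero, h0⟩
  obtain ⟨x, hx, hxa⟩ := exists_mem_Ioo_signsAt_eq hder (fun x hx => hf x hx haS)
    (fun x hx => (hg x hx haS).symm) ⟨hlt, htu⟩ (hlt'.trans htu') hl hu
  exact ⟨x, eqOn_insert_signsAt.2 ⟨hxa.symm, hg x hx⟩⟩

lemma SignCompatible.symm (ha : SignCompatible S f g a) (h : SignEquiv S f g) :
    SignCompatible S g f a where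
  leadingCoeff_ne_zero := ha.leadingCoeff_ne_zero'
  sign_leadingCoeff := ha.sign_leadingCoeff.symm
  signsAt_eq _ _ ht htt' :=
    (ha.signsAt_eq (h.symm.mem_zeros htt' ht) htt'.symm).symm

lemma SignEquiv.insert (h : SignEquiv S f g) (hS : ∀ q ∈ S, derivative q ∈ S) (hfin : S.Finite)
    (haS : derivative a ∈ S) (ha0 : a.natDegree ≠ 0) (ha : SignCompatible S f g a) :
    SignEquiv (insert a S) f g where
  forth := ha.exists_eqOn_signsAt_insert hS hfin h haS ha0
  back t := ((ha.symm h).exists_eqOn_signsAt_insert hS hfin h.symm haS ha0 t).imp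
    fun _ => EqOn.symm

lemma SignEquiv.insert_of_forall (h : SignEquiv S f g)
    (ha : ∀ t t', EqOn (signsAt f t) (signsAt g t') S → signsAt f t a = signsAt g t' a) :
    SignEquiv (Insert.insert a S) f g where
  forth t := (h.forth t).imp fun t' htt' => eqOn_insert_signsAt.2 ⟨ha t t' htt', htt'⟩
  back t' := (h.back t').imp fun t htt' => eqOn_insert_signsAt.2 ⟨ha t t' htt', htt'⟩

end Extension

section ProjectionClosed

variable {A : Type*} [CommRing A] {S : Set A[X]} {f g : A →+* ℝ} {a p q r : A[X]} {t t' : ℝ}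

lemma exists_pseudoRem (p : A[X]) (hq : q ≠ 0) :
    ∃ r : A[X], r.degree < q.degree ∧ ∃ k u, C q.leadingCoeff ^ k * p = q * u + r := by
  by_cases hq0 : q.natDegree = 0
  · refine ⟨0, bot_lt_iff_ne_bot.2 (degree_ne_bot.2 hq), 1, p, ?_⟩
    rw [pow_one, add_zero, leadingCoeff, hq0, ← eq_C_of_natDegree_eq_zero hq0]
  induction hn : p.natDegree using Nat.strong_induction_on generalizing p with
  | _ n ih =>
    rcases lt_or_ge p.natDegree q.natDegree with hpq | hqp
    · exact ⟨p, degree_lt_degree hpq, 0, 0, by ring⟩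
    have hlt := natDegree_cancelLeads_lt_of_natDegree_le_natDegree hqp
      ((Nat.pos_of_ne_zero hq0).trans_le hqp)
    obtain ⟨r, hr, k, u, hu⟩ := ih _ (hlt.trans_eq hn) (q.cancelLeads p) rfl
    refine ⟨r, hr, k + 1,
      u + C q.leadingCoeff ^ k * C p.leadingCoeff * Polynomial.X ^ (p.natDegree - q.natDegree), ?_⟩
    rw [cancelLeads, Nat.sub_eq_zero_of_le hqp] at hu
    linear_combination hu

/-- A family of polynomials closed under the operations by which cylindrical decomposition projects
polynomials to the base: derivatives, deletion of leading terms, and remainders of pseudo-division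
of a member by one of at most the same degree (only some pseudo-remainder is required to be in the
family). -/
structure IsProjectionClosed (S : Set A[X]) : Prop where
  derivative_mem : ∀ q ∈ S, derivative q ∈ S
  eraseLead_mem : ∀ q ∈ S, q.eraseLead ∈ S
  exists_pseudoRem_mem : ∀ p ∈ S, ∀ q ∈ S, q ≠ 0 → q.degree ≤ p.degree →
    ∃ r ∈ S, r.degree < q.degree ∧ ∃ k u, C q.leadingCoeff ^ k * p = q * u + r

lemma exists_finset_closed {α : Type*} (rank : α → ℕ) (F : α → α → Finset α)
    (hF : ∀ p q, ∀ r ∈ F p q, rank r < rank q) (s : Finset α) :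
    ∃ t, s ⊆ t ∧ ∀ p ∈ t, ∀ q ∈ t, rank q ≤ rank p → F p q ⊆ t := by
  classical
  suffices h : ∀ n, ∀ s : Finset α,
      (∀ p ∈ s, ∀ q ∈ s, n ≤ rank q → rank q ≤ rank p → F p q ⊆ s) →
      ∃ t, s ⊆ t ∧ ∀ p ∈ t, ∀ q ∈ t, rank q ≤ rank p → F p q ⊆ t by
    exact h (s.sup rank + 1) s fun p _ q hq hn =>
      absurd (Finset.le_sup (f := rank) hq) (Nat.not_le.2 hn)
  intro n
  induction n with
  | zero =>
    exact fun s hs => ⟨s, Finset.Subset.refl s, fun p hp q hq => hs p hp q hq (Nat.zero_le _)⟩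
  | succ n ih =>
    intro s hs
    let new := (s ×ˢ {q ∈ s | rank q = n}).biUnion fun pq => F pq.1 pq.2
    have hnew : ∀ q ∈ s ∪ new, n ≤ rank q → q ∈ s := by
      intro q hq hn
      rcases Finset.mem_union.1 hq with hq | hq
      · exact hq
      obtain ⟨⟨p, q'⟩, hpq, hr⟩ := Finset.mem_biUnion.1 hq
      have hlt := hF p q' q hr
      simp only [Finset.mem_product, Finset.mem_filter] at hpq
      exact absurd hn (Nat.not_le.2 (hlt.trans_eq hpq.2.2))
    obtain ⟨t, hst, ht⟩ := ih (s ∪ new) fun p hp q hq hn hqp => by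
      have hps := hnew p hp (hn.trans hqp)
      have hqs := hnew q hq hn
      rcases hn.eq_or_lt with rfl | hn
      · exact (Finset.subset_biUnion_of_mem (fun pq : α × α => F pq.1 pq.2) (x := (p, q))
          (by simp [hps, hqs])).trans Finset.subset_union_right
      · exact (hs p hps q hqs hn hqp).trans Finset.subset_union_left
    exact ⟨t, Finset.subset_union_left.trans hst, ht⟩

lemma exists_isProjectionClosed (s : Finset A[X]) :
    ∃ t : Finset A[X], s ⊆ t ∧ IsProjectionClosed (t : Set A[X]) := by
  classical
  choose! rem hrem using fun p q : A[X] => exists_pseudoRem (q := q) p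
  have hsucc : StrictMono (WithBot.succ : WithBot ℕ → ℕ) := WithBot.succ_strictMono
  let F : A[X] → A[X] → Finset A[X] := fun p q =>
    if q = 0 then ∅ else {derivative q, q.eraseLead, rem p q}
  have hrank : ∀ p q, ∀ r ∈ F p q, r.degree.succ < q.degree.succ := fun p q r hr => by
    refine hsucc ?_
    by_cases hq0 : q = 0
    · simp [F, hq0] at hr
    simp only [F, if_neg hq0, Finset.mem_insert, Finset.mem_singleton] at hr
    rcases hr with rfl | rfl | rfl
    exacts [degree_derivative_lt hq0, degree_eraseLead_lt hq0, (hrem p q hq0).1]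
  obtain ⟨t, hst, ht⟩ := exists_finset_closed _ F hrank s
  have hF : ∀ p ∈ t, ∀ q ∈ t, q ≠ 0 → q.degree ≤ p.degree →
      {derivative q, q.eraseLead, rem p q} ⊆ t := fun p hp q hq hq0 hqp => by
    simpa only [F, if_neg hq0] using ht p hp q hq (hsucc.monotone hqp)
  refine ⟨t, hst, fun q hq => ?_, fun q hq => ?_, fun p hp q hq hq0 hqp => ?_⟩
  · by_cases hq0 : q = 0
    · rwa [hq0, derivative_zero, ← hq0]
    · exact hF q hq q hq hq0 le_rfl (by simp)
  · by_cases hq0 : q = 0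
    · rwa [hq0, eraseLead_zero, ← hq0]
    · exact hF q hq q hq hq0 le_rfl (by simp)
  · exact ⟨rem p q, hF p hp q hq hq0 hqp (by simp), hrem p q hq0⟩

lemma IsProjectionClosed.of_insert (h : IsProjectionClosed (insert a S))
    (hmax : ∀ q ∈ S, q.degree ≤ a.degree) : IsProjectionClosed S := by
  have hmem : ∀ r ∈ insert a S, ∀ q ∈ S, r.degree < q.degree → r ∈ S := fun r hr q hq hlt =>
    mem_of_mem_insert_of_ne hr fun hra => (hmax q hq).not_gt (hra ▸ hlt)
  refine ⟨fun q hq => ?_, fun q hq => ?_, fun p hp q hq hq0 hqp => ?_⟩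
  · by_cases hq0 : q = 0
    · rwa [hq0, derivative_zero, ← hq0]
    · exact hmem _ (h.derivative_mem q (mem_insert_of_mem a hq)) q hq (degree_derivative_lt hq0)
  · by_cases hq0 : q = 0
    · rwa [hq0, eraseLead_zero, ← hq0]
    · exact hmem _ (h.eraseLead_mem q (mem_insert_of_mem a hq)) q hq (degree_eraseLead_lt hq0)
  · obtain ⟨r, hr, hrq, hk⟩ := h.exists_pseudoRem_mem p (mem_insert_of_mem a hp) q
      (mem_insert_of_mem a hq) hq0 hqp
    exact ⟨r, hmem r hr q hq hrq, hrq, hk⟩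

lemma map_eraseLead_of_leadingCoeff (h : f q.leadingCoeff = 0) : q.eraseLead.map f = q.map f := by
  rw [← self_sub_monomial_natDegree_leadingCoeff, Polynomial.map_sub, map_monomial, h,
    monomial_zero_right, sub_zero]

lemma signsAt_eraseLead (h : f q.leadingCoeff = 0) (t : ℝ) :
    signsAt f t q.eraseLead = signsAt f t q := by
  rw [signsAt, signsAt, ← eval_map, ← eval_map, map_eraseLead_of_leadingCoeff h]

lemma exists_leadingCoeff_ne_zero_of_mem_zeros (hS : ∀ q ∈ S, q.eraseLead ∈ S)
    (ht : t ∈ zeros S f) : ∃ q ∈ S, f q.leadingCoeff ≠ 0 ∧ signsAt f t q = 0 := by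
  obtain ⟨q, ⟨hq, hq0, hqt⟩, hmin⟩ := exists_minimalFor_of_wellFoundedLT _ degree ht
  refine ⟨q, hq, fun hlc => ?_, hqt⟩
  have hlt : q.eraseLead.degree < q.degree :=
    degree_eraseLead_lt fun h => hq0 (by rw [h, Polynomial.map_zero])
  exact (hmin ⟨hS q hq, by rwa [map_eraseLead_of_leadingCoeff hlc],
    by rwa [signsAt_eraseLead hlc]⟩ hlt.le).not_gt hlt

lemma signsAt_pseudoRem {k : ℕ} {u : A[X]} (h : C q.leadingCoeff ^ k * p = q * u + r)
    (hq : signsAt f t q = 0) :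
    signsAt f t r = SignType.sign (f q.leadingCoeff) ^ k * signsAt f t p := by
  have := congrArg (eval₂ f t) h
  rw [signsAt, sign_eq_zero_iff] at hq
  rw [signsAt, signsAt, ← sign_pow, ← sign_mul]
  simpa [eval₂_mul, eval₂_add, eval₂_pow, hq] using congrArg SignType.sign this.symm

lemma IsProjectionClosed.signsAt_eq_of_mem_zeros (h : IsProjectionClosed (insert a S))
    (hmax : ∀ q ∈ S, q.degree ≤ a.degree)
    (hlc : ∀ q ∈ S, SignType.sign (f q.leadingCoeff) = SignType.sign (g q.leadingCoeff))
    (ht : t ∈ zeros S f) (htt' : EqOn (signsAt f t) (signsAt g t') S) :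
    signsAt f t a = signsAt g t' a := by
  obtain ⟨q, hq, hfq, hqt⟩ :=
    exists_leadingCoeff_ne_zero_of_mem_zeros (h.of_insert hmax).eraseLead_mem ht
  have hq0 : q ≠ 0 := by
    rintro rfl
    simp at hfq
  obtain ⟨r, hr, hrq, k, u, hu⟩ := h.exists_pseudoRem_mem a (mem_insert a S) q
    (mem_insert_of_mem a hq) hq0 (hmax q hq)
  have hrS : r ∈ S := mem_of_mem_insert_of_ne hr fun hra => (hmax q hq).not_gt (hra ▸ hrq)
  have hrt := htt' hrS
  rw [signsAt_pseudoRem hu hqt, signsAt_pseudoRem hu ((htt' hq).symm.trans hqt), hlc q hq] at hrt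
  refine mul_left_cancel₀ (pow_ne_zero k ?_) hrt
  rwa [← hlc q hq, sign_ne_zero]

theorem IsProjectionClosed.signEquiv {s : Finset A[X]} (hs : IsProjectionClosed (s : Set A[X]))
    (hlc : ∀ q ∈ s, SignType.sign (f q.leadingCoeff) = SignType.sign (g q.leadingCoeff)) :
    SignEquiv (s : Set A[X]) f g := by
  classical
  revert hs hlc
  refine Finset.induction_on_max_value degree s (fun _ _ => ⟨by simp, by simp⟩)
    fun a s _ hmax ih hs hlc => ?_
  rw [Finset.coe_insert] at hs ⊢
  have hequiv : SignEquiv (s : Set A[X]) f g :=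
    ih (hs.of_insert hmax) fun q hq => hlc q (Finset.mem_insert_of_mem hq)
  have hmem : ∀ r ∈ insert a (s : Set A[X]), r.degree < a.degree → r ∈ (s : Set A[X]) :=
    fun r hr hlt => mem_of_mem_insert_of_ne hr fun hra => hlt.ne (hra ▸ rfl)
  have hlca := hlc a (Finset.mem_insert_self a s)
  by_cases ha0 : a.natDegree = 0
  · refine hequiv.insert_of_forall fun t t' _ => ?_
    rw [leadingCoeff, ha0] at hlca
    rwa [eq_C_of_natDegree_eq_zero ha0, signsAt, signsAt, eval₂_C, eval₂_C]
  have ha_ne : a ≠ 0 := ne_zero_of_natDegree_gt (Nat.pos_of_ne_zero ha0)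
  by_cases hfa : f a.leadingCoeff = 0
  · have hga : g a.leadingCoeff = 0 := by rwa [hfa, sign_zero, eq_comm, sign_eq_zero_iff] at hlca
    refine hequiv.insert_of_forall fun t t' htt' => ?_
    rw [← signsAt_eraseLead hfa, ← signsAt_eraseLead hga]
    exact htt' (hmem _ (hs.eraseLead_mem a (mem_insert a _)) (degree_eraseLead_lt ha_ne))
  · exact hequiv.insert (hs.of_insert hmax).derivative_mem s.finite_toSet
      (hmem _ (hs.derivative_mem a (mem_insert a _)) (degree_derivative_lt ha_ne)) ha0
      ⟨hfa, hlca, fun t t' => hs.signsAt_eq_of_mem_zeros hmax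
        fun q hq => hlc q (Finset.mem_insert_of_mem hq)⟩

end ProjectionClosed

section Family

variable {T A : Type*} [TopologicalSpace T] [Semiring A] {S : Set A[X]} {F : T → A →+* ℝ}
  {Y : Set T} {x : T} {l : ℝ}

lemma continuous_eval₂_family (hF : ∀ a, Continuous fun x => F x a) (p : A[X]) (t : ℝ) :
    Continuous fun x => p.eval₂ (F x) t := by
  simp only [eval₂_eq_sum_range]
  fun_prop

lemma eventually_eqOn_signsAt (hF : ∀ a, Continuous fun x => F x a) (hfin : S.Finite)
    (hY : ∀ y ∈ Y, SignEquiv S (F x) (F y)) (hl : l ∉ zeros S (F x)) :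
    ∀ᶠ y in 𝓝[Y] x, EqOn (signsAt (F x) l) (signsAt (F y) l) S := by
  refine (eventually_all_finite hfin).2 fun q hq => ?_
  by_cases hq0 : q.map (F x) = 0
  · filter_upwards [self_mem_nhdsWithin] with y hy
    rw [map_eq_zero_iff_signsAt.1 hq0, map_eq_zero_iff_signsAt.1 ((hY y hy).map_eq_zero hq hq0)]
  · have hne : q.eval₂ (F x) l ≠ 0 := fun h => hl ⟨q, hq, hq0, sign_eq_zero_iff.2 h⟩
    have hcont : ContinuousAt (fun y => signsAt (F y) l q) x :=
      ContinuousAt.comp (f := fun y => q.eval₂ (F y) l) (continuousAt_sign_of_ne_zero hne)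
        (continuous_eval₂_family hF q l).continuousAt
    exact eventually_nhdsWithin_of_eventually_nhds
      ((hcont.eventually_mem ((isOpen_discrete {signsAt (F x) l q}).mem_nhds rfl)).mono
        fun y hy => (mem_singleton_iff.1 hy).symm)

lemma exists_mem_Ioo_notMem_zeros (hfin : S.Finite) (f : A →+* ℝ) {b c : ℝ} (h : b < c) :
    ∃ l ∈ Ioo b c, l ∉ zeros S f :=
  ((Ioo_infinite h).sdiff (zeros_finite hfin f)).nonempty

lemma continuousOn_of_mem_zeros (hF : ∀ a, Continuous fun x => F x a)
    (hS : ∀ q ∈ S, derivative q ∈ S) (hfin : S.Finite)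
    (hY : ∀ x ∈ Y, ∀ y ∈ Y, SignEquiv S (F x) (F y)) {ξ : T → ℝ}
    (hzero : ∀ x ∈ Y, ξ x ∈ zeros S (F x))
    (hξ : ∀ x ∈ Y, ∀ y ∈ Y, EqOn (signsAt (F x) (ξ x)) (signsAt (F y) (ξ y)) S) :
    ContinuousOn ξ Y := by
  refine fun x hx => tendsto_order.2 ⟨fun b hb => ?_, fun b hb => ?_⟩
  · obtain ⟨l, hl, hlz⟩ := exists_mem_Ioo_notMem_zeros hfin (F x) hb
    filter_upwards [eventually_eqOn_signsAt hF hfin (hY x hx) hlz, self_mem_nhdsWithin]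
      with y hly hy
    exact hl.1.trans
      ((lt_of_eqOn_signsAt_of_mem_zeros hS (hzero x hx) (hξ x hx y hy) hly).1 hl.2)
  · obtain ⟨l, hl, hlz⟩ := exists_mem_Ioo_notMem_zeros hfin (F x) hb
    filter_upwards [eventually_eqOn_signsAt hF hfin (hY x hx) hlz, self_mem_nhdsWithin]
      with y hly hy
    exact ((lt_of_eqOn_signsAt_of_mem_zeros hS (hzero x hx) (hξ x hx y hy) hly).2 hl.1).trans hl.2

end Family

section Band

/-- The band `(a (j - 1), a j)` of the real line cut out by the points `a`, with the conventions of
`cellBand` at both ends: `cellBand` is the fibrewise `band`. -/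
def band {μ : ℕ} (a : Fin μ → ℝ) (j : Fin (μ + 1)) : Set ℝ :=
  {t | (∀ h : 0 < j.1, a ⟨j.1 - 1, by have := j.isLt; omega⟩ < t) ∧ ∀ h : j.1 < μ, t < a ⟨j.1, h⟩}

variable {μ : ℕ} {a b : Fin μ → ℝ}

lemma ordConnected_band (a : Fin μ → ℝ) (j : Fin (μ + 1)) : (band a j).OrdConnected :=
  ⟨fun _ hx _ hy _ hz => ⟨fun h => (hx.1 h).trans_le hz.1, fun h => hz.2.trans_lt (hy.2 h)⟩⟩

lemma band_nonempty (ha : StrictMono a) (j : Fin (μ + 1)) : (band a j).Nonempty := by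
  by_cases h0 : 0 < j.1 <;> by_cases hμ : j.1 < μ
  · obtain ⟨t, ht⟩ := exists_between (ha (a := ⟨j.1 - 1, by omega⟩) (b := ⟨j.1, hμ⟩)
      (Fin.mk_lt_mk.2 (by omega)))
    exact ⟨t, fun _ => ht.1, fun _ => ht.2⟩
  · obtain ⟨t, ht⟩ := exists_gt (a ⟨j.1 - 1, by have := j.isLt; omega⟩)
    exact ⟨t, fun _ => ht, fun h => absurd h hμ⟩
  · obtain ⟨t, ht⟩ := exists_lt (a ⟨j.1, hμ⟩)
    exact ⟨t, fun h => absurd h h0, fun _ => ht⟩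
  · exact ⟨0, fun h => absurd h h0, fun h => absurd h hμ⟩

lemma disjoint_band_range (ha : StrictMono a) (j : Fin (μ + 1)) :
    Disjoint (band a j) (range a) := by
  rw [disjoint_right]
  rintro _ ⟨i, rfl⟩ ⟨hl, hu⟩
  rcases lt_or_ge i.1 j.1 with hij | hji
  · exact (ha.lt_iff_lt.1 (hl (Nat.zero_lt_of_lt hij))).not_ge (Fin.mk_le_mk.2 (by omega))
  · exact (ha.lt_iff_lt.1 (hu (hji.trans_lt i.isLt))).not_ge (Fin.mk_le_mk.2 hji)

lemma mem_band_of_eqOn_signsAt {A : Type*} [Semiring A] {S : Set A[X]} {f g : A →+* ℝ} {t t' : ℝ}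
    {j : Fin (μ + 1)} (hS : ∀ q ∈ S, derivative q ∈ S) (ha : ∀ i, a i ∈ zeros S f)
    (hab : ∀ i, EqOn (signsAt f (a i)) (signsAt g (b i)) S)
    (htt' : EqOn (signsAt f t) (signsAt g t') S) (ht : t ∈ band a j) : t' ∈ band b j :=
  ⟨fun h => (lt_of_eqOn_signsAt_of_mem_zeros hS (ha _) (hab _) htt').2 (ht.1 h),
    fun h => (lt_of_eqOn_signsAt_of_mem_zeros hS (ha _) (hab _) htt').1 (ht.2 h)⟩

end Band

section Slicing

variable {T ι : Type*} {E : Subring (T → ℝ)} {Φ : ι → E[X]} {C D : Set T} {μ : ℕ}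
  {ξ : Fin μ → T → ℝ}

/-- The base point `x` as a ring homomorphism: evaluation at `x` of the functions in `E`. -/
noncomputable def fibre (E : Subring (T → ℝ)) (x : T) : E →+* ℝ :=
  (Pi.evalRingHom (fun _ => ℝ) x).comp E.subtype

lemma sign_polyEval (p : E[X]) (x : T) (t : ℝ) :
    SignType.sign (polyEval E p x t) = signsAt (fibre E x) t p := by
  rw [polyEval, eval_map, signsAt, fibre]

/-- The part of `C × ℝ` cut out by the sign condition `σ` on the polynomials `Φ`. -/
def signStratum (E : Subring (T → ℝ)) (Φ : ι → E[X]) (C : Set T) (σ : ι → SignType) :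
    Set (T × ℝ) :=
  {q | q.1 ∈ C ∧ ∀ n, SignType.sign (polyEval E (Φ n) q.1 q.2) = σ n}

/-- The functions `ξ` slice the cylinder `C × ℝ`, compatibly with the polynomials `Φ`, into graphs
and bands each of which is cut out by a sign condition on `Φ`. -/
structure IsSlicing [TopologicalSpace T] (E : Subring (T → ℝ)) (Φ : ι → E[X]) (C : Set T)
    (ξ : Fin μ → T → ℝ) : Prop where
  continuousOn : ∀ j, ContinuousOn (ξ j) C
  strictMono : ∀ x ∈ C, StrictMono fun j => ξ j x
  graph_eq : ∀ j, ∃ σ, cellGraph C ξ j = signStratum E Φ C σ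
  band_eq : ∀ j, ∃ σ, cellBand C ξ j = signStratum E Φ C σ

lemma IsSlicing.mono [TopologicalSpace T] (h : IsSlicing E Φ C ξ) (hDC : D ⊆ C) :
    IsSlicing E Φ D ξ := by
  have restrict : ∀ P Q : T × ℝ → Prop, {q : T × ℝ | q.1 ∈ C ∧ P q} = {q | q.1 ∈ C ∧ Q q} →
      {q : T × ℝ | q.1 ∈ D ∧ P q} = {q | q.1 ∈ D ∧ Q q} := fun P Q hPQ =>
    Set.ext fun q => and_congr_right fun hq => by simpa [hDC hq] using Set.ext_iff.1 hPQ q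
  exact ⟨fun j => (h.continuousOn j).mono hDC, fun x hx => h.strictMono x (hDC hx),
    fun j => (h.graph_eq j).imp fun _ => restrict _ _,
    fun j => (h.band_eq j).imp fun _ => restrict _ _⟩

lemma mem_signStratum_iff {x₀ : T} {t₀ : ℝ} {q : T × ℝ} :
    q ∈ signStratum E Φ C (fun n => signsAt (fibre E x₀) t₀ (Φ n)) ↔
      q.1 ∈ C ∧ EqOn (signsAt (fibre E x₀) t₀) (signsAt (fibre E q.1) q.2) (range Φ) := by
  simp only [signStratum, mem_ofPred_eq, sign_polyEval, EqOn, forall_mem_range, eq_comm]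

lemma cellGraph_eq_signStratum {x₀ : T} {t₀ : ℝ} {j : Fin μ}
    (hS : ∀ q ∈ range Φ, derivative q ∈ range Φ)
    (hzero : ∀ x ∈ C, ξ j x ∈ zeros (range Φ) (fibre E x))
    (hξ : ∀ x ∈ C, EqOn (signsAt (fibre E x₀) t₀) (signsAt (fibre E x) (ξ j x)) (range Φ)) :
    cellGraph C ξ j = signStratum E Φ C fun n => signsAt (fibre E x₀) t₀ (Φ n) := by
  refine Set.ext fun q => Iff.trans (and_congr_right fun hq => ?_) mem_signStratum_iff.symm
  refine ⟨fun h => h ▸ hξ q.1 hq, fun h => ?_⟩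
  exact eq_of_mem_zeros hS (hzero q.1 hq) (h.symm.trans (hξ q.1 hq))

lemma cellBand_eq_signStratum {x₀ : T} {t₀ : ℝ} {a : Fin μ → ℝ} {j : Fin (μ + 1)}
    (hS : ∀ q ∈ range Φ, derivative q ∈ range Φ)
    (hequiv : ∀ x ∈ C, SignEquiv (range Φ) (fibre E x₀) (fibre E x)) (ha : StrictMono a)
    (hrange : range a = zeros (range Φ) (fibre E x₀))
    (hξ : ∀ x ∈ C, ∀ i, EqOn (signsAt (fibre E x₀) (a i)) (signsAt (fibre E x) (ξ i x)) (range Φ))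
    (ht₀ : t₀ ∈ band a j) :
    cellBand C ξ j = signStratum E Φ C fun n => signsAt (fibre E x₀) t₀ (Φ n) := by
  have hzero : ∀ i, a i ∈ zeros (range Φ) (fibre E x₀) := fun i => hrange ▸ mem_range_self i
  refine Set.ext fun q => Iff.trans (and_congr_right fun hq => ?_) mem_signStratum_iff.symm
  change q.2 ∈ band (fun i => ξ i q.1) j ↔ _
  refine ⟨fun h => ?_, fun h => mem_band_of_eqOn_signsAt hS hzero (hξ q.1 hq) h ht₀⟩
  obtain ⟨t, ht⟩ := (hequiv q.1 hq).back q.2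
  have hta : t ∈ band a j := mem_band_of_eqOn_signsAt hS
    (fun i => (hequiv q.1 hq).mem_zeros (hξ q.1 hq i) (hzero i)) (fun i => (hξ q.1 hq i).symm)
    ht.symm h
  exact (eqOn_signsAt_of_disjoint_zeros (ordConnected_band a j)
    (hrange ▸ disjoint_band_range ha j) ht₀ hta).trans ht

theorem exists_isSlicing [TopologicalSpace T] [Finite ι] (hE : ∀ f ∈ E, Continuous f)
    (hS : ∀ q ∈ range Φ, derivative q ∈ range Φ) (hC : C.Nonempty)
    (hequiv : ∀ x ∈ C, ∀ y ∈ C, SignEquiv (range Φ) (fibre E x) (fibre E y)) :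
    ∃ (μ : ℕ) (ξ : Fin μ → T → ℝ), IsSlicing E Φ C ξ := by
  obtain ⟨x₀, hx₀⟩ := hC
  have hfin : (range Φ).Finite := finite_range Φ
  let Z := (zeros_finite hfin (fibre E x₀)).toFinset
  let a : Fin Z.card → ℝ := Z.orderEmbOfFin rfl
  have ha : StrictMono a := (Z.orderEmbOfFin rfl).strictMono
  have hrange : range a = zeros (range Φ) (fibre E x₀) := by
    simp only [a, Z, Finset.range_orderEmbOfFin, Finite.coe_toFinset]
  have hza : ∀ j, a j ∈ zeros (range Φ) (fibre E x₀) := fun j => hrange ▸ mem_range_self j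
  choose! ξ hξ using fun (j : Fin Z.card) (x : T) (hx : x ∈ C) => (hequiv x₀ hx₀ x hx).forth (a j)
  have hzero : ∀ j, ∀ x ∈ C, ξ j x ∈ zeros (range Φ) (fibre E x) := fun j x hx =>
    (hequiv x₀ hx₀ x hx).mem_zeros (hξ j x hx) (hza j)
  refine ⟨Z.card, ξ, fun j => ?_, fun x hx i j hij => ?_, fun j => ?_, fun j => ?_⟩
  · exact continuousOn_of_mem_zeros (F := fibre E) (fun c => hE c c.2) hS hfin hequiv (hzero j)
      fun x hx y hy => (hξ j x hx).symm.trans (hξ j y hy)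
  · exact (lt_of_eqOn_signsAt_of_mem_zeros hS (hza j) (hξ j x hx) (hξ i x hx)).1 (ha hij)
  · exact ⟨_, cellGraph_eq_signStratum hS (hzero j) (hξ j)⟩
  · obtain ⟨t₀, ht₀⟩ := band_nonempty ha j
    exact ⟨_, cellBand_eq_signStratum hS (hequiv x₀ hx₀) ha hrange (fun x hx i => hξ i x hx) ht₀⟩

lemma realSign_eq_coe_sign (r : ℝ) : Real.sign r = (SignType.sign r : ℝ) := by
  rcases lt_trichotomy r 0 with h | rfl | h
  · simp only [Real.sign_of_neg h, sign_neg h, SignType.coe_neg_one]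
  · simp only [Real.sign_zero, sign_zero, SignType.coe_zero]
  · simp only [Real.sign_of_pos h, sign_pos h, SignType.coe_one]

lemma realSign_eq_coe_iff {r : ℝ} {s : SignType} : Real.sign r = (s : ℝ) ↔ SignType.sign r = s := by
  rw [realSign_eq_coe_sign]
  refine ⟨fun h => ?_, fun h => by rw [h]⟩
  generalize SignType.sign r = s' at h
  cases s <;> cases s' <;> first | rfl | norm_num at h

lemma exists_realSign_eq {B : Set (T × ℝ)} (h : ∃ σ, B = signStratum E Φ C σ) (n : ι) :
    ∃ ε : ℝ, ∀ q ∈ B, Real.sign (polyEval E (Φ n) q.1 q.2) = ε := by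
  obtain ⟨σ, rfl⟩ := h
  exact ⟨σ n, fun q hq => realSign_eq_coe_iff.2 (hq.2 n)⟩

lemma exists_eq_setOf_realSign {B : Set (T × ℝ)} (h : ∃ σ, B = signStratum E Φ C σ) :
    ∃ ε : ι → ℝ, (∀ n, ε n = -1 ∨ ε n = 0 ∨ ε n = 1) ∧
      B = {q : T × ℝ | q.1 ∈ C ∧ ∀ n, Real.sign (polyEval E (Φ n) q.1 q.2) = ε n} := by
  obtain ⟨σ, rfl⟩ := h
  refine ⟨fun n => σ n, fun n => ?_, by simp only [signStratum, realSign_eq_coe_iff]⟩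
  beta_reduce
  generalize σ n = s
  cases s <;> simp

end Slicing

section Partition

lemma isESet_setOf_sign_eq {T : Type*} (E : Subring (T → ℝ)) {N : ℕ} (c : Fin N → E)
    (ε : Fin N → SignType) : IsESet E {x | ∀ n, SignType.sign (fibre E x (c n)) = ε n} := by
  refine ⟨1, fun _ => _, fun _ => ?_, (iUnion_const _).symm⟩
  refine ⟨(∑ n with ε n = 0, c n ^ 2 : E), Subtype.property _, N,
    fun n => (if ε n = 0 then 1 else if ε n = 1 then c n else -c n : E),
    fun n => Subtype.property _, ?_⟩
  ext x
  change (∀ n, _) ↔ fibre E x _ = 0 ∧ ∀ n, 0 < fibre E x _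
  have sum_sq_eq_zero : fibre E x (∑ n with ε n = 0, c n ^ 2) = 0 ↔
      ∀ n, ε n = 0 → fibre E x (c n) = 0 := by
    simp only [map_sum, map_pow, Finset.sum_eq_zero_iff_of_nonneg fun _ _ => sq_nonneg _,
      Finset.mem_filter_univ, sq_eq_zero_iff]
  rw [sum_sq_eq_zero, ← forall_and]
  refine forall_congr' fun n => ?_
  generalize ε n = s
  cases s with
  | zero => simp
  | neg => simpa using sign_eq_neg_one_iff
  | pos => simpa using sign_eq_one_iff

lemma exists_extension_range_eq {α : Type*} {M : ℕ} (φ : Fin M → α) (s : Finset α)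
    (hφ : ∀ i, φ i ∈ s) :
    ∃ (N : ℕ) (hMN : M ≤ N) (Φ : Fin N → α),
      (∀ i, Φ (Fin.castLE hMN i) = φ i) ∧ range Φ = (s : Set α) := by
  let e : Fin s.card → α := fun i => (s.equivFin.symm i).1
  refine ⟨M + s.card, Nat.le_add_right _ _, Fin.append φ e, Fin.append_left φ e, ?_⟩
  have hrange : range e = (s : Set α) :=
    (s.equivFin.symm.surjective.range_comp Subtype.val).trans Subtype.range_coe
  have happend : range (Fin.append φ e) = range φ ∪ range e := by
    rw [← Sum.elim_range, ← Fin.append_comp_sumElim]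
    exact (finSumFinEquiv.surjective.range_comp _).symm
  rw [happend, hrange]
  exact union_eq_right.2 (range_subset_iff.2 hφ)

lemma exists_isESet_partition {T : Type*} (E : Subring (T → ℝ)) {N : ℕ} (c : Fin N → E) :
    ∃ (k : ℕ) (Xs : Fin k → Set T), (∀ i, IsESet E (Xs i)) ∧ (⋃ i, Xs i) = univ ∧
      (∀ i j, i ≠ j → Disjoint (Xs i) (Xs j)) ∧ (∀ i, (Xs i).Nonempty) ∧
      ∀ i, ∀ x ∈ Xs i, ∀ y ∈ Xs i, ∀ n,
        SignType.sign (fibre E x (c n)) = SignType.sign (fibre E y (c n)) := by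
  let v : T → Fin N → SignType := fun x n => SignType.sign (fibre E x (c n))
  let e := Finite.equivFin (range v)
  refine ⟨_, fun i => v ⁻¹' {(e.symm i).1}, fun i => ?_, ?_, fun i j hij => ?_, fun i => ?_,
    fun i x hx y hy n => congrFun (hx.trans hy.symm) n⟩
  · convert isESet_setOf_sign_eq E c (e.symm i).1 using 1
    exact Set.ext fun x => funext_iff
  · exact eq_univ_of_forall fun x => mem_iUnion.2 ⟨e ⟨v x, mem_range_self x⟩, by
      rw [mem_preimage, e.symm_apply_apply, mem_singleton_iff]⟩
  · exact (disjoint_singleton.2 fun h => hij (e.symm.injective (Subtype.ext h))).preimage v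
  · exact (e.symm i).2

end Partition

end CylindricalDecomposition

open CylindricalDecomposition in
theorem cylindrical_decomposition_general (E : Subring (X → ℝ)) (hE : ∀ f ∈ E, Continuous f)
    (M : ℕ) (φ : Fin M → Polynomial E) :
    ∃ (N : ℕ) (hMN : M ≤ N) (Φ : Fin N → Polynomial E),
      (∀ i : Fin M, Φ (Fin.castLE hMN i) = φ i) ∧
      ∃ (k : ℕ) (Xs : Fin k → Set X),
        (∀ i, IsESet E (Xs i)) ∧
        (⋃ i, Xs i) = Set.univ ∧
        (∀ i j : Fin k, i ≠ j → Disjoint (Xs i) (Xs j)) ∧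
        ∀ i, ∃ (μ : ℕ) (ξ : Fin μ → X → ℝ), IsSlicing E Φ (Xs i) ξ := by
  classical
  obtain ⟨s, hφs, hs⟩ := exists_isProjectionClosed (Finset.univ.image φ)
  obtain ⟨N, hMN, Φ, hΦφ, hΦs⟩ := exists_extension_range_eq φ s fun i =>
    hφs (Finset.mem_image_of_mem φ (Finset.mem_univ i))
  obtain ⟨k, Xs, hXs, hcover, hdisj, hne, hsign⟩ :=
    exists_isESet_partition E fun n => (Φ n).leadingCoeff
  refine ⟨N, hMN, Φ, hΦφ, k, Xs, hXs, hcover, hdisj, fun i => ?_⟩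
  refine exists_isSlicing hE (hΦs ▸ hs.derivative_mem) (hne i) fun x hx y hy => ?_
  have hlc : ∀ q ∈ Set.range Φ,
      SignType.sign (fibre E x q.leadingCoeff) = SignType.sign (fibre E y q.leadingCoeff) :=
    Set.forall_mem_range.2 (hsign i x hx y hy)
  exact hΦs ▸ hs.signEquiv fun q hq => hlc q (hΦs ▸ hq)

/-- Theorem 5.2 of the paper; van den Dries, Tame Topology, Ch. 2,
Thm 2.7.  Let `X` be a nonempty topological space and `E` a ring of continuous
real-valued functions on `X`.  Any list `φ₁, …, φ_M ∈ E[T]` can be augmented to a list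
`φ₁, …, φ_N` and `X` partitioned into finitely many `E`-sets `X₁, …, X_k` so that for
each connected component `C` of each `Xᵢ` there are continuous `ξ_{C,1} < ⋯ < ξ_{C,μ(C)}`
on `C` such that (1) each `φ_n` has constant sign on each graph `Γ(ξ_{C,j})` and on each
band `(ξ_{C,j}, ξ_{C,j+1})` (with `ξ_{C,0} = −∞`, `ξ_{C,μ(C)+1} = +∞`), and (2) each such
graph and band is exactly the subset of `C × ℝ` cut out by a sign condition
`ε : {1, …, N} → {−1, 0, 1}` on `φ₁, …, φ_N`. -/
theorem cylindrical_decomposition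
    [Nonempty X] (E : Subring (X → ℝ)) (hE : ∀ f ∈ E, Continuous f)
    (M : ℕ) (φ : Fin M → Polynomial E) :
    ∃ (N : ℕ) (hMN : M ≤ N) (Φ : Fin N → Polynomial E),
      (∀ i : Fin M, Φ (Fin.castLE hMN i) = φ i) ∧
      ∃ (k : ℕ) (Xs : Fin k → Set X),
        (∀ i, IsESet E (Xs i)) ∧
        (⋃ i, Xs i) = Set.univ ∧
        (∀ i j : Fin k, i ≠ j → Disjoint (Xs i) (Xs j)) ∧
        ∀ (i : Fin k) (C : Set X), (∃ x ∈ Xs i, C = connectedComponentIn (Xs i) x) →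
          ∃ (μ : ℕ) (ξ : Fin μ → X → ℝ),
            (∀ j : Fin μ, ContinuousOn (ξ j) C) ∧
            (∀ x ∈ C, ∀ j j' : Fin μ, j < j' → ξ j x < ξ j' x) ∧
            -- (1) constant sign on graphs and bands:
            (∀ n : Fin N, ∀ j : Fin μ, ∃ ε : ℝ,
              ∀ q ∈ cellGraph C ξ j, Real.sign (polyEval E (Φ n) q.1 q.2) = ε) ∧
            (∀ n : Fin N, ∀ j : Fin (μ + 1), ∃ ε : ℝ,
              ∀ q ∈ cellBand C ξ j, Real.sign (polyEval E (Φ n) q.1 q.2) = ε) ∧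
            -- (2) graphs and bands are cut out by sign conditions:
            (∀ j : Fin μ, ∃ ε : Fin N → ℝ, (∀ n, ε n = -1 ∨ ε n = 0 ∨ ε n = 1) ∧
              cellGraph C ξ j =
                {q : X × ℝ | q.1 ∈ C ∧ ∀ n, Real.sign (polyEval E (Φ n) q.1 q.2) = ε n}) ∧
            (∀ j : Fin (μ + 1), ∃ ε : Fin N → ℝ, (∀ n, ε n = -1 ∨ ε n = 0 ∨ ε n = 1) ∧
              cellBand C ξ j =
                {q : X × ℝ | q.1 ∈ C ∧ ∀ n, Real.sign (polyEval E (Φ n) q.1 q.2) = ε n}) := by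
  obtain ⟨N, hMN, Φ, hΦφ, k, Xs, hXs, hcover, hdisj, hslice⟩ :=
    cylindrical_decomposition_general E hE M φ
  refine ⟨N, hMN, Φ, hΦφ, k, Xs, hXs, hcover, hdisj, ?_⟩
  rintro i _ ⟨x, -, rfl⟩
  obtain ⟨μ, ξ, hξ⟩ := hslice i
  have hC := hξ.mono (connectedComponentIn_subset (Xs i) x)
  exact ⟨μ, ξ, hC.continuousOn, fun y hy _ _ hj => hC.strictMono y hy hj,
    fun n j => CylindricalDecomposition.exists_realSign_eq (hC.graph_eq j) n,
    fun n j => CylindricalDecomposition.exists_realSign_eq (hC.band_eq j) n,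
    fun j => CylindricalDecomposition.exists_eq_setOf_realSign (hC.graph_eq j),
    fun j => CylindricalDecomposition.exists_eq_setOf_realSign (hC.band_eq j)⟩
end
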